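/- Let d ≥ 1 and ν > 0. Let h₀ : ℝ^d → ℝ be 2π-periodic in each coordinate with Σ_{k ∈ ℤ^d} (1+|k|^d)|ĥ₀(k)|² < ∞ (i.e. h₀ ∈ H^{d/2}(𝕋^d)). Then there exist T ∈ (0,∞] and h : [0,T) × ℝ^d → ℝ, 2π-periodic in each spatial coordinate, such that: (i) for every 0 < t < T the function h(t,·) is C^∞; (ii) h is a classical solution of ∂_t h = ∇·((|∇h|² − 1)∇h) − νΔ²h on (0,T) × ℝ^d; (iii) ‖h(t,·) − h₀‖_{H^{d/2}} → 0 as t → 0⁺; (iv) if ∫_{[−π,π]^d} h₀ dx = 0, then ∫_{[−π,π]^d} h(t,·) dx = 0 for every 0 < t < T. -/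

import Mathlib

open Real MeasureTheory Set Filter
open scoped ENNReal

noncomputable section

/-- `ℝ^d` with the Euclidean norm. -/
abbrev Ed (d : ℕ) := EuclideanSpace ℝ (Fin d)

/-- The fundamental domain `[-π,π]^d` of the torus `𝕋^d = ℝ^d/2πℤ^d`. -/
def Qd (d : ℕ) : Set (Ed d) := {x | ∀ i, |x i| ≤ Real.pi}

/-- The partial derivative `∂_{x_j} f` of `f : ℝ^d → ℝ`. -/
noncomputable def pd {d : ℕ} (f : Ed d → ℝ) (j : Fin d) (x : Ed d) : ℝ :=
  fderiv ℝ f x (EuclideanSpace.single j 1)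

/-- `|∇f|²`, the squared Euclidean norm of the spatial gradient. -/
noncomputable def gradSq {d : ℕ} (f : Ed d → ℝ) (x : Ed d) : ℝ := ∑ j, pd f j x ^ 2

/-- `|∇f|`, the Euclidean norm of the spatial gradient. -/
noncomputable def gradNorm {d : ℕ} (f : Ed d → ℝ) (x : Ed d) : ℝ := Real.sqrt (gradSq f x)

/-- The Laplacian `Δf = Σ_j ∂_{x_j}∂_{x_j} f`. -/
noncomputable def lapl {d : ℕ} (f : Ed d → ℝ) (x : Ed d) : ℝ := ∑ j, pd (pd f j) j x

/-- The slope-selection divergence term `∇·((|∇f|²−1)∇f) = Σ_j ∂_{x_j}((|∇f|²−1)∂_{x_j}f)`. -/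
noncomputable def slopeDiv {d : ℕ} (f : Ed d → ℝ) (x : Ed d) : ℝ :=
  ∑ j, pd (fun y => (gradSq f y - 1) * pd f j y) j x

/-- `f` is `2π`-periodic in each coordinate. -/
def PeriodicSpace {d : ℕ} (f : Ed d → ℝ) : Prop :=
  ∀ (j : Fin d) (x : Ed d), f (x + (2 * Real.pi) • EuclideanSpace.single j 1) = f x

/-- The Fourier coefficient `f̂(k) = ∫_{[−π,π]^d} f(x) e^{−i k·x} dx` of a
`2π`-periodic function `f : ℝ^d → ℝ`, for `k ∈ ℤ^d`. -/
noncomputable def fcoefR {d : ℕ} (f : Ed d → ℝ) (k : Fin d → ℤ) : ℂ :=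
  ∫ x in Qd d, (f x : ℂ) * Complex.exp (-(Complex.I * ∑ i, (k i : ℂ) * (x i : ℂ)))

/-- The Sobolev weight `1 + |k|^d` (with `|k|` the Euclidean norm of `k ∈ ℤ^d`). -/
noncomputable def sobWeight {d : ℕ} (k : Fin d → ℤ) : ℝ :=
  1 + Real.sqrt (∑ i, ((k i : ℝ)) ^ 2) ^ d

/-- The `H^{d/2}(𝕋^d)` norm `(Σ_k (1+|k|^d)|f̂(k)|²)^{1/2}`. -/
noncomputable def hnormR {d : ℕ} (f : Ed d → ℝ) : ℝ :=
  Real.sqrt (∑' k : Fin d → ℤ, sobWeight k * ‖fcoefR f k‖ ^ 2)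


abbrev Ix (d : ℕ) := Fin d → ℤ

lemma cs_lint {α : Type*} [MeasurableSpace α] (μ : Measure α) {f g : α → ℝ≥0∞}
    (hf : AEMeasurable f μ) (hg : AEMeasurable g μ) :
    (∫⁻ x, f x * g x ∂μ) ^ 2 ≤ (∫⁻ x, f x ^ 2 ∂μ) * ∫⁻ x, g x ^ 2 ∂μ := by
  have h := ENNReal.lintegral_mul_le_Lp_mul_Lq μ Real.HolderConjugate.two_two hf hg
  have h2 : (∫⁻ x, f x * g x ∂μ) ^ 2 ≤
      ((∫⁻ a, f a ^ (2:ℝ) ∂μ) ^ (1 / (2:ℝ)) * (∫⁻ a, g a ^ (2:ℝ) ∂μ) ^ (1 / (2:ℝ))) ^ 2 := by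
    gcongr
    exact h
  have e : ∀ x : ℝ≥0∞, (x ^ (1 / (2:ℝ))) ^ 2 = x := fun x => by
    rw [← ENNReal.rpow_natCast, ← ENNReal.rpow_mul]
    norm_num
  rw [mul_pow, e, e] at h2
  simpa using h2

lemma cs_lint_w {α : Type*} [MeasurableSpace α] (μ : Measure α) {f g : α → ℝ≥0∞}
    (hf : AEMeasurable f μ) (hg : AEMeasurable g μ) :
    (∫⁻ x, f x * g x ∂μ) ^ 2 ≤ (∫⁻ x, f x ∂μ) * ∫⁻ x, f x * g x ^ 2 ∂μ := by
  have h := cs_lint μ (f := fun x => f x ^ (1/2:ℝ)) (g := fun x => f x ^ (1/2:ℝ) * g x)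
    (hf.pow_const _) ((hf.pow_const _).mul hg)
  have e : ∀ x, f x ^ (1/2:ℝ) * f x ^ (1/2:ℝ) = f x := fun x => by
    rw [← ENNReal.rpow_add_of_nonneg] <;> norm_num
  have e2 : ∀ x, (f x ^ (1/2:ℝ)) ^ 2 = f x := fun x => by rw [sq, e]
  simpa only [← mul_assoc, e, mul_pow, e2] using h

lemma cs_tsum {ι : Type*} [Countable ι] (f g : ι → ℝ≥0∞) :
    (∑' x, f x * g x) ^ 2 ≤ (∑' x, f x ^ 2) * ∑' x, g x ^ 2 := by
  let _ : MeasurableSpace ι := ⊤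
  have := cs_lint (Measure.count : Measure ι) (f := f) (g := g)
    (Measurable.of_discrete).aemeasurable (Measurable.of_discrete).aemeasurable
  simpa only [lintegral_count] using this

lemma cs_tsum_w {ι : Type*} [Countable ι] (f g : ι → ℝ≥0∞) :
    (∑' x, f x * g x) ^ 2 ≤ (∑' x, f x) * ∑' x, f x * g x ^ 2 := by
  let _ : MeasurableSpace ι := ⊤
  have := cs_lint_w (Measure.count : Measure ι) (f := f) (g := g)
    (Measurable.of_discrete).aemeasurable (Measurable.of_discrete).aemeasurable
  simpa only [lintegral_count] using this

/-- nonnegative convolution -/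
def cE {d : ℕ} (f g : Ix d → ℝ≥0∞) (k : Ix d) : ℝ≥0∞ := ∑' p, f p * g (k - p)

lemma tsum_cE {d : ℕ} (f g : Ix d → ℝ≥0∞) : ∑' k, cE f g k = (∑' k, f k) * ∑' k, g k := by
  unfold cE
  rw [ENNReal.tsum_comm, ← ENNReal.tsum_mul_right]
  refine tsum_congr fun p => ?_
  rw [ENNReal.tsum_mul_left]
  congr 1
  exact (Equiv.subRight p).tsum_eq g

lemma cE_mono {d : ℕ} {f g f' g' : Ix d → ℝ≥0∞} (hf : ∀ k, f k ≤ f' k) (hg : ∀ k, g k ≤ g' k)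
    (k : Ix d) : cE f g k ≤ cE f' g' k := by
  unfold cE
  exact ENNReal.tsum_le_tsum fun p => mul_le_mul' (hf _) (hg _)

lemma cE_comm {d : ℕ} (f g : Ix d → ℝ≥0∞) (k : Ix d) : cE f g k = cE g f k := by
  unfold cE
  rw [← (Equiv.subLeft k).tsum_eq]
  refine tsum_congr fun p => ?_
  simp [mul_comm]

lemma young {d : ℕ} (f g : Ix d → ℝ≥0∞) :
    ∑' k, cE f g k ^ 2 ≤ (∑' k, f k) ^ 2 * ∑' k, g k ^ 2 := by
  calc ∑' k, cE f g k ^ 2 ≤ ∑' k, (∑' k, f k) * cE f (fun k => g k ^ 2) k := by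
        refine ENNReal.tsum_le_tsum fun k => ?_
        exact cs_tsum_w f (fun p => g (k - p))
    _ = _ := by rw [ENNReal.tsum_mul_left, tsum_cE, sq, mul_assoc]

lemma add_sq_leE (a b : ℝ≥0∞) : (a + b) ^ 2 ≤ 2 * (a ^ 2 + b ^ 2) := by
  have := ENNReal.rpow_add_le_mul_rpow_add_rpow a b (p := 2) (by norm_num)
  norm_num at this
  exact_mod_cast this

def JE {d : ℕ} (k : Ix d) : ℝ≥0∞ := ENNReal.ofReal (1 + ‖k‖)

lemma one_le_JE {d : ℕ} (k : Ix d) : 1 ≤ JE k := by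
  unfold JE
  rw [← ENNReal.ofReal_one]
  exact ENNReal.ofReal_le_ofReal (by linarith [norm_nonneg k])

lemma JE_ne_top {d : ℕ} (k : Ix d) : JE k ≠ ∞ := ENNReal.ofReal_ne_top

lemma JE_add {d : ℕ} (p k : Ix d) : JE k ≤ JE p + JE (k - p) := by
  unfold JE
  rw [← ENNReal.ofReal_add (by positivity) (by positivity)]
  refine ENNReal.ofReal_le_ofReal ?_
  have : ‖k‖ ≤ ‖p‖ + ‖k - p‖ := by simpa using norm_add_le p (k - p)
  linarith

def rh {d : ℕ} (k : Ix d) : ℝ≥0∞ := JE k ^ ((d:ℝ)/2)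

lemma rh_sq {d : ℕ} (k : Ix d) : rh k ^ 2 = JE k ^ d := by
  unfold rh
  rw [← ENNReal.rpow_natCast, ← ENNReal.rpow_natCast, ← ENNReal.rpow_mul]
  congr 1
  push_cast; ring

lemma rh_add {d : ℕ} (p k : Ix d) : rh k ≤ 2 ^ d * (rh p + rh (k - p)) := by
  unfold rh
  have h0 : (0:ℝ) ≤ (d:ℝ)/2 := by positivity
  have h1 : JE k ≤ 2 * max (JE p) (JE (k - p)) := by
    refine (JE_add p k).trans ?_
    rw [two_mul]
    exact add_le_add (le_max_left _ _) (le_max_right _ _)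
  calc JE k ^ ((d:ℝ)/2) ≤ (2 * max (JE p) (JE (k - p))) ^ ((d:ℝ)/2) :=
        ENNReal.rpow_le_rpow h1 h0
    _ = 2 ^ ((d:ℝ)/2) * (max (JE p) (JE (k - p))) ^ ((d:ℝ)/2) :=
        ENNReal.mul_rpow_of_nonneg _ _ h0
    _ ≤ 2 ^ d * _ := by
        gcongr
        · rw [← ENNReal.rpow_natCast]
          apply ENNReal.rpow_le_rpow_of_exponent_le (by norm_num)
          have : (0:ℝ) ≤ d := by positivity
          linarith
        · rcases le_total (JE p) (JE (k - p)) with h | h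
          · rw [max_eq_right h]; exact le_add_self
          · rw [max_eq_left h]; exact le_self_add

def S2 {d : ℕ} (f : Ix d → ℝ≥0∞) : ℝ≥0∞ := ∑' k, JE k ^ d * f k ^ 2

lemma S2_eq {d : ℕ} (f : Ix d → ℝ≥0∞) : S2 f = ∑' k, (rh k * f k) ^ 2 := by
  unfold S2
  simp only [mul_pow, rh_sq]

lemma S2_mono {d : ℕ} {f g : Ix d → ℝ≥0∞} (h : ∀ k, f k ≤ g k) : S2 f ≤ S2 g := by
  unfold S2
  refine ENNReal.tsum_le_tsum fun k => ?_
  gcongr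
  exact h k

lemma S2_add {d : ℕ} (f g : Ix d → ℝ≥0∞) : S2 (fun k => f k + g k) ≤ 2 * (S2 f + S2 g) := by
  unfold S2
  rw [← ENNReal.tsum_add, ← ENNReal.tsum_mul_left]
  refine ENNReal.tsum_le_tsum fun k => ?_
  calc _ ≤ JE k ^ d * (2 * (f k ^ 2 + g k ^ 2)) := by gcongr; exact add_sq_leE _ _
    _ = _ := by ring

lemma S2_mul {d : ℕ} (c : ℝ≥0∞) (f : Ix d → ℝ≥0∞) : S2 (fun k => c * f k) = c ^ 2 * S2 f := by
  unfold S2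
  rw [← ENNReal.tsum_mul_left]
  exact tsum_congr fun k => by ring

lemma S2_cE {d : ℕ} (f g : Ix d → ℝ≥0∞) :
    S2 (cE f g) ≤ (2 * (2 ^ d) ^ 2) * ((∑' k, g k) ^ 2 * S2 f + (∑' k, f k) ^ 2 * S2 g) := by
  have key : ∀ k, rh k * cE f g k ≤
      2 ^ d * (cE g (fun k => rh k * f k) k + cE f (fun k => rh k * g k) k) := by
    intro k
    rw [cE_comm g]
    unfold cE
    rw [← ENNReal.tsum_mul_left, ← ENNReal.tsum_add, ← ENNReal.tsum_mul_left]
    refine ENNReal.tsum_le_tsum fun p => ?_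
    calc rh k * (f p * g (k - p)) ≤ (2 ^ d * (rh p + rh (k - p))) * (f p * g (k - p)) := by
          gcongr; exact rh_add p k
      _ = _ := by ring
  rw [S2_eq]
  calc _ ≤ ∑' k, (2 ^ d) ^ 2 * (2 * (cE g (fun k => rh k * f k) k ^ 2
            + cE f (fun k => rh k * g k) k ^ 2)) := by
        refine ENNReal.tsum_le_tsum fun k => ?_
        calc _ ≤ (2 ^ d * (cE g (fun k => rh k * f k) k + cE f (fun k => rh k * g k) k)) ^ 2 := by
              exact pow_le_pow_left' (key k) 2
          _ = (2 ^ d) ^ 2 * (cE g (fun k => rh k * f k) k + cE f (fun k => rh k * g k) k) ^ 2 := by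
              rw [mul_pow]
          _ ≤ _ := by gcongr; exact add_sq_leE _ _
    _ = (2 * (2 ^ d) ^ 2) * (∑' k, cE g (fun k => rh k * f k) k ^ 2
            + ∑' k, cE f (fun k => rh k * g k) k ^ 2) := by
        rw [← ENNReal.tsum_add, ← ENNReal.tsum_mul_left]
        exact tsum_congr fun k => by ring
    _ ≤ _ := by
        rw [S2_eq f, S2_eq g]
        gcongr
        · exact young _ _
        · exact young _ _

lemma S2_cE3 {d : ℕ} (W : Ix d → ℝ≥0∞) :
    S2 (cE (cE W W) W) ≤ (2 * (2 ^ d) ^ 2 * (2 * (2 * (2 ^ d) ^ 2) + 1)) *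
      ((∑' k, W k) ^ 4 * S2 W) := by
  calc _ ≤ (2 * (2 ^ d) ^ 2) * ((∑' k, W k) ^ 2 * S2 (cE W W) + (∑' k, cE W W k) ^ 2 * S2 W) :=
        S2_cE _ _
    _ ≤ (2 * (2 ^ d) ^ 2) * ((∑' k, W k) ^ 2 * ((2 * (2 ^ d) ^ 2) *
          ((∑' k, W k) ^ 2 * S2 W + (∑' k, W k) ^ 2 * S2 W))
          + ((∑' k, W k) * (∑' k, W k)) ^ 2 * S2 W) := by
        rw [tsum_cE]
        gcongr
        exact S2_cE _ _
    _ = _ := by ring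


def Nn {d : ℕ} (k : Ix d) : ℕ := Finset.univ.sup (fun i => (k i).natAbs)

lemma norm_eq_Nn {d : ℕ} (k : Ix d) : ‖k‖ = (Nn k : ℝ) := by
  apply le_antisymm
  · rw [pi_norm_le_iff_of_nonneg (by positivity)]
    intro i
    have : (k i).natAbs ≤ Nn k := Finset.le_sup (f := fun i => (k i).natAbs) (Finset.mem_univ i)
    rw [Int.norm_eq_abs, ← Int.cast_abs, Int.abs_eq_natAbs]
    exact_mod_cast this
  · have : Nn k ≤ ⌊‖k‖⌋₊ := by
      refine Finset.sup_le fun i _ => ?_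
      apply Nat.le_floor
      have := norm_le_pi_norm k i
      rw [Int.norm_eq_abs, ← Int.cast_abs, Int.abs_eq_natAbs, Int.cast_natCast] at this
      exact this
    exact (Nat.cast_le.mpr this).trans (Nat.floor_le (norm_nonneg k))

def Bx (d n : ℕ) : Finset (Ix d) :=
  Finset.univ.biUnion fun i : Fin d =>
    Fintype.piFinset (fun j => if j = i then {(n:ℤ)} else Finset.Icc (-(n:ℤ)) n) ∪
    Fintype.piFinset (fun j => if j = i then {-(n:ℤ)} else Finset.Icc (-(n:ℤ)) n)

lemma card_Bx_aux (d n : ℕ) (i : Fin d) (e : ℤ) :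
    (Fintype.piFinset (fun j => if j = i then {e} else Finset.Icc (-(n:ℤ)) n)).card
      = (2 * n + 1) ^ (d - 1) := by
  rw [Fintype.card_piFinset]
  rw [← Finset.mul_prod_erase Finset.univ _ (Finset.mem_univ i)]
  simp only [if_true, Finset.card_singleton, one_mul]
  rw [Finset.prod_congr rfl (g := fun _ => 2 * n + 1)]
  · simp
  · intro j hj
    rw [if_neg (Finset.ne_of_mem_erase hj)]
    simp
    omega

lemma card_Bx (d n : ℕ) : (Bx d n).card ≤ d * 2 ^ d * (n + 1) ^ (d - 1) := by
  rcases Nat.eq_zero_or_pos d with rfl | hd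
  · simp [Bx]
  have : (Bx d n).card ≤ ∑ i : Fin d, 2 * (2 * n + 1) ^ (d - 1) := by
    refine Finset.card_biUnion_le.trans (Finset.sum_le_sum fun i _ => ?_)
    refine (Finset.card_union_le _ _).trans ?_
    rw [card_Bx_aux, card_Bx_aux]
    omega
  refine this.trans ?_
  rw [Finset.sum_const, Finset.card_univ, Fintype.card_fin, smul_eq_mul, mul_assoc]
  refine Nat.mul_le_mul_left _ ?_
  calc 2 * (2 * n + 1) ^ (d - 1) ≤ 2 * (2 * (n + 1)) ^ (d - 1) := by gcongr; omega
    _ = 2 ^ (d - 1 + 1) * (n + 1) ^ (d - 1) := by rw [mul_pow, pow_succ]; ring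
    _ = _ := by rw [Nat.sub_add_cancel hd]

lemma mem_Bx {d : ℕ} (hd : 1 ≤ d) (k : Ix d) : k ∈ Bx d (Nn k) := by
  have : (Finset.univ : Finset (Fin d)).Nonempty := ⟨⟨0, hd⟩, Finset.mem_univ _⟩
  obtain ⟨i, _, hi⟩ := Finset.exists_mem_eq_sup _ this (fun i => (k i).natAbs)
  have hle : ∀ j, (k j).natAbs ≤ Nn k := fun j =>
    Finset.le_sup (f := fun i => (k i).natAbs) (Finset.mem_univ j)
  have hi' : Nn k = (k i).natAbs := hi
  unfold Bx
  rw [Finset.mem_biUnion]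
  refine ⟨i, Finset.mem_univ _, ?_⟩
  rw [Finset.mem_union, Fintype.mem_piFinset, Fintype.mem_piFinset]
  rcases Int.natAbs_eq (k i) with h | h
  · left
    intro j
    have := hle j
    split_ifs with hj
    · subst hj; rw [Finset.mem_singleton, hi']; exact h
    · rw [Finset.mem_Icc]; omega
  · right
    intro j
    have := hle j
    split_ifs with hj
    · subst hj; rw [Finset.mem_singleton, hi']; exact h
    · rw [Finset.mem_Icc]; omega

lemma shell {d : ℕ} (hd : 1 ≤ d) (g : ℕ → ℝ≥0∞) :
    ∑' k : Ix d, g (Nn k) ≤ ((d * 2 ^ d : ℕ) : ℝ≥0∞) * ∑' n : ℕ, ((n:ℝ≥0∞) + 1) ^ (d - 1) * g n := by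
  classical
  calc ∑' k : Ix d, g (Nn k) = ∑' k : Ix d, ∑' n, if n = Nn k then g n else 0 := by
        refine tsum_congr fun k => ?_
        rw [tsum_ite_eq]
    _ = ∑' n, ∑' k : Ix d, if n = Nn k then g n else 0 := ENNReal.tsum_comm
    _ ≤ ∑' n, ((Bx d n).card : ℝ≥0∞) * g n := by
        refine ENNReal.tsum_le_tsum fun n => ?_
        rw [tsum_eq_sum (s := Bx d n)]
        · rw [← nsmul_eq_mul, ← Finset.sum_const]
          refine Finset.sum_le_sum fun k _ => ?_
          split_ifs <;> simp
        · intro k hk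
          rw [if_neg]
          rintro rfl
          exact hk (mem_Bx hd k)
    _ ≤ _ := by
        rw [← ENNReal.tsum_mul_left]
        refine ENNReal.tsum_le_tsum fun n => ?_
        rw [← mul_assoc]
        gcongr
        exact_mod_cast card_Bx d n

lemma lat1 {d : ℕ} (hd : 1 ≤ d) :
    ∑' k : Ix d, ENNReal.ofReal (((1 + ‖k‖) ^ (d + 1))⁻¹) < ∞ := by
  have h := shell hd (fun n => ENNReal.ofReal (((1 + (n:ℝ)) ^ (d + 1))⁻¹))
  simp only [← norm_eq_Nn] at h
  refine h.trans_lt (ENNReal.mul_lt_top (ENNReal.natCast_lt_top _) ?_)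
  have e : ∀ n : ℕ, ((n:ℝ≥0∞) + 1) ^ (d - 1) * ENNReal.ofReal (((1 + (n:ℝ)) ^ (d + 1))⁻¹)
      = ENNReal.ofReal (1 / ((n:ℝ) + 1) ^ 2) := by
    intro n
    have : ((n:ℝ≥0∞) + 1) = ENNReal.ofReal ((n:ℝ) + 1) := by
      rw [ENNReal.ofReal_add (by positivity) (by positivity)]; simp
    rw [this, ← ENNReal.ofReal_pow (by positivity), ← ENNReal.ofReal_mul (by positivity)]
    congr 1
    obtain ⟨m, rfl⟩ : ∃ m, d = m + 1 := ⟨d - 1, by omega⟩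
    simp only [Nat.add_sub_cancel]
    field_simp
    ring
  simp only [e]
  have hs : Summable fun n : ℕ => 1 / ((n:ℝ) + 1) ^ 2 := by
    have := (summable_nat_add_iff 1).mpr (Real.summable_one_div_nat_pow (p := 2).mpr (by norm_num))
    simpa using this
  exact hs.tsum_ofReal_lt_top

lemma exp_le_inv (x : ℝ) (hx : 0 ≤ x) : Real.exp (-x ^ 2) ≤ 2 / (1 + x) ^ 2 := by
  rw [Real.exp_neg, le_div_iff₀ (by positivity), inv_mul_le_iff₀ (Real.exp_pos _)]
  have := Real.add_one_le_exp (x ^ 2)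
  nlinarith [sq_nonneg (x - 1)]

lemma tele (e : ℝ) (he : 0 < e) (N : ℕ) :
    ∑ n ∈ Finset.range N, ((n:ℝ) + 1) / (1 + e * ((n:ℝ) + 1) ^ 2) ^ 2 ≤
      (1 - 1 / (1 + e * (N:ℝ) ^ 2)) / e := by
  induction N with
  | zero => simp
  | succ n ih =>
    rw [Finset.sum_range_succ]
    have hn : (0:ℝ) ≤ n := by positivity
    have key : ((n:ℝ) + 1) / (1 + e * ((n:ℝ) + 1) ^ 2) ^ 2 ≤
        (1 / (1 + e * (n:ℝ) ^ 2) - 1 / (1 + e * ((n:ℝ) + 1) ^ 2)) / e := by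
      have h1 : (1 / (1 + e * (n:ℝ) ^ 2) - 1 / (1 + e * ((n:ℝ) + 1) ^ 2)) / e =
        (2 * n + 1) / ((1 + e * (n:ℝ) ^ 2) * (1 + e * ((n:ℝ) + 1) ^ 2)) := by
        field_simp
        ring
      rw [h1, div_le_div_iff₀ (by positivity) (by positivity)]
      have h2 : (1 + e * (n:ℝ) ^ 2) ≤ (1 + e * ((n:ℝ) + 1) ^ 2) := by gcongr; linarith
      have h3 : 0 < (1 + e * ((n:ℝ) + 1) ^ 2) := by positivity
      have h4 : 0 < (1 + e * ((n:ℝ)) ^ 2) := by positivity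
      calc ((n:ℝ) + 1) * ((1 + e * (n:ℝ) ^ 2) * (1 + e * ((n:ℝ) + 1) ^ 2))
          ≤ (2 * n + 1) * ((1 + e * ((n:ℝ) + 1) ^ 2) * (1 + e * ((n:ℝ) + 1) ^ 2)) := by
            gcongr
            linarith
        _ = _ := by ring
    push_cast
    calc _ ≤ (1 - 1 / (1 + e * (n:ℝ) ^ 2)) / e +
        (1 / (1 + e * (n:ℝ) ^ 2) - 1 / (1 + e * ((n:ℝ) + 1) ^ 2)) / e := add_le_add ih key
      _ = _ := by ring

lemma tele_tsum (e : ℝ) (he : 0 < e) :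
    ∑' n : ℕ, ENNReal.ofReal (((n:ℝ) + 1) / (1 + e * ((n:ℝ) + 1) ^ 2) ^ 2) ≤
      ENNReal.ofReal (1 / e) := by
  rw [ENNReal.tsum_eq_iSup_nat]
  refine iSup_le fun N => ?_
  rw [← ENNReal.ofReal_sum_of_nonneg (fun n _ => by positivity)]
  refine ENNReal.ofReal_le_ofReal ((tele e he N).trans ?_)
  gcongr
  have : 0 ≤ 1 / (1 + e * (N:ℝ) ^ 2) := by positivity
  linarith

/-- exponential with `‖k‖` dominated by exponential with `1+‖k‖`. -/
lemma exp_J (b x : ℝ) (hb : 0 ≤ b) (hx : x = 0 ∨ 1 ≤ x) (s : ℝ) (hs : 0 ≤ s) (hs1 : s ≤ 1) :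
    Real.exp (-(b * x ^ 4 * s)) ≤ Real.exp b * Real.exp (-(b / 16 * (1 + x) ^ 4 * s)) := by
  rw [← Real.exp_add]
  apply Real.exp_le_exp.mpr
  rcases hx with rfl | hx
  · have : b * s ≤ b * 1 := by gcongr
    have : 0 ≤ b * s := by positivity
    nlinarith
  · have h : (1 + x) ^ 4 ≤ (2 * x) ^ 4 := by gcongr; linarith
    have : b * s * (1 + x) ^ 4 ≤ b * s * (2 * x) ^ 4 := by gcongr
    nlinarith

lemma norm_int {d : ℕ} (k : Ix d) : ‖k‖ = 0 ∨ 1 ≤ ‖k‖ := by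
  rw [norm_eq_Nn]
  rcases Nat.eq_zero_or_pos (Nn k) with h | h
  · left; simp [h]
  · right; exact_mod_cast h

lemma lat2 {d : ℕ} (hd : 1 ≤ d) (b : ℝ) (hb : 0 < b) :
    ∃ C : ℝ, 0 < C ∧ ∀ s : ℝ, 0 < s → s ≤ 1 →
    ∑' k : Ix d, ENNReal.ofReal ((1 + ‖k‖) ^ 2 / (1 + ‖k‖) ^ d * Real.exp (-(b * ‖k‖ ^ 4 * s)))
      ≤ ENNReal.ofReal (C * s ^ (-(1/2) : ℝ)) := by
  refine ⟨(d * 2 ^ d : ℕ) * (2 * Real.exp b * (b/16) ^ (-(1/2) : ℝ)), ?_, fun s hs hs1 => ?_⟩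
  · have : 0 < d * 2 ^ d := by positivity
    positivity
  set e : ℝ := Real.sqrt (b / 16 * s) with he
  have he0 : 0 < e := Real.sqrt_pos.mpr (by positivity)
  have he2 : e ^ 2 = b / 16 * s := Real.sq_sqrt (by positivity)
  have h1 : ∀ k : Ix d, ENNReal.ofReal ((1 + ‖k‖) ^ 2 / (1 + ‖k‖) ^ d *
      Real.exp (-(b * ‖k‖ ^ 4 * s))) ≤ (fun n : ℕ => ENNReal.ofReal ((1 + (n:ℝ)) ^ 2 / (1 + (n:ℝ)) ^ d *
      (2 * Real.exp b / (1 + e * (1 + (n:ℝ)) ^ 2) ^ 2))) (Nn k) := by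
    intro k
    simp only [← norm_eq_Nn]
    apply ENNReal.ofReal_le_ofReal
    gcongr
    refine (exp_J b ‖k‖ hb.le (norm_int k) s hs.le hs1).trans ?_
    have h2 := exp_le_inv (e * (1 + ‖k‖) ^ 2) (by positivity)
    have h3 : b / 16 * (1 + ‖k‖) ^ 4 * s = (e * (1 + ‖k‖) ^ 2) ^ 2 := by
      rw [mul_pow, he2]; ring
    rw [h3]
    calc _ ≤ Real.exp b * (2 / (1 + e * (1 + ‖k‖) ^ 2) ^ 2) := by gcongr
      _ = _ := by ring
  refine (ENNReal.tsum_le_tsum h1).trans ((shell hd (fun n : ℕ => ENNReal.ofReal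
      ((1 + (n:ℝ)) ^ 2 / (1 + (n:ℝ)) ^ d *
      (2 * Real.exp b / (1 + e * (1 + (n:ℝ)) ^ 2) ^ 2)))).trans ?_)
  have e1 : ∀ n : ℕ, ((n:ℝ≥0∞) + 1) ^ (d - 1) * ENNReal.ofReal ((1 + (n:ℝ)) ^ 2 / (1 + (n:ℝ)) ^ d *
      (2 * Real.exp b / (1 + e * (1 + (n:ℝ)) ^ 2) ^ 2))
      = ENNReal.ofReal (2 * Real.exp b) *
        ENNReal.ofReal (((n:ℝ) + 1) / (1 + e * ((n:ℝ) + 1) ^ 2) ^ 2) := by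
    intro n
    have : ((n:ℝ≥0∞) + 1) = ENNReal.ofReal ((n:ℝ) + 1) := by
      rw [ENNReal.ofReal_add (by positivity) (by positivity)]; simp
    rw [this, ← ENNReal.ofReal_pow (by positivity), ← ENNReal.ofReal_mul (by positivity),
      ← ENNReal.ofReal_mul (by positivity)]
    congr 1
    obtain ⟨m, rfl⟩ : ∃ m, d = m + 1 := ⟨d - 1, by omega⟩
    simp only [Nat.add_sub_cancel]
    have : (1 + (n:ℝ)) = (n:ℝ) + 1 := by ring
    rw [this]
    field_simp
    ring
  simp only [e1]
  rw [ENNReal.tsum_mul_left]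
  calc _ ≤ ((d * 2 ^ d : ℕ) : ℝ≥0∞) * (ENNReal.ofReal (2 * Real.exp b) * ENNReal.ofReal (1 / e)) := by
        gcongr
        exact tele_tsum e he0
    _ = _ := by
        rw [← ENNReal.ofReal_mul (by positivity), ← ENNReal.ofReal_natCast,
          ← ENNReal.ofReal_mul (by positivity)]
        congr 1
        rw [he, Real.sqrt_eq_rpow, one_div, ← Real.rpow_neg (by positivity),
          Real.mul_rpow (by positivity) (by positivity)]
        ring

lemma lint_rpow (t b : ℝ) (ht : 0 < t) (hb : b < 1) :
    ∫⁻ s in Ioo 0 t, ENNReal.ofReal (s ^ (-b)) = ENNReal.ofReal (t ^ (1 - b) / (1 - b)) := by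
  have hi : IntervalIntegrable (fun s : ℝ => s ^ (-b)) volume 0 t :=
    intervalIntegral.intervalIntegrable_rpow' (by linarith)
  rw [← ofReal_integral_eq_lintegral_ofReal]
  · congr 1
    rw [← integral_Ioc_eq_integral_Ioo, ← intervalIntegral.integral_of_le ht.le,
      integral_rpow (Or.inl (by linarith))]
    have : -b + 1 = 1 - b := by ring
    rw [this, Real.zero_rpow (by linarith)]
    simp
  · exact ((intervalIntegrable_iff_integrableOn_Ioc_of_le ht.le).mp hi).mono_set Ioo_subset_Ioc_self
  · refine (ae_restrict_iff' measurableSet_Ioo).mpr (ae_of_all _ fun s hs => ?_)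
    exact Real.rpow_nonneg hs.1.le _

lemma lint_rpow' (t b : ℝ) (ht : 0 < t) (hb : b < 1) :
    ∫⁻ s in Ioo 0 t, ENNReal.ofReal ((t - s) ^ (-b)) = ENNReal.ofReal (t ^ (1 - b) / (1 - b)) := by
  rw [← lint_rpow t b ht hb]
  rw [← lintegral_indicator measurableSet_Ioo, ← lintegral_indicator measurableSet_Ioo]
  rw [← lintegral_sub_left_eq_self _ t]
  congr 1
  ext s
  by_cases hs : s ∈ Ioo 0 t
  · rw [indicator_of_mem hs, indicator_of_mem]
    · simp
    · constructor <;> [linarith [hs.2]; linarith [hs.1]]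
  · rw [indicator_of_notMem hs, indicator_of_notMem]
    intro h
    apply hs
    constructor <;> [linarith [h.2]; linarith [h.1]]

lemma beta_bd (a b : ℝ) (ha0 : 0 ≤ a) (hb0 : 0 ≤ b) (ha : a < 1) (hb : b < 1) :
    ∃ C : ℝ, 0 < C ∧ ∀ t : ℝ, 0 < t →
      ∫⁻ s in Ioo 0 t, ENNReal.ofReal ((t - s) ^ (-a)) * ENNReal.ofReal (s ^ (-b)) ≤
        ENNReal.ofReal (C * t ^ (1 - a - b)) := by
  have ha1 : 0 < 1 - a := by linarith
  have hb1 : 0 < 1 - b := by linarith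
  refine ⟨2 ^ a / (1 - b) + 2 ^ b / (1 - a), by positivity, fun t ht => ?_⟩
  have e : ∀ c : ℝ, (t/2) ^ (-c) = 2 ^ c * t ^ (-c) := fun c => by
    rw [Real.div_rpow ht.le (by norm_num), Real.rpow_neg (by norm_num : (0:ℝ) ≤ 2)]
    field_simp
  calc _ ≤ ∫⁻ s in Ioo 0 t, (ENNReal.ofReal ((t/2) ^ (-a)) * ENNReal.ofReal (s ^ (-b)) +
        ENNReal.ofReal ((t/2) ^ (-b)) * ENNReal.ofReal ((t - s) ^ (-a))) := by
        refine setLIntegral_mono' measurableSet_Ioo fun s hs => ?_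
        rcases le_total s (t/2) with h | h
        · refine le_trans ?_ le_self_add
          gcongr ENNReal.ofReal ?_ * _
          exact Real.rpow_le_rpow_of_nonpos (by linarith) (by linarith) (by linarith)
        · refine le_trans ?_ le_add_self
          rw [mul_comm]
          gcongr ENNReal.ofReal ?_ * _
          exact Real.rpow_le_rpow_of_nonpos (by linarith) (by linarith) (by linarith)
    _ = ENNReal.ofReal ((t/2) ^ (-a)) * ENNReal.ofReal (t ^ (1 - b) / (1 - b)) +
        ENNReal.ofReal ((t/2) ^ (-b)) * ENNReal.ofReal (t ^ (1 - a) / (1 - a)) := by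
        rw [lintegral_add_left (by fun_prop), lintegral_const_mul _ (by fun_prop),
          lintegral_const_mul _ (by fun_prop), lint_rpow t b ht hb, lint_rpow' t a ht ha]
    _ = _ := by
        rw [← ENNReal.ofReal_mul (by positivity), ← ENNReal.ofReal_mul (by positivity),
          ← ENNReal.ofReal_add (by positivity) (by positivity)]
        congr 1
        rw [e, e]
        have h1 : t ^ (1 - a - b) = t ^ (-a) * t ^ (1 - b) := by
          rw [← Real.rpow_add ht]; congr 1; ring
        have h2 : t ^ (1 - a - b) = t ^ (-b) * t ^ (1 - a) := by
          rw [← Real.rpow_add ht]; congr 1; ring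
        rw [add_mul]
        nth_rewrite 1 [h1]
        rw [h2]
        ring


def cv {d : ℕ} (f g : Ix d → ℂ) (k : Ix d) : ℂ := ∑' p, f p * g (k - p)

def Dj {d : ℕ} (j : Fin d) (c : Ix d → ℂ) (k : Ix d) : ℂ := Complex.I * (k j : ℂ) * c k

def Gq {d : ℕ} (c : Ix d → ℂ) (k : Ix d) : ℂ := ∑ l, cv (Dj l c) (Dj l c) k

def FF {d : ℕ} (c : Ix d → ℂ) (j : Fin d) (k : Ix d) : ℂ := cv (Gq c) (Dj j c) k - Dj j c k

def NN {d : ℕ} (c : Ix d → ℂ) (k : Ix d) : ℂ := ∑ j, Dj j (FF c j) k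

def om {d : ℕ} (c t : ℝ) (k : Ix d) : ℝ≥0∞ := ENNReal.ofReal (Real.exp (c * t * ‖k‖))

def WW {d : ℕ} (c t : ℝ) (v : Ix d → ℂ) (k : Ix d) : ℝ≥0∞ := JE k * om c t k * ‖v k‖ₑ

lemma om_sub {d : ℕ} {c t : ℝ} (hc : 0 ≤ c) (ht : 0 ≤ t) (p k : Ix d) :
    om c t k ≤ om c t p * om c t (k - p) := by
  unfold om
  rw [← ENNReal.ofReal_mul (by positivity), ← Real.exp_add]
  apply ENNReal.ofReal_le_ofReal
  apply Real.exp_le_exp.mpr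
  rw [← mul_add]
  gcongr
  simpa using norm_add_le p (k - p)

lemma one_le_om {d : ℕ} {c t : ℝ} (hc : 0 ≤ c) (ht : 0 ≤ t) (k : Ix d) : 1 ≤ om c t k := by
  unfold om
  rw [← ENNReal.ofReal_one]
  apply ENNReal.ofReal_le_ofReal
  exact Real.one_le_exp (by positivity)

lemma om_ne_top {d : ℕ} (c t : ℝ) (k : Ix d) : om c t k ≠ ∞ := ENNReal.ofReal_ne_top

lemma enorm_le_of_om {d : ℕ} {c t : ℝ} (hc : 0 ≤ c) (ht : 0 ≤ t) (k : Ix d) (z : ℂ) :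
    ‖z‖ₑ ≤ om c t k * ‖z‖ₑ := by
  conv_lhs => rw [← one_mul ‖z‖ₑ]
  gcongr
  exact one_le_om hc ht k

lemma enorm_kj {d : ℕ} (k : Ix d) (j : Fin d) : ‖((k j : ℤ) : ℂ)‖ₑ ≤ ENNReal.ofReal ‖k‖ := by
  rw [← ofReal_norm]
  apply ENNReal.ofReal_le_ofReal
  rw [Complex.norm_intCast]
  simpa [Int.norm_eq_abs] using norm_le_pi_norm k j

lemma enorm_Dj {d : ℕ} (j : Fin d) (c : Ix d → ℂ) (k : Ix d) :
    ‖Dj j c k‖ₑ ≤ ENNReal.ofReal ‖k‖ * ‖c k‖ₑ := by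
  unfold Dj
  rw [enorm_mul, enorm_mul]
  have : ‖Complex.I‖ₑ = 1 := by rw [← ofReal_norm]; simp
  rw [this, one_mul]
  gcongr
  exact enorm_kj k j

lemma Dj_W {d : ℕ} (c t : ℝ) (j : Fin d) (v : Ix d → ℂ) (k : Ix d) :
    om c t k * ‖Dj j v k‖ₑ ≤ WW c t v k := by
  unfold WW
  calc _ ≤ om c t k * (JE k * ‖v k‖ₑ) := by
        gcongr
        refine (enorm_Dj j v k).trans ?_
        gcongr
        unfold JE
        apply ENNReal.ofReal_le_ofReal
        linarith
    _ = _ := by ring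

lemma Dj_sub {d : ℕ} (j : Fin d) (u v : Ix d → ℂ) (k : Ix d) :
    Dj j (fun k => u k - v k) k = Dj j u k - Dj j v k := by
  unfold Dj; ring

lemma cv_W {d : ℕ} {w : Ix d → ℝ≥0∞} (hw : ∀ p k, w k ≤ w p * w (k - p)) (f g : Ix d → ℂ)
    (k : Ix d) : w k * ‖cv f g k‖ₑ ≤ cE (fun k => w k * ‖f k‖ₑ) (fun k => w k * ‖g k‖ₑ) k := by
  unfold cv cE
  calc _ ≤ w k * ∑' p, ‖f p * g (k - p)‖ₑ := by gcongr; exact enorm_tsum_le_tsum_enorm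
    _ = ∑' p, w k * ‖f p * g (k - p)‖ₑ := by rw [ENNReal.tsum_mul_left]
    _ ≤ _ := by
      refine ENNReal.tsum_le_tsum fun p => ?_
      rw [enorm_mul]
      calc _ ≤ (w p * w (k - p)) * (‖f p‖ₑ * ‖g (k - p)‖ₑ) := by gcongr; exact hw p k
        _ = _ := by ring

lemma summable_of_enorm {ι : Type*} {f : ι → ℂ} (h : ∑' i, ‖f i‖ₑ ≠ ∞) : Summable f := by
  apply Summable.of_norm
  have := ENNReal.summable_toReal h
  simpa using this

lemma cE_le {d : ℕ} (f g : Ix d → ℝ≥0∞) (k : Ix d) : cE f g k ≤ (∑' k, f k) * ∑' k, g k := by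
  rw [← tsum_cE]
  exact ENNReal.le_tsum k

lemma cv_summable {d : ℕ} {f g : Ix d → ℂ} (hf : ∑' k, ‖f k‖ₑ ≠ ∞) (hg : ∑' k, ‖g k‖ₑ ≠ ∞)
    (k : Ix d) : Summable fun p => f p * g (k - p) := by
  apply summable_of_enorm
  simp only [enorm_mul]
  refine ne_top_of_le_ne_top (ENNReal.mul_ne_top hf hg) ?_
  exact cE_le (fun k => ‖f k‖ₑ) (fun k => ‖g k‖ₑ) k

lemma cv_diff {d : ℕ} {f g f' g' : Ix d → ℂ} (hf : ∑' k, ‖f k‖ₑ ≠ ∞) (hg : ∑' k, ‖g k‖ₑ ≠ ∞)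
    (hf' : ∑' k, ‖f' k‖ₑ ≠ ∞) (hg' : ∑' k, ‖g' k‖ₑ ≠ ∞) (k : Ix d) :
    cv f g k - cv f' g' k = cv (fun k => f k - f' k) g k + cv f' (fun k => g k - g' k) k := by
  unfold cv
  have h1 : Summable fun p => (f p - f' p) * g (k - p) := by
    simpa only [sub_mul] using (cv_summable hf hg k).sub (cv_summable hf' hg k)
  have h2 : Summable fun p => f' p * (g (k - p) - g' (k - p)) := by
    simpa only [mul_sub] using (cv_summable hf' hg k).sub (cv_summable hf' hg' k)
  rw [← (cv_summable hf hg k).tsum_sub (cv_summable hf' hg' k), ← h1.tsum_add h2]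
  exact tsum_congr fun p => by ring

lemma cE_sum_const {d : ℕ} (n : ℕ) (f g : Ix d → ℝ≥0∞) (k : Ix d) :
    cE (fun k => (n:ℝ≥0∞) * f k) g k = (n:ℝ≥0∞) * cE f g k := by
  unfold cE
  rw [← ENNReal.tsum_mul_left]
  exact tsum_congr fun p => by ring


lemma Gq_W {d : ℕ} {c t : ℝ} (hc : 0 ≤ c) (ht : 0 ≤ t) (u : Ix d → ℂ) (k : Ix d) :
    om c t k * ‖Gq u k‖ₑ ≤ d * cE (WW c t u) (WW c t u) k := by
  unfold Gq
  calc _ ≤ om c t k * ∑ l, ‖cv (Dj l u) (Dj l u) k‖ₑ := by gcongr; exact enorm_sum_le _ _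
    _ = ∑ l, om c t k * ‖cv (Dj l u) (Dj l u) k‖ₑ := by rw [Finset.mul_sum]
    _ ≤ ∑ l : Fin d, cE (WW c t u) (WW c t u) k := by
        refine Finset.sum_le_sum fun l _ => ?_
        refine (cv_W (om_sub hc ht) _ _ k).trans ?_
        exact cE_mono (Dj_W c t l u) (Dj_W c t l u) k
    _ = _ := by simp

lemma FF_W {d : ℕ} {c t : ℝ} (hc : 0 ≤ c) (ht : 0 ≤ t) (u : Ix d → ℂ) (j : Fin d) (k : Ix d) :
    om c t k * ‖FF u j k‖ₑ ≤ d * cE (cE (WW c t u) (WW c t u)) (WW c t u) k + WW c t u k := by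
  unfold FF
  calc _ ≤ om c t k * (‖cv (Gq u) (Dj j u) k‖ₑ + ‖Dj j u k‖ₑ) := by
        gcongr; exact enorm_sub_le
    _ = om c t k * ‖cv (Gq u) (Dj j u) k‖ₑ + om c t k * ‖Dj j u k‖ₑ := mul_add _ _ _
    _ ≤ _ := by
        refine add_le_add ?_ ?_
        · refine (cv_W (om_sub hc ht) _ _ k).trans ?_
          rw [← cE_sum_const]
          exact cE_mono (Gq_W hc ht u) (Dj_W c t j u) k
        · exact Dj_W c t j u k

lemma tsum_Dj_ne_top {d : ℕ} {c t : ℝ} (hc : 0 ≤ c) (ht : 0 ≤ t) {u : Ix d → ℂ} (hu : ∑' k, WW c t u k ≠ ∞) (j : Fin d) :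
    ∑' k, ‖Dj j u k‖ₑ ≠ ∞ := by
  refine ne_top_of_le_ne_top hu (ENNReal.tsum_le_tsum fun k => ?_)
  exact (enorm_le_of_om hc ht k _).trans (Dj_W c t j u k)

lemma tsum_Gq_ne_top {d : ℕ} {c t : ℝ} (hc : 0 ≤ c) (ht : 0 ≤ t) {u : Ix d → ℂ} (hu : ∑' k, WW c t u k ≠ ∞) :
    ∑' k, ‖Gq u k‖ₑ ≠ ∞ := by
  have : ∑' k, (d : ℝ≥0∞) * cE (WW c t u) (WW c t u) k ≠ ∞ := by
    rw [ENNReal.tsum_mul_left, tsum_cE]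
    exact ENNReal.mul_ne_top (ENNReal.natCast_ne_top d) (ENNReal.mul_ne_top hu hu)
  refine ne_top_of_le_ne_top this (ENNReal.tsum_le_tsum fun k => ?_)
  exact (enorm_le_of_om hc ht k _).trans (Gq_W hc ht u k)

lemma Gq_diff {d : ℕ} {c t : ℝ} (hc : 0 ≤ c) (ht : 0 ≤ t) {u v : Ix d → ℂ} (hu : ∑' k, WW c t u k ≠ ∞) (hv : ∑' k, WW c t v k ≠ ∞) (k : Ix d) :
    om c t k * ‖Gq u k - Gq v k‖ₑ ≤
      d * (cE (WW c t (fun k => u k - v k)) (WW c t u) k +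
        cE (WW c t v) (WW c t (fun k => u k - v k)) k) := by
  unfold Gq
  rw [← Finset.sum_sub_distrib]
  calc _ ≤ om c t k * ∑ l, ‖cv (Dj l u) (Dj l u) k - cv (Dj l v) (Dj l v) k‖ₑ := by
        gcongr; exact enorm_sum_le _ _
    _ = ∑ l, om c t k * ‖cv (Dj l u) (Dj l u) k - cv (Dj l v) (Dj l v) k‖ₑ := by rw [Finset.mul_sum]
    _ ≤ ∑ l : Fin d, (cE (WW c t (fun k => u k - v k)) (WW c t u) k +
        cE (WW c t v) (WW c t (fun k => u k - v k)) k) := by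
        refine Finset.sum_le_sum fun l _ => ?_
        have h1 := tsum_Dj_ne_top hc ht hu l
        have h2 := tsum_Dj_ne_top hc ht hv l
        rw [cv_diff h1 h1 h2 h2]
        simp only [← Dj_sub]
        refine (mul_le_mul_right (enorm_add_le _ _) _).trans ?_
        rw [mul_add]
        refine add_le_add ?_ ?_
        · refine (cv_W (om_sub hc ht) _ _ k).trans ?_
          exact cE_mono (Dj_W c t l _) (Dj_W c t l u) k
        · refine (cv_W (om_sub hc ht) _ _ k).trans ?_
          exact cE_mono (Dj_W c t l _) (Dj_W c t l _) k
    _ = _ := by simp [mul_add]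

lemma FF_diff {d : ℕ} {c t : ℝ} (hc : 0 ≤ c) (ht : 0 ≤ t) {u v : Ix d → ℂ} (hu : ∑' k, WW c t u k ≠ ∞) (hv : ∑' k, WW c t v k ≠ ∞)
    (j : Fin d) (k : Ix d) :
    om c t k * ‖FF u j k - FF v j k‖ₑ ≤
      d * cE (fun k => cE (WW c t (fun k => u k - v k)) (WW c t u) k +
        cE (WW c t v) (WW c t (fun k => u k - v k)) k) (WW c t u) k
      + d * cE (cE (WW c t v) (WW c t v)) (WW c t (fun k => u k - v k)) k
      + WW c t (fun k => u k - v k) k := by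
  have h1 := tsum_Dj_ne_top hc ht hu j
  have h2 := tsum_Dj_ne_top hc ht hv j
  have h3 := tsum_Gq_ne_top hc ht hu
  have h4 := tsum_Gq_ne_top hc ht hv
  have e : FF u j k - FF v j k = cv (fun k => Gq u k - Gq v k) (Dj j u) k +
      cv (Gq v) (Dj j (fun k => u k - v k)) k - Dj j (fun k => u k - v k) k := by
    have := cv_diff h3 h1 h4 h2 k
    simp only [← Dj_sub] at this
    change _ = cv _ _ k + cv _ (fun k => Dj j (fun k => u k - v k) k) k - _
    rw [← this, Dj_sub]
    unfold FF
    ring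
  rw [e]
  refine (mul_le_mul_right (enorm_sub_le.trans (add_le_add_left (enorm_add_le _ _) _)) _).trans ?_
  rw [mul_add, mul_add]
  refine add_le_add (add_le_add ?_ ?_) (Dj_W c t j _ k)
  · refine (cv_W (om_sub hc ht) _ _ k).trans ?_
    rw [← cE_sum_const]
    exact cE_mono (Gq_diff hc ht hu hv) (Dj_W c t j u) k
  · refine (cv_W (om_sub hc ht) _ _ k).trans ?_
    rw [← cE_sum_const]
    exact cE_mono (Gq_W hc ht v) (Dj_W c t j _) k

lemma FF_sum {d : ℕ} {c t : ℝ} (hc : 0 ≤ c) (ht : 0 ≤ t) (u : Ix d → ℂ) (j : Fin d) :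
    ∑' k, om c t k * ‖FF u j k‖ₑ ≤ d * (∑' k, WW c t u k) ^ 3 + ∑' k, WW c t u k := by
  refine (ENNReal.tsum_le_tsum (FF_W hc ht u j)).trans ?_
  rw [ENNReal.tsum_add, ENNReal.tsum_mul_left, tsum_cE, tsum_cE]
  apply le_of_eq; ring

lemma B_S2 {d : ℕ} {c t : ℝ} (u : Ix d → ℂ) :
    S2 (fun k => d * cE (cE (WW c t u) (WW c t u)) (WW c t u) k + WW c t u k) ≤
      2 * (d ^ 2 * (2 * (2 ^ d) ^ 2 * (2 * (2 * (2 ^ d) ^ 2) + 1)) + 1) *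
        (((∑' k, WW c t u k) ^ 4 + 1) * S2 (WW c t u)) := by
  calc _ ≤ 2 * (d ^ 2 * S2 (cE (cE (WW c t u) (WW c t u)) (WW c t u)) + S2 (WW c t u)) := by
        rw [← S2_mul]
        exact S2_add _ _
    _ ≤ 2 * (d ^ 2 * ((2 * (2 ^ d) ^ 2 * (2 * (2 * (2 ^ d) ^ 2) + 1)) *
          ((∑' k, WW c t u k) ^ 4 * S2 (WW c t u))) + S2 (WW c t u)) := by
        gcongr
        exact S2_cE3 _
    _ ≤ _ := by
        generalize (∑' k, WW c t u k) ^ 4 = A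
        generalize S2 (WW c t u) = B
        generalize (2 * (2 ^ d) ^ 2 * (2 * (2 * (2 ^ d) ^ 2) + 1) : ℝ≥0∞) = C
        rw [mul_assoc 2]
        gcongr
        calc (d:ℝ≥0∞) ^ 2 * (C * (A * B)) + B ≤
            ((d:ℝ≥0∞) ^ 2 * (C * (A * B)) + B) + (d ^ 2 * C * B + A * B) := le_self_add
          _ = _ := by ring

lemma FF_diff_sum {d : ℕ} {c t : ℝ} (hc : 0 ≤ c) (ht : 0 ≤ t) {u v : Ix d → ℂ} {X : ℝ≥0∞} (hX : X ≠ ∞) (hu : ∑' k, WW c t u k ≤ X)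
    (hv : ∑' k, WW c t v k ≤ X) (j : Fin d) :
    ∑' k, om c t k * ‖FF u j k - FF v j k‖ₑ ≤
      (3 * d * X ^ 2 + 1) * ∑' k, WW c t (fun k => u k - v k) k := by
  refine (ENNReal.tsum_le_tsum (FF_diff hc ht (ne_top_of_le_ne_top hX hu)
    (ne_top_of_le_ne_top hX hv) j)).trans ?_
  rw [ENNReal.tsum_add, ENNReal.tsum_add, ENNReal.tsum_mul_left, ENNReal.tsum_mul_left, tsum_cE,
    tsum_cE, tsum_cE, ENNReal.tsum_add, tsum_cE, tsum_cE]
  generalize ∑' k, WW c t (fun k => u k - v k) k = D at *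
  calc _ ≤ (d:ℝ≥0∞) * ((D * X + X * D) * X) + d * (X * X * D) + D := by gcongr
    _ = _ := by ring



def Lk {d : ℕ} (ν : ℝ) (k : Ix d) : ℝ := ν * (∑ i, (k i : ℝ) ^ 2) ^ 2

lemma norm_sq_le {d : ℕ} (k : Ix d) : ‖k‖ ^ 2 ≤ ∑ i, (k i : ℝ) ^ 2 := by
  have h0 : (0:ℝ) ≤ ∑ i, (k i : ℝ) ^ 2 := Finset.sum_nonneg fun i _ => sq_nonneg _
  have : ‖k‖ ≤ Real.sqrt (∑ i, (k i : ℝ) ^ 2) := by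
    rw [pi_norm_le_iff_of_nonneg (Real.sqrt_nonneg _)]
    intro i
    rw [Int.norm_eq_abs]
    apply Real.abs_le_sqrt
    exact Finset.single_le_sum (f := fun i => (k i : ℝ) ^ 2) (fun i _ => sq_nonneg _)
      (Finset.mem_univ i)
  calc ‖k‖ ^ 2 ≤ (Real.sqrt (∑ i, (k i : ℝ) ^ 2)) ^ 2 := by gcongr
    _ = _ := Real.sq_sqrt h0

lemma Lk_ge {d : ℕ} {ν : ℝ} (hν : 0 ≤ ν) (k : Ix d) : ν * ‖k‖ ^ 4 ≤ Lk ν k := by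
  unfold Lk
  gcongr
  calc ‖k‖ ^ 4 = (‖k‖ ^ 2) ^ 2 := by ring
    _ ≤ _ := by gcongr; exact norm_sq_le k

lemma rpow_le_exp (y q : ℝ) (hy : 0 ≤ y) (hq : 0 ≤ q) (hq1 : q ≤ 1) : y ^ q ≤ Real.exp y := by
  refine le_trans ?_ (Real.add_one_le_exp y)
  rcases le_total y 1 with h | h
  · have := Real.rpow_le_one hy h hq
    linarith
  · have := Real.rpow_le_rpow_of_exponent_le h hq1
    rw [Real.rpow_one] at this
    linarith

lemma heat2 (b x τ : ℝ) (hb : 0 < b) (hx : 0 ≤ x) (hτ : 0 < τ) :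
    x ^ 2 * Real.exp (-(b * x ^ 4 * τ)) ≤ b ^ (-(1/2) : ℝ) * τ ^ (-(1/2) : ℝ) := by
  have h := rpow_le_exp (b * x ^ 4 * τ) (1/2) (by positivity) (by norm_num) (by norm_num)
  have e : (b * x ^ 4 * τ) ^ (1/2 : ℝ) = b ^ (1/2 : ℝ) * τ ^ (1/2:ℝ) * x ^ 2 := by
    rw [Real.mul_rpow (by positivity) hτ.le, Real.mul_rpow hb.le (by positivity),
      ← Real.rpow_natCast x 4, ← Real.rpow_mul hx, ← Real.rpow_natCast x 2]
    norm_num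
    ring
  rw [e] at h
  rw [Real.exp_neg, Real.rpow_neg hb.le, Real.rpow_neg hτ.le, ← div_eq_mul_inv,
    div_le_iff₀ (Real.exp_pos _), ← mul_inv, inv_mul_eq_div, le_div_iff₀ (by positivity)]
  linarith

lemma heat1 (b x τ : ℝ) (hb : 0 < b) (hx : 0 ≤ x) (hτ : 0 < τ) :
    x * Real.exp (-(b * x ^ 4 * τ)) ≤ b ^ (-(1/4) : ℝ) * τ ^ (-(1/4) : ℝ) := by
  have h := rpow_le_exp (b * x ^ 4 * τ) (1/4) (by positivity) (by norm_num) (by norm_num)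
  have e : (b * x ^ 4 * τ) ^ (1/4 : ℝ) = b ^ (1/4 : ℝ) * τ ^ (1/4:ℝ) * x := by
    rw [Real.mul_rpow (by positivity) hτ.le, Real.mul_rpow hb.le (by positivity),
      ← Real.rpow_natCast x 4, ← Real.rpow_mul hx]
    norm_num
    ring
  rw [e] at h
  rw [Real.exp_neg, Real.rpow_neg hb.le, Real.rpow_neg hτ.le, ← div_eq_mul_inv,
    div_le_iff₀ (Real.exp_pos _), ← mul_inv, inv_mul_eq_div, le_div_iff₀ (by positivity)]
  linarith

lemma le_pow4 {x : ℝ} (hx : x = 0 ∨ 1 ≤ x) : x ≤ x ^ 4 := by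
  rcases hx with rfl | hx
  · simp
  · exact le_self_pow₀ hx (by norm_num)

/-- weight exchange -/
lemma exp_weight {d : ℕ} {ν t s : ℝ} (hν : 0 < ν) (hst : s ≤ t) (k : Ix d) :
    Real.exp (ν / 2 * t * ‖k‖) * Real.exp (-(Lk ν k * (t - s))) ≤
      Real.exp (-(ν / 2 * ‖k‖ ^ 4 * (t - s))) * Real.exp (ν / 2 * s * ‖k‖) := by
  rw [← Real.exp_add, ← Real.exp_add]
  apply Real.exp_le_exp.mpr
  have h1 : ν * ‖k‖ ^ 4 * (t - s) ≤ Lk ν k * (t - s) :=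
    mul_le_mul_of_nonneg_right (Lk_ge hν.le k) (by linarith)
  have h2 : ν / 2 * (t - s) * ‖k‖ ≤ ν / 2 * (t - s) * ‖k‖ ^ 4 :=
    mul_le_mul_of_nonneg_left (le_pow4 (norm_int k)) (mul_nonneg (by linarith) (by linarith))
  nlinarith

lemma ker2 {d : ℕ} {ν t s : ℝ} (hν : 0 < ν) (hst : s < t) (k : Ix d) :
    JE k * om (ν / 2) t k * ENNReal.ofReal (Real.exp (-(Lk ν k * (t - s)))) * ENNReal.ofReal ‖k‖ ≤
      ENNReal.ofReal (2 * (ν / 2) ^ (-(1/2) : ℝ) * (t - s) ^ (-(1/2) : ℝ)) * om (ν / 2) s k := by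
  unfold JE om
  have hts : 0 < t - s := by linarith
  rw [← ENNReal.ofReal_mul (by positivity), ← ENNReal.ofReal_mul (by positivity),
    ← ENNReal.ofReal_mul (by positivity), ← ENNReal.ofReal_mul (by positivity)]
  apply ENNReal.ofReal_le_ofReal
  have h1 := exp_weight hν hst.le k
  have h2 := heat2 (ν/2) ‖k‖ (t - s) (by positivity) (by positivity) hts
  have h3 : (1 + ‖k‖) * ‖k‖ ≤ 2 * ‖k‖ ^ 2 := by
    rcases norm_int k with h | h
    · rw [h]; simp
    · nlinarith
  calc _ = ((1 + ‖k‖) * ‖k‖) *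
        (Real.exp (ν / 2 * t * ‖k‖) * Real.exp (-(Lk ν k * (t - s)))) := by ring
    _ ≤ (2 * ‖k‖ ^ 2) * (Real.exp (-(ν / 2 * ‖k‖ ^ 4 * (t - s))) * Real.exp (ν / 2 * s * ‖k‖)) := by
        gcongr
    _ = 2 * (‖k‖ ^ 2 * Real.exp (-(ν / 2 * ‖k‖ ^ 4 * (t - s)))) * Real.exp (ν / 2 * s * ‖k‖) := by
        ring
    _ ≤ 2 * ((ν / 2) ^ (-(1/2) : ℝ) * (t - s) ^ (-(1/2) : ℝ)) * Real.exp (ν / 2 * s * ‖k‖) := by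
        gcongr
    _ = _ := by ring

lemma ker1 {d : ℕ} {ν t s : ℝ} (hν : 0 < ν) (hs : 0 ≤ s) (hst : s < t) (k : Ix d) :
    ENNReal.ofReal (Real.exp (-(Lk ν k * (t - s)))) * ENNReal.ofReal ‖k‖ ≤
      ENNReal.ofReal (ν ^ (-(1/4) : ℝ) * (t - s) ^ (-(1/4) : ℝ)) * om (ν / 2) s k := by
  have hts : 0 < t - s := by linarith
  rw [← ENNReal.ofReal_mul (by positivity)]
  refine le_trans ?_ (le_mul_of_one_le_right' (one_le_om (by positivity) hs k))
  apply ENNReal.ofReal_le_ofReal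
  have h2 := heat1 ν ‖k‖ (t - s) (by positivity) (by positivity) hts
  refine le_trans ?_ h2
  rw [mul_comm]
  gcongr
  exact Lk_ge hν.le k

def Du {d : ℕ} (ν : ℝ) (G : ℝ → Fin d → Ix d → ℂ) (t : ℝ) (k : Ix d) : ℂ :=
  ∫ s in (0:ℝ)..t, ((Real.exp (-(Lk ν k * (t - s))) : ℝ) : ℂ) * ∑ j, Dj j (G s j) k

lemma enorm_exp (x : ℝ) : ‖((Real.exp x : ℝ) : ℂ)‖ₑ = ENNReal.ofReal (Real.exp x) := by
  rw [← ofReal_norm, Complex.norm_real, Real.norm_of_nonneg (Real.exp_pos _).le]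

lemma Du_le {d : ℕ} (ν : ℝ) (G : ℝ → Fin d → Ix d → ℂ) {t : ℝ} (ht : 0 < t) (k : Ix d) :
    ‖Du ν G t k‖ₑ ≤ ∫⁻ s in Ioo 0 t, ENNReal.ofReal (Real.exp (-(Lk ν k * (t - s)))) *
      ENNReal.ofReal ‖k‖ * ∑ j, ‖G s j k‖ₑ := by
  unfold Du
  rw [intervalIntegral.integral_of_le ht.le, integral_Ioc_eq_integral_Ioo]
  refine (enorm_integral_le_lintegral_enorm _).trans (lintegral_mono fun s => ?_)
  rw [enorm_mul, enorm_exp, mul_assoc]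
  gcongr
  refine (enorm_sum_le _ _).trans ?_
  rw [Finset.mul_sum]
  exact Finset.sum_le_sum fun j _ => enorm_Dj j _ k

def GW {d : ℕ} (c s : ℝ) (F : Fin d → Ix d → ℂ) (k : Ix d) : ℝ≥0∞ := ∑ j, om c s k * ‖F j k‖ₑ

lemma Du_W {d : ℕ} {ν : ℝ} (hν : 0 < ν) (G : ℝ → Fin d → Ix d → ℂ) {t : ℝ} (ht : 0 < t) (k : Ix d) :
    WW (ν / 2) t (Du ν G t) k ≤
    ∫⁻ s in Ioo 0 t, ENNReal.ofReal (2 * (ν / 2) ^ (-(1/2) : ℝ) * (t - s) ^ (-(1/2) : ℝ)) *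
      GW (ν / 2) s (G s) k := by
  unfold WW
  calc _ ≤ JE k * om (ν / 2) t k * ∫⁻ s in Ioo 0 t, ENNReal.ofReal (Real.exp (-(Lk ν k * (t - s)))) *
      ENNReal.ofReal ‖k‖ * ∑ j, ‖G s j k‖ₑ := by gcongr; exact Du_le ν G ht k
    _ = ∫⁻ s in Ioo 0 t, JE k * om (ν / 2) t k * (ENNReal.ofReal (Real.exp (-(Lk ν k * (t - s)))) *
      ENNReal.ofReal ‖k‖ * ∑ j, ‖G s j k‖ₑ) := by
        rw [lintegral_const_mul']
        exact ENNReal.mul_ne_top (JE_ne_top k) (om_ne_top _ _ k)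
    _ ≤ _ := by
        refine setLIntegral_mono' measurableSet_Ioo fun s hs => ?_
        unfold GW
        rw [← Finset.mul_sum, ← mul_assoc, ← mul_assoc, ← mul_assoc]
        exact mul_le_mul_left (ker2 hν hs.2 k) _

lemma Du_H {d : ℕ} {ν : ℝ} (hν : 0 < ν) (G : ℝ → Fin d → Ix d → ℂ) {t : ℝ} (ht : 0 < t) (k : Ix d) :
    ‖Du ν G t k‖ₑ ≤
    ∫⁻ s in Ioo 0 t, ENNReal.ofReal (ν ^ (-(1/4) : ℝ) * (t - s) ^ (-(1/4) : ℝ)) *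
      GW (ν / 2) s (G s) k := by
  refine (Du_le ν G ht k).trans ?_
  refine setLIntegral_mono' measurableSet_Ioo fun s hs => ?_
  unfold GW
  rw [← Finset.mul_sum, ← mul_assoc]
  exact mul_le_mul_left (ker1 hν hs.1.le hs.2 k) _

def tw (q s : ℝ) : ℝ≥0∞ := ENNReal.ofReal (s ^ q)

lemma tw_mul {s : ℝ} (hs : 0 < s) (p q : ℝ) : tw p s * tw q s = tw (p + q) s := by
  unfold tw
  rw [← ENNReal.ofReal_mul (by positivity), Real.rpow_add hs]

lemma tw_pow {s : ℝ} (hs : 0 < s) (p : ℝ) (n : ℕ) : tw p s ^ n = tw (p * n) s := by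
  unfold tw
  rw [← ENNReal.ofReal_pow (by positivity), Real.rpow_mul hs.le, Real.rpow_natCast]

lemma tw_zero {s : ℝ} : tw 0 s = 1 := by unfold tw; simp

lemma tw_ne_top (p s : ℝ) : tw p s ≠ ∞ := ENNReal.ofReal_ne_top

lemma tw_mono {s t p : ℝ} (hs : 0 < s) (hst : s ≤ t) (hp : 0 ≤ p) : tw p s ≤ tw p t := by
  unfold tw
  apply ENNReal.ofReal_le_ofReal
  gcongr

lemma tw_anti {s t p : ℝ} (hs : 0 < s) (hst : s ≤ t) (hp : p ≤ 0) : tw p t ≤ tw p s := by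
  unfold tw
  apply ENNReal.ofReal_le_ofReal
  exact Real.rpow_le_rpow_of_nonpos hs hst hp

lemma meas_tw (p : ℝ) : Measurable (tw p) := by unfold tw; fun_prop

/-- kernel bounds: there is a constant `B`, depending only on `ν`. -/
lemma kbound {ν : ℝ} (hν : 0 < ν) : ∃ B : ℝ≥0∞, B ≠ ∞ ∧ ∀ t : ℝ, 0 < t →
    (∫⁻ s in Ioo 0 t, ENNReal.ofReal (2 * (ν / 2) ^ (-(1/2) : ℝ) * (t - s) ^ (-(1/2) : ℝ)) *
      tw (-(3/4)) s ≤ B * tw (-(1/4)) t) ∧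
    (∫⁻ s in Ioo 0 t, ENNReal.ofReal (ν ^ (-(1/4) : ℝ) * (t - s) ^ (-(1/4) : ℝ)) *
      tw (-(3/4)) s ≤ B) := by
  obtain ⟨C1, hC1, h1⟩ := beta_bd (1/2) (3/4) (by norm_num) (by norm_num) (by norm_num) (by norm_num)
  obtain ⟨C2, hC2, h2⟩ := beta_bd (1/4) (3/4) (by norm_num) (by norm_num) (by norm_num) (by norm_num)
  refine ⟨ENNReal.ofReal (2 * (ν / 2) ^ (-(1/2) : ℝ)) * ENNReal.ofReal C1 +
    ENNReal.ofReal (ν ^ (-(1/4) : ℝ)) * ENNReal.ofReal C2, ?_, fun t ht => ⟨?_, ?_⟩⟩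
  · exact ENNReal.add_ne_top.mpr ⟨ENNReal.mul_ne_top ENNReal.ofReal_ne_top ENNReal.ofReal_ne_top,
      ENNReal.mul_ne_top ENNReal.ofReal_ne_top ENNReal.ofReal_ne_top⟩
  · rw [add_mul]
    refine le_trans ?_ le_self_add
    have h0 : (0:ℝ) ≤ 2 * (ν / 2) ^ (-(1/2) : ℝ) := by positivity
    generalize 2 * (ν / 2) ^ (-(1/2) : ℝ) = c0 at h0 ⊢
    simp only [ENNReal.ofReal_mul h0, mul_assoc]
    rw [lintegral_const_mul' _ _ ENNReal.ofReal_ne_top]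
    gcongr
    refine (h1 t ht).trans ?_
    rw [ENNReal.ofReal_mul hC1.le]
    gcongr
    unfold tw
    norm_num
  · refine le_trans ?_ le_add_self
    simp only [ENNReal.ofReal_mul (show (0:ℝ) ≤ ν ^ (-(1/4) : ℝ) by positivity), mul_assoc]
    rw [lintegral_const_mul' _ _ ENNReal.ofReal_ne_top]
    gcongr
    refine (h2 t ht).trans ?_
    norm_num

lemma sum1 {d : ℕ} {t : ℝ} {κ : ℝ → ℝ≥0∞} (hκ : Measurable κ) {g : ℝ → Ix d → ℝ≥0∞}
    (hg : ∀ k, AEMeasurable (fun s => g s k) (volume.restrict (Ioo 0 t))) {A : ℝ≥0∞}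
    (hA : ∀ s ∈ Ioo 0 t, ∑' k, g s k ≤ A * tw (-(3/4)) s) :
    ∑' k, ∫⁻ s in Ioo 0 t, κ s * g s k ≤ A * ∫⁻ s in Ioo 0 t, κ s * tw (-(3/4)) s := by
  have hm : Measurable (fun s => κ s * tw (-(3/4)) s) := hκ.mul (meas_tw _)
  have hm2 : ∀ k, AEMeasurable (fun s => κ s * g s k) (volume.restrict (Ioo 0 t)) :=
    fun k => hκ.aemeasurable.mul (hg k)
  rw [← lintegral_tsum hm2, ← lintegral_const_mul _ hm]
  refine setLIntegral_mono' measurableSet_Ioo fun s hs => ?_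
  rw [ENNReal.tsum_mul_left]
  calc _ ≤ κ s * (A * tw (-(3/4)) s) := by gcongr; exact hA s hs
    _ = _ := by ring

lemma sum2 {d : ℕ} {t : ℝ} {κ : ℝ → ℝ≥0∞} (hκ : Measurable κ) {g : ℝ → Ix d → ℝ≥0∞}
    (hg : ∀ k, AEMeasurable (fun s => g s k) (volume.restrict (Ioo 0 t))) {A : ℝ≥0∞}
    (hA : ∀ s ∈ Ioo 0 t, S2 (g s) ≤ A * tw (-(3/2)) s) :
    S2 (fun k => ∫⁻ s in Ioo 0 t, κ s * g s k) ≤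
      A * (∫⁻ s in Ioo 0 t, κ s * tw (-(3/4)) s) ^ 2 := by
  set K := ∫⁻ s in Ioo 0 t, κ s * tw (-(3/4)) s with hK
  have h1 : ∀ k : Ix d, (∫⁻ s in Ioo 0 t, κ s * g s k) ^ 2 ≤
      K * ∫⁻ s in Ioo 0 t, κ s * tw (-(3/4)) s * (tw (3/4) s * g s k) ^ 2 := by
    intro k
    have e : ∫⁻ s in Ioo 0 t, κ s * g s k =
        ∫⁻ s in Ioo 0 t, (κ s * tw (-(3/4)) s) * (tw (3/4) s * g s k) := by
      refine setLIntegral_congr_fun measurableSet_Ioo fun s hs => ?_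
      have : tw (-(3/4)) s * tw (3/4) s = 1 := by rw [tw_mul hs.1]; norm_num [tw_zero]
      calc κ s * g s k = κ s * g s k * (tw (-(3/4)) s * tw (3/4) s) := by rw [this, mul_one]
        _ = _ := by ring
    rw [e]
    exact cs_lint_w _ (hκ.mul (meas_tw _)).aemeasurable ((meas_tw _).aemeasurable.mul (hg k))
  unfold S2
  calc _ ≤ ∑' k, K * ∫⁻ s in Ioo 0 t, JE k ^ d * (κ s * tw (-(3/4)) s * (tw (3/4) s * g s k) ^ 2) := by
        refine ENNReal.tsum_le_tsum fun k => ?_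
        rw [lintegral_const_mul' _ _ (ENNReal.pow_ne_top (JE_ne_top k))]
        rw [mul_left_comm]
        exact mul_le_mul_right (h1 k) _
    _ = K * ∫⁻ s in Ioo 0 t, ∑' k, JE k ^ d * (κ s * tw (-(3/4)) s * (tw (3/4) s * g s k) ^ 2) := by
        rw [ENNReal.tsum_mul_left, lintegral_tsum]
        intro k
        exact ((hκ.mul (meas_tw _)).aemeasurable.mul
          (((meas_tw _).aemeasurable.mul (hg k)).pow_const 2)).const_mul _
    _ ≤ K * ∫⁻ s in Ioo 0 t, A * (κ s * tw (-(3/4)) s) := by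
        refine mul_le_mul_right ?_ _
        refine setLIntegral_mono' measurableSet_Ioo fun s hs => ?_
        calc _ = (κ s * tw (-(3/4)) s) * (tw (3/2) s * S2 (g s)) := by
              unfold S2
              rw [← ENNReal.tsum_mul_left (a := tw (3/2) s), ← ENNReal.tsum_mul_left]
              refine tsum_congr fun k => ?_
              rw [mul_pow, tw_pow hs.1]
              norm_num
              ring
          _ ≤ (κ s * tw (-(3/4)) s) * (tw (3/2) s * (A * tw (-(3/2)) s)) := by
              gcongr; exact hA s hs
          _ = A * (κ s * tw (-(3/4)) s) * (tw (3/2) s * tw (-(3/2)) s) := by ring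
          _ = _ := by rw [tw_mul hs.1]; norm_num [tw_zero]
    _ = _ := by
        have hm : Measurable (fun s => κ s * tw (-(3/4)) s) := hκ.mul (meas_tw _)
        rw [lintegral_const_mul _ hm]
        change K * (A * K) = _
        ring

lemma GW_sum {d : ℕ} {c t : ℝ} (hc : 0 ≤ c) (ht : 0 ≤ t) (u : Ix d → ℂ) :
    ∑' k, GW c t (FF u) k ≤ d * (d * (∑' k, WW c t u k) ^ 3 + ∑' k, WW c t u k) := by
  unfold GW
  rw [Summable.tsum_finsetSum (fun _ _ => ENNReal.summable)]
  calc _ ≤ ∑ j : Fin d, (d * (∑' k, WW c t u k) ^ 3 + ∑' k, WW c t u k) :=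
        Finset.sum_le_sum fun j _ => FF_sum hc ht u j
    _ = _ := by simp only [Finset.sum_const, Finset.card_univ, Fintype.card_fin, nsmul_eq_mul]

lemma GW_diff {d : ℕ} {c t : ℝ} (hc : 0 ≤ c) (ht : 0 ≤ t) {u v : Ix d → ℂ} {X : ℝ≥0∞} (hX : X ≠ ∞)
    (hu : ∑' k, WW c t u k ≤ X) (hv : ∑' k, WW c t v k ≤ X) :
    ∑' k, GW c t (fun j k => FF u j k - FF v j k) k ≤
      d * ((3 * d * X ^ 2 + 1) * ∑' k, WW c t (fun k => u k - v k) k) := by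
  unfold GW
  rw [Summable.tsum_finsetSum (fun _ _ => ENNReal.summable)]
  calc _ ≤ ∑ j : Fin d, ((3 * d * X ^ 2 + 1) * ∑' k, WW c t (fun k => u k - v k) k) :=
        Finset.sum_le_sum fun j _ => FF_diff_sum hc ht hX hu hv j
    _ = _ := by simp only [Finset.sum_const, Finset.card_univ, Fintype.card_fin, nsmul_eq_mul]

def Kd (d : ℕ) : ℝ≥0∞ := d ^ 2 * (2 * (d ^ 2 * (2 * (2 ^ d) ^ 2 * (2 * (2 * (2 ^ d) ^ 2) + 1)) + 1))

lemma Kd_ne_top (d : ℕ) : Kd d ≠ ∞ := by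
  unfold Kd
  have : (d ^ 2 * (2 * (d ^ 2 * (2 * (2 ^ d) ^ 2 * (2 * (2 * (2 ^ d) ^ 2) + 1)) + 1)) : ℝ≥0∞) =
    ((d ^ 2 * (2 * (d ^ 2 * (2 * (2 ^ d) ^ 2 * (2 * (2 * (2 ^ d) ^ 2) + 1)) + 1)) : ℕ) : ℝ≥0∞) := by
    push_cast; ring
  rw [this]
  exact ENNReal.natCast_ne_top _

lemma GW_S2 {d : ℕ} {c t : ℝ} (hc : 0 ≤ c) (ht : 0 ≤ t) (u : Ix d → ℂ) :
    S2 (GW c t (FF u)) ≤ Kd d * (((∑' k, WW c t u k) ^ 4 + 1) * S2 (WW c t u)) := by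
  have h : ∀ k, GW c t (FF u) k ≤ d * (d * cE (cE (WW c t u) (WW c t u)) (WW c t u) k + WW c t u k) := by
    intro k
    unfold GW
    calc _ ≤ ∑ j : Fin d, (d * cE (cE (WW c t u) (WW c t u)) (WW c t u) k + WW c t u k) :=
        Finset.sum_le_sum fun j _ => FF_W hc ht u j k
      _ = _ := by simp only [Finset.sum_const, Finset.card_univ, Fintype.card_fin, nsmul_eq_mul]
  refine (S2_mono h).trans ?_
  rw [S2_mul]
  unfold Kd
  rw [mul_assoc (_ ^ 2)]
  gcongr
  exact B_S2 u

/-- rapid decay -/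
def RE {d : ℕ} (b : Ix d → ℝ≥0∞) : Prop := ∀ m : ℕ, ∑' k, JE k ^ m * b k ≠ ∞

lemma RE_mono {d : ℕ} {b b' : Ix d → ℝ≥0∞} (h : RE b') (hb : ∀ k, b k ≤ b' k) : RE b := by
  intro m
  refine ne_top_of_le_ne_top (h m) (ENNReal.tsum_le_tsum fun k => ?_)
  gcongr
  exact hb k

lemma RE_add {d : ℕ} {b b' : Ix d → ℝ≥0∞} (h : RE b) (h' : RE b') : RE (fun k => b k + b' k) := by
  intro m
  simp only [mul_add]
  rw [ENNReal.tsum_add]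
  exact ENNReal.add_ne_top.mpr ⟨h m, h' m⟩

lemma RE_const {d : ℕ} {b : Ix d → ℝ≥0∞} (h : RE b) {C : ℝ≥0∞} (hC : C ≠ ∞) :
    RE (fun k => C * b k) := by
  intro m
  simp only [mul_left_comm _ C]
  rw [ENNReal.tsum_mul_left]
  exact ENNReal.mul_ne_top hC (h m)

lemma RE_J {d : ℕ} {b : Ix d → ℝ≥0∞} (h : RE b) (n : ℕ) : RE (fun k => JE k ^ n * b k) := by
  intro m
  have := h (m + n)
  simpa only [pow_add, mul_assoc] using this

lemma JE_mul {d : ℕ} (p k : Ix d) : JE k ≤ JE p * JE (k - p) := by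
  unfold JE
  rw [← ENNReal.ofReal_mul (by positivity)]
  refine ENNReal.ofReal_le_ofReal ?_
  have : ‖k‖ ≤ ‖p‖ + ‖k - p‖ := by simpa using norm_add_le p (k - p)
  nlinarith [norm_nonneg p, norm_nonneg (k - p), mul_nonneg (norm_nonneg p) (norm_nonneg (k - p))]

lemma RE_cE {d : ℕ} {b b' : Ix d → ℝ≥0∞} (h : RE b) (h' : RE b') : RE (cE b b') := by
  intro m
  have : ∑' k, cE (fun k => JE k ^ m * b k) (fun k => JE k ^ m * b' k) k ≠ ∞ := by
    rw [tsum_cE]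
    exact ENNReal.mul_ne_top (h m) (h' m)
  refine ne_top_of_le_ne_top this (ENNReal.tsum_le_tsum fun k => ?_)
  unfold cE
  rw [← ENNReal.tsum_mul_left]
  refine ENNReal.tsum_le_tsum fun p => ?_
  calc _ ≤ (JE p * JE (k - p)) ^ m * (b p * b' (k - p)) := by gcongr; exact JE_mul p k
    _ = _ := by ring

lemma RE_tsum {d : ℕ} {b : Ix d → ℝ≥0∞} (h : RE b) : ∑' k, b k ≠ ∞ := by simpa using h 0

lemma RE_exp {d : ℕ} (hd : 1 ≤ d) {ε : ℝ} (hε : 0 < ε) :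
    RE (fun k : Ix d => ENNReal.ofReal (Real.exp (-(ε * ‖k‖)))) := by
  intro m
  set n := m + (d + 1) with hn
  set C : ℝ := n.factorial * Real.exp ε / ε ^ n with hC
  have key : ∀ k : Ix d, JE k ^ m * ENNReal.ofReal (Real.exp (-(ε * ‖k‖))) ≤
      ENNReal.ofReal C * ENNReal.ofReal (((1 + ‖k‖) ^ (d + 1))⁻¹) := by
    intro k
    unfold JE
    rw [← ENNReal.ofReal_pow (by positivity), ← ENNReal.ofReal_mul (by positivity),
      ← ENNReal.ofReal_mul (by positivity)]
    apply ENNReal.ofReal_le_ofReal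
    have h := Real.pow_div_factorial_le_exp (ε * (1 + ‖k‖)) (by positivity) n
    rw [← div_eq_mul_inv, le_div_iff₀ (by positivity), hC, le_div_iff₀ (by positivity),
      Real.exp_neg]
    rw [div_le_iff₀ (by positivity), mul_pow, mul_add, mul_one, Real.exp_add, hn, pow_add] at h
    have e : (1 + ‖k‖) ^ m * (Real.exp (ε * ‖k‖))⁻¹ * (1 + ‖k‖) ^ (d + 1) * ε ^ n =
      ε ^ n * ((1 + ‖k‖) ^ m * (1 + ‖k‖) ^ (d + 1)) / Real.exp (ε * ‖k‖) := by ring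
    rw [e, div_le_iff₀ (Real.exp_pos _)]
    calc _ = ε ^ m * ε ^ (d + 1) * (1 + ‖k‖) ^ (m + (d + 1)) := by rw [hn]; ring
      _ ≤ _ := h
      _ = _ := by ring
  refine ne_top_of_le_ne_top ?_ (ENNReal.tsum_le_tsum key)
  rw [ENNReal.tsum_mul_left]
  exact ENNReal.mul_ne_top ENNReal.ofReal_ne_top (lat1 hd).ne

/-- coordinatewise continuous with locally uniform rapid decay -/
def LC {d : ℕ} (T : ℝ) (v : ℝ → Ix d → ℂ) : Prop :=
  (∀ k, ContinuousOn (fun s => v s k) (Ioo 0 T)) ∧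
  ∀ s0 > 0, ∃ b : Ix d → ℝ≥0∞, RE b ∧ ∀ s ∈ Ioo s0 T, ∀ k, ‖v s k‖ₑ ≤ b k

lemma LC_mul {d : ℕ} {T : ℝ} {v : ℝ → Ix d → ℂ} (hv : LC T v) (q : Ix d → ℂ) (C : ℝ≥0∞)
    (hC : C ≠ ∞) (m : ℕ) (hq : ∀ k, ‖q k‖ₑ ≤ C * JE k ^ m) : LC T (fun s k => q k * v s k) := by
  refine ⟨fun k => continuousOn_const.mul (hv.1 k), fun s0 hs0 => ?_⟩
  obtain ⟨b, hb, h⟩ := hv.2 s0 hs0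
  refine ⟨_, RE_const (RE_J hb m) hC, fun s hs k => ?_⟩
  rw [enorm_mul, ← mul_assoc]
  exact mul_le_mul' (hq k) (h s hs k)

lemma LC_Dj {d : ℕ} {T : ℝ} {v : ℝ → Ix d → ℂ} (hv : LC T v) (j : Fin d) :
    LC T (fun s => Dj j (v s)) := by
  refine LC_mul hv (fun k => Complex.I * (k j : ℂ)) 1 ENNReal.one_ne_top 1 fun k => ?_
  have := enorm_Dj j (fun _ => 1) k
  simp only [Dj, mul_one, enorm_one] at this
  rw [pow_one, one_mul]
  refine this.trans ?_
  unfold JE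
  apply ENNReal.ofReal_le_ofReal
  linarith

lemma LC_add {d : ℕ} {T : ℝ} {v w : ℝ → Ix d → ℂ} (hv : LC T v) (hw : LC T w) :
    LC T (fun s k => v s k + w s k) := by
  refine ⟨fun k => (hv.1 k).add (hw.1 k), fun s0 hs0 => ?_⟩
  obtain ⟨b, hb, h⟩ := hv.2 s0 hs0
  obtain ⟨b', hb', h'⟩ := hw.2 s0 hs0
  exact ⟨_, RE_add hb hb', fun s hs k => (enorm_add_le _ _).trans (add_le_add (h s hs k) (h' s hs k))⟩

lemma LC_sub {d : ℕ} {T : ℝ} {v w : ℝ → Ix d → ℂ} (hv : LC T v) (hw : LC T w) :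
    LC T (fun s k => v s k - w s k) := by
  refine ⟨fun k => (hv.1 k).sub (hw.1 k), fun s0 hs0 => ?_⟩
  obtain ⟨b, hb, h⟩ := hv.2 s0 hs0
  obtain ⟨b', hb', h'⟩ := hw.2 s0 hs0
  exact ⟨_, RE_add hb hb', fun s hs k => enorm_sub_le.trans (add_le_add (h s hs k) (h' s hs k))⟩

lemma LC_sum {d : ℕ} {T : ℝ} {ι : Type*} (I : Finset ι) {v : ι → ℝ → Ix d → ℂ} (hv : ∀ i, LC T (v i)) :
    LC T (fun s k => ∑ i ∈ I, v i s k) := by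
  classical
  induction I using Finset.induction_on with
  | empty =>
    refine ⟨fun k => by simpa using continuousOn_const, fun s0 hs0 => ⟨fun _ => 0, ?_, ?_⟩⟩
    · intro m; simp
    · intro s hs k; simp
  | insert i I hi ih =>
    simp only [Finset.sum_insert hi]
    exact LC_add (hv i) ih

lemma LC_cv {d : ℕ} {T : ℝ} {v w : ℝ → Ix d → ℂ} (hv : LC T v) (hw : LC T w) :
    LC T (fun s => cv (v s) (w s)) := by
  constructor
  · intro k s hs
    obtain ⟨b, hb, h⟩ := hv.2 (s/2) (by linarith [hs.1])
    obtain ⟨b', hb', h'⟩ := hw.2 (s/2) (by linarith [hs.1])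
    have hfin : ∑' p, b p * b' (k - p) ≠ ∞ := by
      refine ne_top_of_le_ne_top (ENNReal.mul_ne_top (RE_tsum hb) (RE_tsum hb')) (cE_le b b' k)
    have hsub : Ioo (s/2) T ⊆ Ioo 0 T := fun x hx => ⟨by linarith [hx.1, hs.1], hx.2⟩
    have hco : ContinuousOn (fun s => ∑' p, v s p * w s (k - p)) (Ioo (s/2) T) := by
      refine continuousOn_tsum (u := fun p => (b p * b' (k - p)).toReal)
        (fun p => ((hv.1 p).mul (hw.1 (k - p))).mono hsub) (ENNReal.summable_toReal hfin) ?_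
      intro p x hx
      have : ‖v x p * w x (k - p)‖ₑ ≤ b p * b' (k - p) := by
        rw [enorm_mul]; exact mul_le_mul' (h x hx p) (h' x hx _)
      rw [← toReal_enorm]
      exact ENNReal.toReal_mono (ENNReal.ne_top_of_tsum_ne_top hfin p) this
    exact (hco.continuousAt (Ioo_mem_nhds (by linarith [hs.1]) hs.2)).continuousWithinAt
  · intro s0 hs0
    obtain ⟨b, hb, h⟩ := hv.2 s0 hs0
    obtain ⟨b', hb', h'⟩ := hw.2 s0 hs0
    refine ⟨_, RE_cE hb hb', fun s hs k => ?_⟩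
    unfold cv cE
    refine enorm_tsum_le_tsum_enorm.trans (ENNReal.tsum_le_tsum fun p => ?_)
    rw [enorm_mul]; exact mul_le_mul' (h s hs p) (h' s hs _)

lemma LC_Gq {d : ℕ} {T : ℝ} {v : ℝ → Ix d → ℂ} (hv : LC T v) : LC T (fun s => Gq (v s)) :=
  LC_sum Finset.univ fun l => LC_cv (LC_Dj hv l) (LC_Dj hv l)

lemma LC_FF {d : ℕ} {T : ℝ} {v : ℝ → Ix d → ℂ} (hv : LC T v) (j : Fin d) :
    LC T (fun s => FF (v s) j) :=
  LC_sub (LC_cv (LC_Gq hv) (LC_Dj hv j)) (LC_Dj hv j)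

lemma LC_NN {d : ℕ} {T : ℝ} {v : ℝ → Ix d → ℂ} (hv : LC T v) : LC T (fun s => NN (v s)) :=
  LC_sum Finset.univ fun j => LC_Dj (LC_FF hv j) j

lemma LC_of_bound {d : ℕ} (hd : 1 ≤ d) {T c : ℝ} (hc : 0 < c) {v : ℝ → Ix d → ℂ} {R : ℝ≥0∞} (hR : R ≠ ∞)
    (h1 : ∀ k, ContinuousOn (fun s => v s k) (Ioo 0 T))
    (h2 : ∀ s ∈ Ioo 0 T, ∑' k, WW c s (v s) k ≤ R * tw (-(1/4)) s) : LC T v := by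
  refine ⟨h1, fun s0 hs0 => ⟨_, RE_const (RE_exp hd (mul_pos hc hs0))
    (ENNReal.mul_ne_top hR (tw_ne_top (-(1/4)) s0)), fun s hs k => ?_⟩⟩
  have hs' : 0 < s := hs0.trans hs.1
  have h3 : om c s k * ‖v s k‖ₑ ≤ R * tw (-(1/4)) s0 := by
    calc om c s k * ‖v s k‖ₑ ≤ JE k * (om c s k * ‖v s k‖ₑ) := le_mul_of_one_le_left' (one_le_JE k)
      _ = WW c s (v s) k := by unfold WW; ring
      _ ≤ ∑' k, WW c s (v s) k := ENNReal.le_tsum k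
      _ ≤ _ := h2 s ⟨hs', hs.2⟩
      _ ≤ _ := by gcongr; exact tw_anti hs0 hs.1.le (by norm_num)
  have h4 : ENNReal.ofReal (Real.exp (-(c * s0 * ‖k‖))) * om c s k ≥ 1 := by
    unfold om
    rw [← ENNReal.ofReal_mul (by positivity), ← Real.exp_add, ge_iff_le, ENNReal.one_le_ofReal]
    apply Real.one_le_exp
    have : c * s0 * ‖k‖ ≤ c * s * ‖k‖ := by gcongr; exact hs.1.le
    linarith
  calc ‖v s k‖ₑ ≤ (ENNReal.ofReal (Real.exp (-(c * s0 * ‖k‖))) * om c s k) * ‖v s k‖ₑ :=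
        le_mul_of_one_le_left' h4
    _ = ENNReal.ofReal (Real.exp (-(c * s0 * ‖k‖))) * (om c s k * ‖v s k‖ₑ) := by ring
    _ ≤ ENNReal.ofReal (Real.exp (-(c * s0 * ‖k‖))) * (R * tw (-(1/4)) s0) := mul_le_mul_right h3 _
    _ = _ := by ring

structure Good {d : ℕ} (c T : ℝ) (M : ℝ≥0∞) (r : ℝ → ℝ≥0∞) (u : ℝ → Ix d → ℂ) : Prop where
  co : ∀ k, ContinuousOn (fun s => u s k) (Ioo 0 T)
  n1 : ∀ s ∈ Ioo 0 T, ∑' k, WW c s (u s) k ≤ r s * tw (-(1/4)) s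
  s2 : ∀ s ∈ Ioo 0 T, S2 (WW c s (u s)) ≤ M * tw (-(1/2)) s

lemma Good_LC {d : ℕ} (hd : 1 ≤ d) {c T : ℝ} (hc : 0 < c) {M : ℝ≥0∞} {r : ℝ → ℝ≥0∞} {u : ℝ → Ix d → ℂ}
    (h : Good c T M r u) (hr : Monotone r) (hrT : r T ≠ ∞) : LC T u :=
  LC_of_bound hd hc hrT h.co fun s hs => (h.n1 s hs).trans (by gcongr; exact hr hs.2.le)

lemma GW_bd1 {d : ℕ} {c T t s : ℝ} (hc : 0 < c) {M : ℝ≥0∞} {r : ℝ → ℝ≥0∞} {u : ℝ → Ix d → ℂ}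
    (h : Good c T M r u) (hr : Monotone r) (ht : t < T) (hs : s ∈ Ioo 0 t) :
    ∑' k, GW c s (FF (u s)) k ≤ (d * (d * r t ^ 2 + tw (1/2) t)) * r t * tw (-(3/4)) s := by
  refine (GW_sum hc.le hs.1.le (u s)).trans ?_
  have h1 : ∑' k, WW c s (u s) k ≤ r t * tw (-(1/4)) s :=
    (h.n1 s ⟨hs.1, hs.2.trans ht⟩).trans (by gcongr; exact hr hs.2.le)
  have e1 : tw (-(1/4)) s ^ 3 = tw (-(3/4)) s := by rw [tw_pow hs.1]; norm_num
  have e2 : tw (-(1/4)) s = tw (1/2) s * tw (-(3/4)) s := by rw [tw_mul hs.1]; norm_num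
  calc _ ≤ (d:ℝ≥0∞) * (d * (r t * tw (-(1/4)) s) ^ 3 + r t * tw (-(1/4)) s) := by gcongr
    _ = (d * (d * r t ^ 2 + tw (1/2) s)) * r t * tw (-(3/4)) s := by
        rw [mul_pow, e1, e2]; ring
    _ ≤ _ := by
        have := tw_mono hs.1 hs.2.le (p := 1/2) (by norm_num)
        gcongr

lemma GW_bd2 {d : ℕ} {c T t s : ℝ} (hc : 0 < c) {M : ℝ≥0∞} {r : ℝ → ℝ≥0∞} {u : ℝ → Ix d → ℂ}
    (h : Good c T M r u) (hr : Monotone r) (ht : t < T) (hs : s ∈ Ioo 0 t) :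
    S2 (GW c s (FF (u s))) ≤ (Kd d * (r t ^ 4 + tw 1 t)) * M * tw (-(3/2)) s := by
  refine (GW_S2 hc.le hs.1.le (u s)).trans ?_
  have hsT : s ∈ Ioo 0 T := ⟨hs.1, hs.2.trans ht⟩
  have h1 : ∑' k, WW c s (u s) k ≤ r t * tw (-(1/4)) s :=
    (h.n1 s hsT).trans (by gcongr; exact hr hs.2.le)
  have e1 : tw (-(1/4)) s ^ 4 = tw (-1) s := by rw [tw_pow hs.1]; norm_num
  have e2 : 1 = tw 1 s * tw (-1) s := by rw [tw_mul hs.1]; norm_num [tw_zero]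
  have e3 : tw (-1) s * tw (-(1/2)) s = tw (-(3/2)) s := by rw [tw_mul hs.1]; norm_num
  calc _ ≤ Kd d * (((r t * tw (-(1/4)) s) ^ 4 + 1) * (M * tw (-(1/2)) s)) := by
        gcongr; exact h.s2 s hsT
    _ = Kd d * (r t ^ 4 + tw 1 s) * M * (tw (-1) s * tw (-(1/2)) s) := by
        rw [mul_pow, e1]
        nth_rewrite 1 [e2]
        ring
    _ ≤ _ := by
        rw [e3]
        have := tw_mono hs.1 hs.2.le (p := 1) (by norm_num)
        gcongr

lemma GW_bd3 {d : ℕ} {c T t s : ℝ} (hc : 0 < c) {M : ℝ≥0∞} {r : ℝ → ℝ≥0∞} {u v : ℝ → Ix d → ℂ}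
    (hu : Good c T M r u) (hv : Good c T M r v) (hr : Monotone r) (hrT : r T ≠ ∞)
    (ht : t < T) (hs : s ∈ Ioo 0 t) {ε : ℝ≥0∞}
    (he : ∑' k, WW c s (fun k => u s k - v s k) k ≤ ε * tw (-(1/4)) s) :
    ∑' k, GW c s (fun j k => FF (u s) j k - FF (v s) j k) k ≤
      (d * (3 * d * r t ^ 2 + tw (1/2) t)) * ε * tw (-(3/4)) s := by
  have hsT : s ∈ Ioo 0 T := ⟨hs.1, hs.2.trans ht⟩
  have hrt : r t ≠ ∞ := ne_top_of_le_ne_top hrT (hr ht.le)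
  have h1 : ∀ {w : ℝ → Ix d → ℂ}, Good c T M r w → ∑' k, WW c s (w s) k ≤ r t * tw (-(1/4)) s := fun h =>
    (h.n1 s hsT).trans (by gcongr; exact hr hs.2.le)
  refine (GW_diff hc.le hs.1.le (ENNReal.mul_ne_top hrt (tw_ne_top _ _)) (h1 hu) (h1 hv)).trans ?_
  have e1 : tw (-(1/4)) s ^ 2 = tw (-(1/2)) s := by rw [tw_pow hs.1]; norm_num
  have e2 : 1 = tw (1/2) s * tw (-(1/2)) s := by rw [tw_mul hs.1]; norm_num [tw_zero]
  have e3 : tw (-(1/2)) s * tw (-(1/4)) s = tw (-(3/4)) s := by rw [tw_mul hs.1]; norm_num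
  calc _ ≤ (d:ℝ≥0∞) * ((3 * d * (r t * tw (-(1/4)) s) ^ 2 + 1) * (ε * tw (-(1/4)) s)) := by gcongr
    _ = (d * (3 * d * r t ^ 2 + tw (1/2) s)) * ε * (tw (-(1/2)) s * tw (-(1/4)) s) := by
        rw [mul_pow, e1]
        nth_rewrite 1 [e2]
        ring
    _ ≤ _ := by
        rw [e3]
        have := tw_mono hs.1 hs.2.le (p := 1/2) (by norm_num)
        gcongr

lemma GW_meas {d : ℕ} {c T t : ℝ} (F : ℝ → Fin d → Ix d → ℂ)
    (hF : ∀ j k, ContinuousOn (fun s => F s j k) (Ioo 0 T)) (ht : t ≤ T) (k : Ix d) :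
    AEMeasurable (fun s => GW c s (F s) k) (volume.restrict (Ioo 0 t)) := by
  unfold GW
  refine Finset.aemeasurable_fun_sum _ fun j _ => ?_
  have h1 : AEMeasurable (fun s => om c s k) (volume.restrict (Ioo 0 t)) := by
    unfold om
    fun_prop
  have h2 : AEMeasurable (fun s => ‖F s j k‖ₑ) (volume.restrict (Ioo 0 t)) := (((hF j k).mono (Ioo_subset_Ioo_right ht)).aestronglyMeasurable measurableSet_Ioo).enorm
  exact h1.mul h2

lemma WW_add {d : ℕ} {c t : ℝ} (u v : Ix d → ℂ) (k : Ix d) :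
    WW c t (fun k => u k + v k) k ≤ WW c t u k + WW c t v k := by
  unfold WW
  rw [← mul_add]
  gcongr
  exact enorm_add_le _ _

lemma NN_bd {d : ℕ} {c T t s : ℝ} (hc : 0 < c) {M : ℝ≥0∞} {r : ℝ → ℝ≥0∞} {u : ℝ → Ix d → ℂ}
    (h : Good c T M r u) (hr : Monotone r) (ht : t < T) (hs : s ∈ Ioo 0 t) (k : Ix d) :
    ‖NN (u s) k‖ₑ ≤ JE k * ((d * (d * r t ^ 2 + tw (1/2) t)) * r t) * tw (-(3/4)) s := by
  have h1 := (ENNReal.le_tsum k).trans (GW_bd1 hc h hr ht hs)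
  unfold NN
  refine (enorm_sum_le _ _).trans ?_
  rw [mul_assoc (JE k)]
  refine le_trans ?_ (mul_le_mul_right h1 _)
  unfold GW
  rw [Finset.mul_sum]
  refine Finset.sum_le_sum fun j _ => ?_
  refine (enorm_Dj j _ k).trans ?_
  refine mul_le_mul' ?_ (enorm_le_of_om hc.le hs.1.le k _)
  unfold JE
  apply ENNReal.ofReal_le_ofReal
  linarith

lemma tw_int {t : ℝ} (ht : 0 < t) : ∫⁻ s in Ioo 0 t, tw (-(3/4)) s ≠ ∞ := by
  obtain ⟨C, hC, h⟩ := beta_bd 0 (3/4) (by norm_num) (by norm_num) (by norm_num) (by norm_num)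
  have := h t ht
  simp only [neg_zero, Real.rpow_zero, ENNReal.ofReal_one, one_mul] at this
  exact ne_top_of_le_ne_top ENNReal.ofReal_ne_top this

lemma NN_int {d : ℕ} (hd : 1 ≤ d) {c T t : ℝ} (hc : 0 < c) {M : ℝ≥0∞} {r : ℝ → ℝ≥0∞} {u : ℝ → Ix d → ℂ}
    (h : Good c T M r u) (hr : Monotone r) (hrT : r T ≠ ∞) (ht0 : 0 < t) (ht : t < T) (k : Ix d) :
    IntervalIntegrable (fun s => NN (u s) k) volume 0 t := by
  rw [intervalIntegrable_iff_integrableOn_Ioo_of_le ht0.le]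
  refine ⟨(((LC_NN (Good_LC hd hc h hr hrT)).1 k).mono (Ioo_subset_Ioo_right ht.le)).aestronglyMeasurable
    measurableSet_Ioo, ?_⟩
  unfold HasFiniteIntegral
  have hrt : r t ≠ ∞ := ne_top_of_le_ne_top hrT (hr ht.le)
  have : ∫⁻ s in Ioo 0 t, JE k * ((d * (d * r t ^ 2 + tw (1/2) t)) * r t) * tw (-(3/4)) s < ∞ := by
    have hfin : JE k * ((d * (d * r t ^ 2 + tw (1/2) t)) * r t) ≠ ∞ := by
      refine ENNReal.mul_ne_top (JE_ne_top k) (ENNReal.mul_ne_top (ENNReal.mul_ne_top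
        (ENNReal.natCast_ne_top _) (ENNReal.add_ne_top.mpr ⟨ENNReal.mul_ne_top
        (ENNReal.natCast_ne_top _) (ENNReal.pow_ne_top hrt), tw_ne_top _ _⟩)) hrt)
    rw [lintegral_const_mul' _ _ hfin]
    exact ENNReal.mul_lt_top hfin.lt_top (tw_int ht0).lt_top
  exact lt_of_le_of_lt (setLIntegral_mono' measurableSet_Ioo fun s hs => NN_bd hc h hr ht hs k) this

def Phi {d : ℕ} (ν : ℝ) (a : Ix d → ℂ) (u : ℝ → Ix d → ℂ) (t : ℝ) (k : Ix d) : ℂ :=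
  ((Real.exp (-(Lk ν k * t)) : ℝ) : ℂ) * a k + Du ν (fun s => FF (u s)) t k

lemma Du_eq {d : ℕ} (ν : ℝ) (u : ℝ → Ix d → ℂ) (t : ℝ) (k : Ix d) :
    Du ν (fun s => FF (u s)) t k = ((Real.exp (-(Lk ν k * t)) : ℝ) : ℂ) *
      ∫ s in (0:ℝ)..t, ((Real.exp (Lk ν k * s) : ℝ) : ℂ) * NN (u s) k := by
  unfold Du
  rw [← intervalIntegral.integral_const_mul]
  congr 1
  funext s
  rw [← mul_assoc, ← Complex.ofReal_mul, ← Real.exp_add]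
  unfold NN
  congr 3
  ring_nf

lemma Phi_deriv {d : ℕ} (hd : 1 ≤ d) {ν T t : ℝ} (hν : 0 < ν) {M : ℝ≥0∞} {r : ℝ → ℝ≥0∞} {u : ℝ → Ix d → ℂ}
    (a : Ix d → ℂ)
    (h : Good (ν/2) T M r u) (hr : Monotone r) (hrT : r T ≠ ∞) (ht : t ∈ Ioo 0 T) (k : Ix d) :
    HasDerivAt (fun t => Phi ν a u t k) (-(Lk ν k : ℂ) * Phi ν a u t k + NN (u t) k) t := by
  have hc : 0 < ν / 2 := by positivity
  have hcont := (LC_NN (Good_LC hd hc h hr hrT)).1 k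
  have hexpc : Continuous (fun s : ℝ => ((Real.exp (Lk ν k * s) : ℝ) : ℂ)) := by fun_prop
  have hint : IntervalIntegrable (fun s => ((Real.exp (Lk ν k * s) : ℝ) : ℂ) * NN (u s) k) volume 0 t :=
    (NN_int hd hc h hr hrT ht.1 ht.2 k).continuousOn_mul hexpc.continuousOn
  have hco : ContinuousOn (fun s => ((Real.exp (Lk ν k * s) : ℝ) : ℂ) * NN (u s) k) (Ioo 0 T) :=
    hexpc.continuousOn.mul hcont
  have hnh : Ioo 0 T ∈ nhds t := Ioo_mem_nhds ht.1 ht.2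
  have h1 := intervalIntegral.integral_hasDerivAt_right hint
    (hco.stronglyMeasurableAtFilter isOpen_Ioo t ht) (hco.continuousAt hnh)
  have h2 : HasDerivAt (fun t : ℝ => ((Real.exp (-(Lk ν k * t)) : ℝ) : ℂ))
      (((Real.exp (-(Lk ν k * t)) * (-(Lk ν k)) : ℝ) : ℂ)) t := by
    have : HasDerivAt (fun t : ℝ => Real.exp (-(Lk ν k * t))) (Real.exp (-(Lk ν k * t)) * (-(Lk ν k))) t := by
      have h3 : HasDerivAt (fun t : ℝ => -(Lk ν k * t)) (-(Lk ν k)) t := by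
        have := ((hasDerivAt_id t).const_mul (Lk ν k)).fun_neg
        simpa using this
      exact h3.exp
    exact this.ofReal_comp
  have h4 := (h2.mul_const (a k)).add (h2.mul h1)
  have e : (fun t => Phi ν a u t k) = (fun t => ((Real.exp (-(Lk ν k * t)) : ℝ) : ℂ) * a k +
      ((Real.exp (-(Lk ν k * t)) : ℝ) : ℂ) *
      ∫ s in (0:ℝ)..t, ((Real.exp (Lk ν k * s) : ℝ) : ℂ) * NN (u s) k) := by
    funext t; unfold Phi; rw [Du_eq]
  rw [e]
  refine h4.congr_deriv ?_
  unfold Phi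
  rw [Du_eq, ← mul_assoc (_ : ℂ) _ (NN (u t) k), ← Complex.ofReal_mul (Real.exp _) (Real.exp _), ← Real.exp_add]
  simp
  ring

lemma Phi_diff {d : ℕ} (hd : 1 ≤ d) {ν T t : ℝ} (hν : 0 < ν) {M : ℝ≥0∞} {r : ℝ → ℝ≥0∞} {u v : ℝ → Ix d → ℂ}
    (a : Ix d → ℂ)
    (hu : Good (ν/2) T M r u) (hv : Good (ν/2) T M r v)
    (hr : Monotone r) (hrT : r T ≠ ∞) (ht : t ∈ Ioo 0 T) (k : Ix d) :
    Phi ν a u t k - Phi ν a v t k = Du ν (fun s j k => FF (u s) j k - FF (v s) j k) t k := by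
  have hc : 0 < ν / 2 := by positivity
  have hexpc : Continuous (fun s : ℝ => ((Real.exp (-(Lk ν k * (t - s))) : ℝ) : ℂ)) := by fun_prop
  have h1 := (NN_int hd hc hu hr hrT ht.1 ht.2 k).continuousOn_mul hexpc.continuousOn
  have h2 := (NN_int hd hc hv hr hrT ht.1 ht.2 k).continuousOn_mul hexpc.continuousOn
  unfold Phi
  rw [add_sub_add_left_eq_sub]
  unfold Du
  unfold NN at h1 h2
  rw [← intervalIntegral.integral_sub h1 h2]
  congr 1
  funext s
  rw [← mul_sub, ← Finset.sum_sub_distrib]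
  congr 1
  exact Finset.sum_congr rfl fun j _ => (Dj_sub j _ _ k).symm

def lin {d : ℕ} (ν : ℝ) (a : Ix d → ℂ) (t : ℝ) (k : Ix d) : ℂ :=
  ((Real.exp (-(Lk ν k * t)) : ℝ) : ℂ) * a k

def BB (ν : ℝ) (B : ℝ≥0∞) : Prop := ∀ t : ℝ, 0 < t →
    (∫⁻ s in Ioo 0 t, ENNReal.ofReal (2 * (ν / 2) ^ (-(1/2) : ℝ) * (t - s) ^ (-(1/2) : ℝ)) *
      tw (-(3/4)) s ≤ B * tw (-(1/4)) t) ∧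
    (∫⁻ s in Ioo 0 t, ENNReal.ofReal (ν ^ (-(1/4) : ℝ) * (t - s) ^ (-(1/4) : ℝ)) *
      tw (-(3/4)) s ≤ B)

structure Par {d : ℕ} (ν T : ℝ) (M M0 B : ℝ≥0∞) (r : ℝ → ℝ≥0∞) (a : Ix d → ℂ) : Prop where
  hd : 1 ≤ d
  hν : 0 < ν
  hr : Monotone r
  hrT : r T ≠ ∞
  hM : M = 4 * M0
  hB : BB ν B
  l1 : ∀ t ∈ Ioo 0 T, ∑' k, WW (ν/2) t (lin ν a t) k ≤ 2⁻¹ * r t * tw (-(1/4)) t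
  l2 : ∀ t ∈ Ioo 0 T, S2 (WW (ν/2) t (lin ν a t)) ≤ M0 * tw (-(1/2)) t
  b1 : B * (d * (3 * d * r T ^ 2 + tw (1/2) T)) ≤ 2⁻¹
  b2 : 2 * (Kd d * (r T ^ 4 + tw 1 T)) * B ^ 2 ≤ 2⁻¹

lemma FFcont {d : ℕ} {ν T : ℝ} {M M0 B : ℝ≥0∞} {r : ℝ → ℝ≥0∞} {a : Ix d → ℂ}
    (P : Par ν T M M0 B r a) {u : ℝ → Ix d → ℂ} (h : Good (ν/2) T M r u) (j : Fin d) (k : Ix d) :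
    ContinuousOn (fun s => FF (u s) j k) (Ioo 0 T) :=
  (LC_FF (Good_LC P.hd (by have := P.hν; positivity) h P.hr P.hrT) j).1 k

lemma Du_n1 {d : ℕ} {ν t : ℝ} (hν : 0 < ν) {B : ℝ≥0∞} (hB : BB ν B) {G : ℝ → Fin d → Ix d → ℂ}
    (hG : ∀ j k, ContinuousOn (fun s => G s j k) (Ioo 0 t)) (ht : 0 < t) {A : ℝ≥0∞}
    (hA : ∀ s ∈ Ioo 0 t, ∑' k, GW (ν/2) s (G s) k ≤ A * tw (-(3/4)) s) :
    ∑' k, WW (ν/2) t (Du ν G t) k ≤ B * A * tw (-(1/4)) t := by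
  refine (ENNReal.tsum_le_tsum fun k => Du_W hν G ht k).trans ?_
  refine (sum1 (by fun_prop) (fun k => GW_meas G hG le_rfl k) hA).trans ?_
  calc _ ≤ A * (B * tw (-(1/4)) t) := mul_le_mul_right (hB t ht).1 _
    _ = _ := by ring

lemma Du_s2 {d : ℕ} {ν t : ℝ} (hν : 0 < ν) {B : ℝ≥0∞} (hB : BB ν B) {G : ℝ → Fin d → Ix d → ℂ}
    (hG : ∀ j k, ContinuousOn (fun s => G s j k) (Ioo 0 t)) (ht : 0 < t) {A : ℝ≥0∞}
    (hA : ∀ s ∈ Ioo 0 t, S2 (GW (ν/2) s (G s)) ≤ A * tw (-(3/2)) s) :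
    S2 (WW (ν/2) t (Du ν G t)) ≤ A * B ^ 2 * tw (-(1/2)) t := by
  refine (S2_mono fun k => Du_W hν G ht k).trans ?_
  refine (sum2 (by fun_prop) (fun k => GW_meas G hG le_rfl k) hA).trans ?_
  have e : tw (-(1/4)) t ^ 2 = tw (-(1/2)) t := by rw [tw_pow ht]; norm_num
  calc _ ≤ A * (B * tw (-(1/4)) t) ^ 2 := mul_le_mul_right (pow_le_pow_left' (hB t ht).1 2) _
    _ = _ := by rw [mul_pow, e]; ring

lemma Du_h2 {d : ℕ} {ν t : ℝ} (hν : 0 < ν) {B : ℝ≥0∞} (hB : BB ν B) {G : ℝ → Fin d → Ix d → ℂ}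
    (hG : ∀ j k, ContinuousOn (fun s => G s j k) (Ioo 0 t)) (ht : 0 < t) {A : ℝ≥0∞}
    (hA : ∀ s ∈ Ioo 0 t, S2 (GW (ν/2) s (G s)) ≤ A * tw (-(3/2)) s) :
    S2 (fun k => ‖Du ν G t k‖ₑ) ≤ A * B ^ 2 := by
  refine (S2_mono fun k => Du_H hν G ht k).trans ?_
  refine (sum2 (by fun_prop) (fun k => GW_meas G hG le_rfl k) hA).trans ?_
  exact mul_le_mul_right (pow_le_pow_left' (hB t ht).2 2) _

lemma Phi_good {d : ℕ} {ν T : ℝ} {M M0 B : ℝ≥0∞} {r : ℝ → ℝ≥0∞} {a : Ix d → ℂ}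
    (P : Par ν T M M0 B r a) {u : ℝ → Ix d → ℂ} (h : Good (ν/2) T M r u) :
    Good (ν/2) T M r (Phi ν a u) := by
  have hν := P.hν
  have hc : 0 < ν / 2 := by positivity
  refine ⟨fun k t ht => (Phi_deriv P.hd P.hν a h P.hr P.hrT ht k).continuousAt.continuousWithinAt,
    fun t ht => ?_, fun t ht => ?_⟩
  · have hG : ∀ j k, ContinuousOn (fun s => FF (u s) j k) (Ioo 0 t) := fun j k =>
      (FFcont P h j k).mono (Ioo_subset_Ioo_right ht.2.le)
    have h1 := Du_n1 hν P.hB hG ht.1 (fun s hs => GW_bd1 hc h P.hr ht.2 hs)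
    calc _ ≤ ∑' k, (WW (ν/2) t (lin ν a t) k + WW (ν/2) t (Du ν (fun s => FF (u s)) t) k) :=
          ENNReal.tsum_le_tsum fun k => WW_add (lin ν a t) (Du ν (fun s => FF (u s)) t) k
      _ = _ := ENNReal.tsum_add
      _ ≤ 2⁻¹ * r t * tw (-(1/4)) t + 2⁻¹ * r t * tw (-(1/4)) t := by
          refine add_le_add (P.l1 t ht) (h1.trans ?_)
          rw [← mul_assoc B]
          refine mul_le_mul_left (mul_le_mul_left (le_trans ?_ P.b1) _) _
          have h2 : r t ≤ r T := P.hr ht.2.le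
          have h3 := tw_mono ht.1 ht.2.le (p := 1/2) (by norm_num)
          have h4 : (d:ℝ≥0∞) ≤ 3 * d := by
            calc (d:ℝ≥0∞) = 1 * d := by ring
              _ ≤ _ := by gcongr; norm_num
          gcongr
      _ = (2⁻¹ + 2⁻¹) * (r t * tw (-(1/4)) t) := by ring
      _ = _ := by rw [ENNReal.inv_two_add_inv_two, one_mul]
  · have hG : ∀ j k, ContinuousOn (fun s => FF (u s) j k) (Ioo 0 t) := fun j k =>
      (FFcont P h j k).mono (Ioo_subset_Ioo_right ht.2.le)
    have h1 := Du_s2 hν P.hB hG ht.1 (fun s hs => GW_bd2 hc h P.hr ht.2 hs)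
    calc _ ≤ S2 (fun k => WW (ν/2) t (lin ν a t) k + WW (ν/2) t (Du ν (fun s => FF (u s)) t) k) :=
          S2_mono fun k => WW_add (lin ν a t) (Du ν (fun s => FF (u s)) t) k
      _ ≤ _ := S2_add _ _
      _ ≤ 2 * (M0 * tw (-(1/2)) t + Kd d * (r t ^ 4 + tw 1 t) * M * B ^ 2 * tw (-(1/2)) t) :=
          mul_le_mul_right (add_le_add (P.l2 t ht) h1) _
      _ = (2 * M0 + (2 * (Kd d * (r t ^ 4 + tw 1 t)) * B ^ 2) * M) * tw (-(1/2)) t := by ring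
      _ ≤ (2 * M0 + 2⁻¹ * M) * tw (-(1/2)) t := by
          refine mul_le_mul_left (add_le_add le_rfl (mul_le_mul_left (le_trans ?_ P.b2) _)) _
          have h2 : r t ≤ r T := P.hr ht.2.le
          have h3 := tw_mono ht.1 ht.2.le (p := 1) (by norm_num)
          gcongr
      _ = _ := by
          rw [P.hM]
          have : (2⁻¹ : ℝ≥0∞) * (4 * M0) = 2 * M0 := by
            rw [← mul_assoc]
            congr 1
            rw [show (4:ℝ≥0∞) = 2 * 2 by norm_num, ← mul_assoc, ENNReal.inv_mul_cancel (by norm_num) (by norm_num),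
              one_mul]
          rw [this]; ring

lemma Phi_contr {d : ℕ} {ν T : ℝ} {M M0 B : ℝ≥0∞} {r : ℝ → ℝ≥0∞} {a : Ix d → ℂ}
    (P : Par ν T M M0 B r a) {u v : ℝ → Ix d → ℂ} (hu : Good (ν/2) T M r u) (hv : Good (ν/2) T M r v)
    {ε : ℝ≥0∞} (he : ∀ s ∈ Ioo 0 T, ∑' k, WW (ν/2) s (fun k => u s k - v s k) k ≤ ε * tw (-(1/4)) s) :
    ∀ s ∈ Ioo 0 T, ∑' k, WW (ν/2) s (fun k => Phi ν a u s k - Phi ν a v s k) k ≤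
      2⁻¹ * ε * tw (-(1/4)) s := by
  intro t ht
  have hν := P.hν
  have hc : 0 < ν / 2 := by positivity
  have hG : ∀ j k, ContinuousOn (fun s => FF (u s) j k - FF (v s) j k) (Ioo 0 t) := fun j k =>
      ((FFcont P hu j k).sub (FFcont P hv j k)).mono (Ioo_subset_Ioo_right ht.2.le)
  have h1 := Du_n1 (G := fun s j k => FF (u s) j k - FF (v s) j k) hν P.hB hG ht.1
    (fun s hs => GW_bd3 hc hu hv P.hr P.hrT ht.2 hs (he s ⟨hs.1, hs.2.trans ht.2⟩))
  have e : (fun k => Phi ν a u t k - Phi ν a v t k) =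
      Du ν (fun s j k => FF (u s) j k - FF (v s) j k) t := by
    funext k
    exact Phi_diff P.hd P.hν a hu hv P.hr P.hrT ht k
  rw [e]
  refine h1.trans ?_
  rw [← mul_assoc B]
  refine mul_le_mul_left (mul_le_mul_left (le_trans ?_ P.b1) _) _
  have h2 : r t ≤ r T := P.hr ht.2.le
  have h3 := tw_mono ht.1 ht.2.le (p := 1/2) (by norm_num)
  gcongr

def pic {d : ℕ} (ν : ℝ) (a : Ix d → ℂ) : ℕ → ℝ → Ix d → ℂ
  | 0 => fun _ _ => 0
  | n + 1 => Phi ν a (pic ν a n)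

lemma pic_good {d : ℕ} {ν T : ℝ} {M M0 B : ℝ≥0∞} {r : ℝ → ℝ≥0∞} {a : Ix d → ℂ}
    (P : Par ν T M M0 B r a) (n : ℕ) : Good (ν/2) T M r (pic ν a n) := by
  induction n with
  | zero =>
    refine ⟨fun k => continuousOn_const, fun s _ => ?_, fun s _ => ?_⟩
    · simp [pic, WW]
    · simp [pic, WW, S2]
  | succ n ih => exact Phi_good P ih

lemma pic_diff {d : ℕ} {ν T : ℝ} {M M0 B : ℝ≥0∞} {r : ℝ → ℝ≥0∞} {a : Ix d → ℂ}
    (P : Par ν T M M0 B r a) (j n : ℕ) : ∀ s ∈ Ioo 0 T,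
    ∑' k, WW (ν/2) s (fun k => pic ν a (j + n) s k - pic ν a n s k) k ≤
      2⁻¹ ^ n * r T * tw (-(1/4)) s := by
  induction n with
  | zero =>
    intro s hs
    simp only [pic, sub_zero, add_zero, pow_zero, one_mul]
    refine ((pic_good P j).n1 s hs).trans ?_
    gcongr
    exact P.hr hs.2.le
  | succ n ih =>
    intro s hs
    have := Phi_contr P (pic_good P (j + n)) (pic_good P n) ih s hs
    rw [pow_succ', mul_assoc (2⁻¹ : ℝ≥0∞)]
    exact this

lemma le_WW {d : ℕ} {c t : ℝ} (hc : 0 ≤ c) (ht : 0 ≤ t) (v : Ix d → ℂ) (k : Ix d) :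
    ‖v k‖ₑ ≤ WW c t v k := by
  unfold WW
  refine le_mul_of_one_le_left' ?_
  calc (1:ℝ≥0∞) = 1 * 1 := by ring
    _ ≤ _ := mul_le_mul' (one_le_JE k) (one_le_om hc ht k)

lemma half_tendsto {C : ℝ≥0∞} (hC : C ≠ ∞) :
    Tendsto (fun n : ℕ => (2⁻¹ : ℝ≥0∞) ^ n * C) atTop (nhds 0) := by
  have h := ENNReal.tendsto_pow_atTop_nhds_zero_of_lt_one (r := 2⁻¹) (by norm_num)
  have := ENNReal.Tendsto.mul_const h (b := C) (Or.inr hC)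
  simpa using this

lemma pic_cauchy {d : ℕ} {ν T : ℝ} {M M0 B : ℝ≥0∞} {r : ℝ → ℝ≥0∞} {a : Ix d → ℂ}
    (P : Par ν T M M0 B r a) {s : ℝ} (hs : s ∈ Ioo 0 T) (k : Ix d) :
    CauchySeq (fun n => pic ν a n s k) := by
  have hν := P.hν
  have hfin : r T * tw (-(1/4)) s ≠ ∞ := ENNReal.mul_ne_top P.hrT (tw_ne_top _ _)
  refine cauchySeq_of_le_tendsto_0' (fun n => ((2⁻¹ : ℝ≥0∞) ^ n * (r T * tw (-(1/4)) s)).toReal) ?_ ?_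
  · intro n m hnm
    obtain ⟨j, rfl⟩ := Nat.exists_eq_add_of_le' hnm
    rw [dist_comm, dist_eq_norm, ← toReal_enorm]
    refine ENNReal.toReal_mono (ENNReal.mul_ne_top (by simp) hfin) ?_
    have h := pic_diff P j n s hs
    rw [← mul_assoc]
    refine le_trans ?_ ((ENNReal.le_tsum k).trans h)
    exact le_WW (by positivity) hs.1.le (fun k => pic ν a (j + n) s k - pic ν a n s k) k
  · have := (ENNReal.tendsto_toReal ENNReal.zero_ne_top).comp (half_tendsto hfin)
    rw [ENNReal.toReal_zero] at this
    exact this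

lemma tsum_fatou {ι : Type*} {f : ℕ → ι → ℝ≥0∞} {g : ι → ℝ≥0∞} {C : ℝ≥0∞}
    (hf : ∀ i, Tendsto (fun n => f n i) atTop (nhds (g i))) (hC : ∀ n, ∑' i, f n i ≤ C) :
    ∑' i, g i ≤ C := by
  rw [ENNReal.tsum_eq_iSup_sum]
  refine iSup_le fun F => ?_
  refine le_of_tendsto' (tendsto_finsetSum F fun i _ => hf i) fun n => ?_
  exact (ENNReal.sum_le_tsum F).trans (hC n)

lemma WW_tendsto {d : ℕ} {c t : ℝ} {f : ℕ → Ix d → ℂ} {g : Ix d → ℂ} (k : Ix d)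
    (hf : Tendsto (fun n => f n k) atTop (nhds (g k))) :
    Tendsto (fun n => WW c t (f n) k) atTop (nhds (WW c t g k)) := by
  unfold WW
  refine ENNReal.Tendsto.const_mul (hf.enorm) (Or.inr ?_)
  exact ENNReal.mul_ne_top (JE_ne_top k) (om_ne_top _ _ k)

/-- the fixed point -/
lemma exists_fix {d : ℕ} {ν T : ℝ} {M M0 B : ℝ≥0∞} {r : ℝ → ℝ≥0∞} {a : Ix d → ℂ}
    (P : Par ν T M M0 B r a) : ∃ u : ℝ → Ix d → ℂ, Good (ν/2) T M r u ∧
      (∀ s ∈ Ioo 0 T, ∀ k, Tendsto (fun n => pic ν a n s k) atTop (nhds (u s k))) ∧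
      ∀ s ∈ Ioo 0 T, ∀ k, u s k = Phi ν a u s k := by
  have hν := P.hν
  have hc : 0 < ν / 2 := by positivity
  choose! u hu using fun (s : ℝ) (hs : s ∈ Ioo 0 T) (k : Ix d) =>
    cauchySeq_tendsto_of_complete (pic_cauchy P hs k)
  have hdiff : ∀ n, ∀ s ∈ Ioo 0 T, ∑' k, WW (ν/2) s (fun k => u s k - pic ν a n s k) k ≤
      2⁻¹ ^ n * r T * tw (-(1/4)) s := by
    intro n s hs
    refine tsum_fatou (f := fun j k => WW (ν/2) s (fun k => pic ν a (j + n) s k - pic ν a n s k) k)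
      (fun k => ?_) (fun j => pic_diff P j n s hs)
    refine WW_tendsto (f := fun j k => pic ν a (j + n) s k - pic ν a n s k)
      (g := fun k => u s k - pic ν a n s k) k ?_
    exact ((tendsto_add_atTop_iff_nat n).mpr (hu s hs k)).sub tendsto_const_nhds
  have hgood : Good (ν/2) T M r u := by
    refine ⟨fun k s hs => ?_, fun s hs => ?_, fun s hs => ?_⟩
    · have hunif : TendstoUniformlyOn (fun n s => pic ν a n s k) (fun s => u s k) atTop (Ioo (s/2) T) := by
        rw [EMetric.tendstoUniformlyOn_iff]
        intro ε hε
        have hfin : r T * tw (-(1/4)) (s/2) ≠ ∞ := ENNReal.mul_ne_top P.hrT (tw_ne_top _ _)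
        filter_upwards [(half_tendsto hfin).eventually_lt_const hε] with n hn x hx
        have hs2 : 0 < s / 2 := by linarith [hs.1]
        have hx' : x ∈ Ioo 0 T := ⟨hs2.trans hx.1, hx.2⟩
        refine lt_of_le_of_lt ?_ hn
        rw [edist_eq_enorm_sub]
        have h3 := (le_WW hc.le hx'.1.le (fun k => u x k - pic ν a n x k) k).trans
          ((ENNReal.le_tsum k).trans (hdiff n x hx'))
        refine h3.trans ?_
        rw [mul_assoc]
        have := tw_anti hs2 hx.1.le (p := -(1/4)) (by norm_num)
        gcongr
      have hco : ContinuousOn (fun s => u s k) (Ioo (s/2) T) := by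
        refine hunif.continuousOn (Frequently.of_forall fun n => ?_)
        exact ((pic_good P n).co k).mono (Ioo_subset_Ioo_left (by linarith [hs.1]))
      exact (hco.continuousAt (Ioo_mem_nhds (by linarith [hs.1]) hs.2)).continuousWithinAt
    · exact tsum_fatou (fun k => WW_tendsto (f := fun n => pic ν a n s) k (hu s hs k))
        (fun n => (pic_good P n).n1 s hs)
    · unfold S2
      refine tsum_fatou (f := fun n k => JE k ^ d * WW (ν/2) s (pic ν a n s) k ^ 2)
        (fun k => ?_) (fun n => (pic_good P n).s2 s hs)
      refine ENNReal.Tendsto.const_mul (ENNReal.Tendsto.pow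
        (WW_tendsto (f := fun n => pic ν a n s) k (hu s hs k))) (Or.inr (ENNReal.pow_ne_top (JE_ne_top k)))
  refine ⟨u, hgood, hu, fun s hs k => ?_⟩
  have hfin : r T * tw (-(1/4)) s ≠ ∞ := ENNReal.mul_ne_top P.hrT (tw_ne_top _ _)
  have h1 : ∀ n, ‖Phi ν a u s k - pic ν a (n+1) s k‖ₑ ≤ 2⁻¹ ^ (n+1) * (r T * tw (-(1/4)) s) := by
    intro n
    have := Phi_contr P hgood (pic_good P n) (hdiff n) s hs
    refine (le_WW hc.le hs.1.le (fun k => Phi ν a u s k - pic ν a (n+1) s k) k).trans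
      ((ENNReal.le_tsum k).trans (this.trans (le_of_eq ?_)))
    rw [pow_succ']; ring
  have h2 : Tendsto (fun n => pic ν a n s k) atTop (nhds (Phi ν a u s k)) := by
    rw [← tendsto_add_atTop_iff_nat 1, EMetric.tendsto_nhds]
    intro ε hε
    filter_upwards [((tendsto_add_atTop_iff_nat 1).mpr (half_tendsto hfin)).eventually_lt_const hε]
      with n hn
    rw [edist_comm, edist_eq_enorm_sub]
    exact (h1 n).trans_lt hn
  exact tendsto_nhds_unique (hu s hs k) h2

lemma lin_W {d : ℕ} {ν t : ℝ} (hν : 0 < ν) (ht : 0 ≤ t) (a : Ix d → ℂ) (k : Ix d) :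
    WW (ν/2) t (lin ν a t) k ≤ JE k * ENNReal.ofReal (Real.exp (-(ν/2 * ‖k‖ ^ 4 * t))) * ‖a k‖ₑ := by
  unfold WW lin om
  rw [enorm_mul, enorm_exp, ← mul_assoc, mul_assoc (JE k) (ENNReal.ofReal _)]
  refine mul_le_mul_left (mul_le_mul_right ?_ _) _
  rw [← ENNReal.ofReal_mul (by positivity)]
  apply ENNReal.ofReal_le_ofReal
  have := exp_weight hν ht k
  simpa using this

lemma exp_sqE (x : ℝ) : ENNReal.ofReal (Real.exp (-(x))) ^ 2 = ENNReal.ofReal (Real.exp (-(2 * x))) := by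
  rw [← ENNReal.ofReal_pow (by positivity), ← Real.exp_nat_mul]
  congr 2; push_cast; ring

lemma lin_s2 {d : ℕ} {ν t : ℝ} (hν : 0 < ν) (ht : 0 < t) (ht1 : t ≤ 1) (a : Ix d → ℂ) :
    S2 (WW (ν/2) t (lin ν a t)) ≤
      ENNReal.ofReal (1 + 3 * ν ^ (-(1/2) : ℝ)) * S2 (fun k => ‖a k‖ₑ) * tw (-(1/2)) t := by
  refine (S2_mono (lin_W hν ht.le a)).trans ?_
  unfold S2
  rw [← ENNReal.tsum_mul_left, ← ENNReal.tsum_mul_right]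
  refine ENNReal.tsum_le_tsum fun k => ?_
  have h : JE k ^ 2 * ENNReal.ofReal (Real.exp (-(ν/2 * ‖k‖ ^ 4 * t))) ^ 2 ≤
      ENNReal.ofReal (1 + 3 * ν ^ (-(1/2) : ℝ)) * tw (-(1/2)) t := by
    rw [exp_sqE]
    unfold JE tw
    rw [← ENNReal.ofReal_pow (by positivity), ← ENNReal.ofReal_mul (by positivity),
      ← ENNReal.ofReal_mul (by positivity)]
    apply ENNReal.ofReal_le_ofReal
    have e : 2 * (ν / 2 * ‖k‖ ^ 4 * t) = ν * ‖k‖ ^ 4 * t := by ring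
    rw [e]
    have h1 := heat2 ν ‖k‖ t hν (norm_nonneg k) ht
    have h2 : (1 + ‖k‖) ^ 2 ≤ 1 + 3 * ‖k‖ ^ 2 := by
      rcases norm_int k with h | h
      · rw [h]; norm_num
      · nlinarith
    have h3 : Real.exp (-(ν * ‖k‖ ^ 4 * t)) ≤ 1 := by
      apply Real.exp_le_one_iff.mpr
      have : 0 ≤ ν * ‖k‖ ^ 4 * t := by positivity
      linarith
    have h4 : 1 ≤ t ^ (-(1/2) : ℝ) := Real.one_le_rpow_of_pos_of_le_one_of_nonpos ht ht1 (by norm_num)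
    calc _ ≤ (1 + 3 * ‖k‖ ^ 2) * Real.exp (-(ν * ‖k‖ ^ 4 * t)) := by gcongr
      _ = Real.exp (-(ν * ‖k‖ ^ 4 * t)) + 3 * (‖k‖ ^ 2 * Real.exp (-(ν * ‖k‖ ^ 4 * t))) := by ring
      _ ≤ t ^ (-(1/2) : ℝ) + 3 * (ν ^ (-(1/2) : ℝ) * t ^ (-(1/2) : ℝ)) := by
          gcongr
          exact h3.trans h4
      _ = _ := by ring
  calc _ = JE k ^ d * ‖a k‖ₑ ^ 2 * (JE k ^ 2 * ENNReal.ofReal (Real.exp (-(ν/2 * ‖k‖ ^ 4 * t))) ^ 2) := by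
        ring
    _ ≤ JE k ^ d * ‖a k‖ₑ ^ 2 * (ENNReal.ofReal (1 + 3 * ν ^ (-(1/2) : ℝ)) * tw (-(1/2)) t) :=
        mul_le_mul_right h _
    _ = _ := by ring

lemma sq_le_half {x y : ℝ≥0∞} (h : x ^ 2 ≤ y) : x ≤ y ^ (1/2 : ℝ) := by
  have := ENNReal.rpow_le_rpow h (show (0:ℝ) ≤ 1/2 by norm_num)
  rw [← ENNReal.rpow_natCast, ← ENNReal.rpow_mul] at this
  norm_num at this
  simpa using this

lemma lin_n1 {d : ℕ} (hd : 1 ≤ d) {ν : ℝ} (hν : 0 < ν) : ∃ C : ℝ≥0∞, C ≠ ∞ ∧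
    ∀ t : ℝ, 0 < t → t ≤ 1 → ∀ α : Ix d → ℝ≥0∞,
    ∑' k, JE k * ENNReal.ofReal (Real.exp (-(ν/2 * ‖k‖ ^ 4 * t))) * α k ≤
      (C * S2 α) ^ (1/2 : ℝ) * tw (-(1/4)) t := by
  obtain ⟨C, hC, h⟩ := lat2 hd ν hν
  refine ⟨ENNReal.ofReal C, ENNReal.ofReal_ne_top, fun t ht ht1 α => ?_⟩
  have e4 : tw (-(1/4)) t = tw (-(1/2)) t ^ (1/2 : ℝ) := by
    unfold tw
    rw [ENNReal.ofReal_rpow_of_nonneg (by positivity) (by norm_num), ← Real.rpow_mul ht.le]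
    norm_num
  rw [e4, ← ENNReal.mul_rpow_of_nonneg _ _ (by norm_num)]
  apply sq_le_half
  have hrh0 : ∀ k : Ix d, rh k ≠ 0 := by
    intro k hk
    have := rh_sq k
    rw [hk] at this
    have h1 := one_le_JE k
    have h2 : JE k ^ d ≠ 0 := pow_ne_zero _ (by intro h0; rw [h0] at h1; simp at h1)
    apply h2
    rw [← this]; simp
  have hrht : ∀ k : Ix d, rh k ≠ ∞ := by
    intro k
    unfold rh
    exact ENNReal.rpow_ne_top_of_nonneg (by positivity) (JE_ne_top k)
  have h1 := cs_tsum (fun k : Ix d => JE k * ENNReal.ofReal (Real.exp (-(ν/2 * ‖k‖ ^ 4 * t))) * (rh k)⁻¹)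
    (fun k => rh k * α k)
  have e1 : ∀ k : Ix d, JE k * ENNReal.ofReal (Real.exp (-(ν/2 * ‖k‖ ^ 4 * t))) * (rh k)⁻¹ * (rh k * α k) =
      JE k * ENNReal.ofReal (Real.exp (-(ν/2 * ‖k‖ ^ 4 * t))) * α k := by
    intro k
    calc _ = JE k * ENNReal.ofReal (Real.exp (-(ν/2 * ‖k‖ ^ 4 * t))) * α k * ((rh k)⁻¹ * rh k) := by ring
      _ = _ := by rw [ENNReal.inv_mul_cancel (hrh0 k) (hrht k), mul_one]
  have e2 : ∀ k : Ix d, (JE k * ENNReal.ofReal (Real.exp (-(ν/2 * ‖k‖ ^ 4 * t))) * (rh k)⁻¹) ^ 2 =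
      ENNReal.ofReal ((1 + ‖k‖) ^ 2 / (1 + ‖k‖) ^ d * Real.exp (-(ν * ‖k‖ ^ 4 * t))) := by
    intro k
    rw [mul_pow, mul_pow, exp_sqE, ← ENNReal.inv_pow, rh_sq]
    unfold JE
    rw [← ENNReal.ofReal_pow (by positivity), ← ENNReal.ofReal_pow (by positivity),
      ← ENNReal.ofReal_inv_of_pos (by positivity), ← ENNReal.ofReal_mul (by positivity),
      ← ENNReal.ofReal_mul (by positivity)]
    congr 1
    rw [show 2 * (ν / 2 * ‖k‖ ^ 4 * t) = ν * ‖k‖ ^ 4 * t by ring]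
    ring
  simp only [e1, e2] at h1
  refine h1.trans ?_
  rw [← S2_eq]
  calc _ ≤ ENNReal.ofReal (C * t ^ (-(1/2) : ℝ)) * S2 α := mul_le_mul_left (h t ht ht1) _
    _ = _ := by
      rw [ENNReal.ofReal_mul hC.le]; unfold tw; ring

lemma tw_tendsto {p : ℝ} (hp : 0 < p) : Tendsto (tw p) (nhdsWithin 0 (Ioi 0)) (nhds 0) := by
  have h : Tendsto (fun s : ℝ => s ^ p) (nhdsWithin 0 (Ioi 0)) (nhds 0) := by
    have := (Real.continuousAt_rpow_const 0 p (Or.inr hp.le)).tendsto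
    rw [Real.zero_rpow hp.ne'] at this
    exact this.mono_left nhdsWithin_le_nhds
  have := ENNReal.tendsto_ofReal h
  rw [ENNReal.ofReal_zero] at this
  exact this

def Est {d : ℕ} (ν : ℝ) (a : Ix d → ℂ) (t : ℝ) : ℝ≥0∞ :=
  (∑' k, WW (ν/2) t (lin ν a t) k) * tw (1/4) t

lemma Est_tendsto {d : ℕ} (hd : 1 ≤ d) {ν : ℝ} (hν : 0 < ν) (a : Ix d → ℂ)
    (ha : S2 (fun k => ‖a k‖ₑ) ≠ ∞) : Tendsto (Est ν a) (nhdsWithin 0 (Ioi 0)) (nhds 0) := by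
  classical
  obtain ⟨C, hC, hN⟩ := lin_n1 hd hν
  rw [ENNReal.tendsto_nhds_zero]
  intro ε hε
  have hε2 : 0 < ε / 2 := ENNReal.half_pos hε.ne'
  have htail := ENNReal.tendsto_tsum_compl_atTop_zero (f := fun k => JE k ^ d * ‖a k‖ₑ ^ 2) ha
  have h1 : Tendsto (fun F : Finset (Ix d) => (C * ∑' b : {x // x ∉ F}, JE b.1 ^ d * ‖a b.1‖ₑ ^ 2) ^ (1/2:ℝ))
      atTop (nhds 0) := by
    have h2 := ENNReal.Tendsto.const_mul htail (a := C) (Or.inr hC)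
    have h3 := h2.ennrpow_const (1/2 : ℝ)
    simpa using h3
  obtain ⟨F, hF⟩ := (h1.eventually_le_const hε2).exists
  set α : Ix d → ℝ≥0∞ := fun k => if k ∈ F then 0 else ‖a k‖ₑ with hα
  have hS : S2 α = ∑' b : {x // x ∉ F}, JE b.1 ^ d * ‖a b.1‖ₑ ^ 2 := by
    have := tsum_subtype (fun x => x ∉ F) (fun k => JE k ^ d * ‖a k‖ₑ ^ 2)
    unfold S2
    refine Eq.trans (tsum_congr fun k => ?_) this.symm
    simp only [Set.indicator, hα]
    by_cases hk : k ∈ F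
    · rw [if_pos hk, if_neg (by exact fun h => h hk)]; simp
    · rw [if_neg hk, if_pos (by exact hk)]
  rw [← hS] at hF
  set X : ℝ≥0∞ := ∑ k ∈ F, JE k * ‖a k‖ₑ with hX
  have hXf : X ≠ ∞ := ENNReal.sum_ne_top.mpr fun k _ => ENNReal.mul_ne_top (JE_ne_top k) enorm_ne_top
  have hXt : Tendsto (fun t => X * tw (1/4) t) (nhdsWithin 0 (Ioi 0)) (nhds 0) := by
    have := ENNReal.Tendsto.const_mul (tw_tendsto (p := 1/4) (by norm_num)) (a := X) (Or.inr hXf)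
    simpa using this
  filter_upwards [hXt.eventually_le_const hε2, Ioc_mem_nhdsGT (show (0:ℝ) < 1 by norm_num)] with t h2 ht
  have hsplit : ∑' k, WW (ν/2) t (lin ν a t) k ≤ X + (C * S2 α) ^ (1/2:ℝ) * tw (-(1/4)) t := by
    refine le_trans ?_ (add_le_add_right (hN t ht.1 ht.2 α) X)
    have : X = ∑' k, if k ∈ F then JE k * ‖a k‖ₑ else 0 := by
      rw [tsum_eq_sum (s := F)]
      · rw [hX]; exact Finset.sum_congr rfl fun k hk => by rw [if_pos hk]
      · intro k hk; rw [if_neg hk]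
    rw [this, ← ENNReal.tsum_add]
    refine ENNReal.tsum_le_tsum fun k => (lin_W hν ht.1.le a k).trans ?_
    simp only [hα]
    by_cases hk : k ∈ F
    · rw [if_pos hk, if_pos hk, mul_zero, add_zero]
      refine mul_le_mul_left ?_ _
      refine mul_le_of_le_one_right' ?_
      rw [← ENNReal.ofReal_one]
      apply ENNReal.ofReal_le_ofReal
      apply Real.exp_le_one_iff.mpr
      have : 0 ≤ ν / 2 * ‖k‖ ^ 4 * t := by have := ht.1; positivity
      linarith
    · rw [if_neg hk, if_neg hk, zero_add]
  unfold Est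
  have e : tw (-(1/4)) t * tw (1/4) t = 1 := by rw [tw_mul ht.1]; norm_num [tw_zero]
  calc _ ≤ (X + (C * S2 α) ^ (1/2:ℝ) * tw (-(1/4)) t) * tw (1/4) t := mul_le_mul_left hsplit _
    _ = X * tw (1/4) t + (C * S2 α) ^ (1/2:ℝ) * (tw (-(1/4)) t * tw (1/4) t) := by ring
    _ ≤ ε / 2 + ε / 2 := by rw [e, mul_one]; exact add_le_add h2 hF
    _ = ε := ENNReal.add_halves ε

lemma exists_par {d : ℕ} (hd : 1 ≤ d) {ν : ℝ} (hν : 0 < ν) (a : Ix d → ℂ)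
    (ha : S2 (fun k => ‖a k‖ₑ) ≠ ∞) : ∃ (T : ℝ) (M M0 B : ℝ≥0∞) (r : ℝ → ℝ≥0∞),
    0 < T ∧ M ≠ ∞ ∧ B ≠ ∞ ∧ Tendsto r (nhdsWithin 0 (Ioi 0)) (nhds 0) ∧ Par ν T M M0 B r a := by
  obtain ⟨B, hB, hBB⟩ := kbound hν
  set r : ℝ → ℝ≥0∞ := fun t => 2 * ⨆ s ∈ Ioc 0 t, Est ν a s with hr
  have hmono : Monotone r := by
    intro s t hst
    simp only [hr]
    refine mul_le_mul_right ?_ _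
    exact biSup_mono fun x hx => ⟨hx.1, hx.2.trans hst⟩
  have hlim : Tendsto r (nhdsWithin 0 (Ioi 0)) (nhds 0) := by
    rw [ENNReal.tendsto_nhds_zero]
    intro ε hε
    have h := (ENNReal.tendsto_nhds_zero.mp (Est_tendsto hd hν a ha)) (ε/2) (ENNReal.half_pos hε.ne')
    rw [eventually_nhdsWithin_iff, Metric.eventually_nhds_iff] at h
    obtain ⟨δ, hδ, h⟩ := h
    filter_upwards [Ioo_mem_nhdsGT hδ] with t ht
    calc r t ≤ 2 * (ε / 2) := by
          simp only [hr]
          refine mul_le_mul_right (iSup₂_le fun s hs => h ?_ hs.1) _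
          rw [Real.dist_eq, sub_zero, abs_of_pos hs.1]
          exact hs.2.trans_lt ht.2
      _ = ε := ENNReal.mul_div_cancel (by norm_num) (by norm_num)
  have hd' : (d:ℝ≥0∞) ≠ ∞ := ENNReal.natCast_ne_top d
  have t1 : Tendsto (fun t => B * (d * (3 * d * r t ^ 2 + tw (1/2) t))) (nhdsWithin 0 (Ioi 0)) (nhds 0) := by
    have h2 : Tendsto (fun t => 3 * d * r t ^ 2 + tw (1/2) t) (nhdsWithin 0 (Ioi 0)) (nhds 0) := by
      have := (ENNReal.Tendsto.const_mul (ENNReal.Tendsto.pow (n := 2) hlim) (a := 3 * (d:ℝ≥0∞))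
        (Or.inr (ENNReal.mul_ne_top (by norm_num) hd'))).add (tw_tendsto (p := 1/2) (by norm_num))
      simpa using this
    have := ENNReal.Tendsto.const_mul (ENNReal.Tendsto.const_mul h2 (Or.inr hd')) (Or.inr hB)
    simpa using this
  have t2 : Tendsto (fun t => 2 * (Kd d * (r t ^ 4 + tw 1 t)) * B ^ 2) (nhdsWithin 0 (Ioi 0)) (nhds 0) := by
    have h2 : Tendsto (fun t => r t ^ 4 + tw 1 t) (nhdsWithin 0 (Ioi 0)) (nhds 0) := by
      have := (ENNReal.Tendsto.pow (n := 4) hlim).add (tw_tendsto (p := 1) (by norm_num))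
      simpa using this
    have := ENNReal.Tendsto.mul_const (ENNReal.Tendsto.const_mul (ENNReal.Tendsto.const_mul h2
      (Or.inr (Kd_ne_top d))) (a := 2) (Or.inr (by norm_num))) (b := B ^ 2) (Or.inr (ENNReal.pow_ne_top hB))
    simpa using this
  have hh : (0:ℝ≥0∞) < 2⁻¹ := by norm_num
  obtain ⟨T, h1, h2, h3, hT⟩ := ((t1.eventually_le_const hh).and ((t2.eventually_le_const hh).and
    ((hlim.eventually_le_const hh).and (Ioc_mem_nhdsGT (show (0:ℝ) < 1 by norm_num))))).exists
  refine ⟨T, 4 * (ENNReal.ofReal (1 + 3 * ν ^ (-(1/2) : ℝ)) * S2 (fun k => ‖a k‖ₑ)),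
    ENNReal.ofReal (1 + 3 * ν ^ (-(1/2) : ℝ)) * S2 (fun k => ‖a k‖ₑ), B, r, hT.1, ?_, hB, hlim, ?_⟩
  · exact ENNReal.mul_ne_top (by norm_num) (ENNReal.mul_ne_top ENNReal.ofReal_ne_top ha)
  refine ⟨hd, hν, hmono, ne_top_of_le_ne_top (by norm_num) h3, rfl, hBB, fun t ht => ?_,
    fun t ht => lin_s2 hν ht.1 (ht.2.le.trans hT.2) a, h1, h2⟩
  have e : tw (1/4) t * tw (-(1/4)) t = 1 := by rw [tw_mul ht.1]; norm_num [tw_zero]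
  calc _ = Est ν a t * tw (-(1/4)) t := by unfold Est; rw [mul_assoc, e, mul_one]
    _ ≤ _ := by
      refine mul_le_mul_left ?_ _
      simp only [hr]
      rw [← mul_assoc, ENNReal.inv_mul_cancel (by norm_num) (by norm_num), one_mul]
      exact le_iSup₂ (f := fun s (_ : s ∈ Ioc 0 t) => Est ν a s) t ⟨ht.1, le_rfl⟩

def Sy {d : ℕ} (c : Ix d → ℂ) : Prop := ∀ k, c (-k) = starRingEnd ℂ (c k)

lemma Sy_Dj {d : ℕ} {c : Ix d → ℂ} (h : Sy c) (j : Fin d) : Sy (Dj j c) := by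
  intro k
  unfold Dj
  rw [h k]
  simp

lemma Sy_cv {d : ℕ} {f g : Ix d → ℂ} (hf : Sy f) (hg : Sy g) : Sy (cv f g) := by
  intro k
  unfold cv
  rw [← (Equiv.neg (Ix d)).tsum_eq, Complex.conj_tsum]
  refine tsum_congr fun p => ?_
  have e : -k - (Equiv.neg (Ix d)) p = -(k - p) := by simp; ring
  rw [e, hg, map_mul]
  congr 1
  exact hf p

lemma Sy_sum {d : ℕ} {ι : Type*} (I : Finset ι) {f : ι → Ix d → ℂ} (hf : ∀ i, Sy (f i)) :
    Sy (fun k => ∑ i ∈ I, f i k) := by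
  intro k
  simp only [map_sum]
  exact Finset.sum_congr rfl fun i _ => hf i k

lemma Sy_sub {d : ℕ} {f g : Ix d → ℂ} (hf : Sy f) (hg : Sy g) : Sy (fun k => f k - g k) := by
  intro k
  simp only [map_sub, hf k, hg k]

lemma Sy_FF {d : ℕ} {c : Ix d → ℂ} (h : Sy c) (j : Fin d) : Sy (FF c j) :=
  Sy_sub (Sy_cv (Sy_sum _ fun l => Sy_cv (Sy_Dj h l) (Sy_Dj h l)) (Sy_Dj h j)) (Sy_Dj h j)

lemma Sy_NN {d : ℕ} {c : Ix d → ℂ} (h : Sy c) : Sy (NN c) :=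
  Sy_sum _ fun j => Sy_Dj (Sy_FF h j) j

lemma Lk_neg {d : ℕ} (ν : ℝ) (k : Ix d) : Lk ν (-k) = Lk ν k := by
  unfold Lk; simp

lemma Sy_Phi {d : ℕ} {ν : ℝ} {a : Ix d → ℂ} (ha : Sy a) {u : ℝ → Ix d → ℂ} (hu : ∀ s, Sy (u s)) (t : ℝ) :
    Sy (Phi ν a u t) := by
  intro k
  unfold Phi
  rw [Du_eq, Du_eq, Lk_neg, ha k, map_add, map_mul, map_mul, Complex.conj_ofReal]
  congr 2
  simp only [intervalIntegral, map_sub, ← integral_conj, map_mul, Complex.conj_ofReal, Sy_NN (hu _) k]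

lemma Sy_pic {d : ℕ} {ν : ℝ} {a : Ix d → ℂ} (ha : Sy a) (n : ℕ) (t : ℝ) : Sy (pic ν a n t) := by
  induction n generalizing t with
  | zero => intro k; simp [pic]
  | succ n ih => exact Sy_Phi ha ih t

lemma Sy_lim {d : ℕ} {f : ℕ → Ix d → ℂ} {g : Ix d → ℂ} (hf : ∀ n, Sy (f n))
    (h : ∀ k, Tendsto (fun n => f n k) atTop (nhds (g k))) : Sy g := by
  intro k
  have h1 := h (-k)
  have h2 := (Complex.continuous_conj.tendsto (g k)).comp (h k)
  refine tendsto_nhds_unique h1 (h2.congr fun n => ?_)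
  exact (hf n k).symm

def ek {d : ℕ} (k : Ix d) (x : Ed d) : ℂ := Complex.exp (Complex.I * ∑ i, (k i : ℂ) * (x i : ℂ))

def Fs {d : ℕ} (c : Ix d → ℂ) (x : Ed d) : ℂ := ∑' k, c k * ek k x

def REc {d : ℕ} (c : Ix d → ℂ) : Prop := RE (fun k => ‖c k‖ₑ)

lemma norm_ek {d : ℕ} (k : Ix d) (x : Ed d) : ‖ek k x‖ = 1 := by
  unfold ek
  have : Complex.I * ∑ i, (k i : ℂ) * (x i : ℂ) = ((∑ i, (k i : ℝ) * x i : ℝ) : ℂ) * Complex.I := by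
    push_cast; ring
  rw [this, Complex.norm_exp_ofReal_mul_I]

lemma ek_add {d : ℕ} (p q : Ix d) (x : Ed d) : ek (p + q) x = ek p x * ek q x := by
  unfold ek
  rw [← Complex.exp_add, ← mul_add, ← Finset.sum_add_distrib]
  congr 2
  refine Finset.sum_congr rfl fun i _ => ?_
  simp only [Pi.add_apply]
  push_cast; ring

lemma conj_ek {d : ℕ} (k : Ix d) (x : Ed d) : starRingEnd ℂ (ek k x) = ek (-k) x := by
  unfold ek
  rw [← Complex.exp_conj]
  congr 1
  simp [map_mul, map_sum]

lemma ek_per {d : ℕ} (k : Ix d) (j : Fin d) (x : Ed d) :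
    ek k (x + (2 * Real.pi) • EuclideanSpace.single j 1) = ek k x := by
  unfold ek
  have : Complex.I * ∑ i, (k i : ℂ) * (((x + (2 * Real.pi) • EuclideanSpace.single j 1 : Ed d) i : ℝ) : ℂ) =
      Complex.I * ∑ i, (k i : ℂ) * (x i : ℂ) + (k j : ℂ) * (2 * Real.pi * Complex.I) := by
    simp only [PiLp.add_apply, PiLp.smul_apply, PiLp.single_apply, smul_eq_mul]
    push_cast
    simp only [mul_add, Finset.sum_add_distrib, apply_ite Complex.ofReal, Complex.ofReal_one, Complex.ofReal_zero]
    simp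
    ring
  rw [this, Complex.exp_add, Complex.exp_int_mul_two_pi_mul_I, mul_one]

lemma REc_norm {d : ℕ} {c : Ix d → ℂ} (h : REc c) : Summable (fun k => ‖c k‖) := by
  have := ENNReal.summable_toReal (RE_tsum h)
  simpa only [toReal_enorm] using this

lemma REc_sum_norm {d : ℕ} {c : Ix d → ℂ} (h : REc c) (x : Ed d) : Summable (fun k => ‖c k * ek k x‖) := by
  simpa only [norm_mul, norm_ek, mul_one] using REc_norm h

lemma REc_sum {d : ℕ} {c : Ix d → ℂ} (h : REc c) (x : Ed d) : Summable (fun k => c k * ek k x) :=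
  (REc_sum_norm h x).of_norm

lemma REc_Dj {d : ℕ} {c : Ix d → ℂ} (h : REc c) (j : Fin d) : REc (Dj j c) := by
  refine RE_mono (RE_J h 1) fun k => ?_
  rw [pow_one]
  refine (enorm_Dj j c k).trans ?_
  gcongr
  unfold JE
  apply ENNReal.ofReal_le_ofReal
  linarith

lemma REc_sub {d : ℕ} {c c' : Ix d → ℂ} (h : REc c) (h' : REc c') : REc (fun k => c k - c' k) :=
  RE_mono (RE_add h h') fun k => enorm_sub_le

lemma REc_sumf {d : ℕ} {ι : Type*} (I : Finset ι) {c : ι → Ix d → ℂ} (h : ∀ i, REc (c i)) :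
    REc (fun k => ∑ i ∈ I, c i k) := by
  classical
  induction I using Finset.induction_on with
  | empty => intro m; simp
  | insert i I hi ih =>
    simp only [Finset.sum_insert hi]
    exact RE_mono (RE_add (h i) ih) fun k => enorm_add_le _ _

lemma REc_cv {d : ℕ} {c c' : Ix d → ℂ} (h : REc c) (h' : REc c') : REc (cv c c') := by
  refine RE_mono (RE_cE h h') fun k => ?_
  unfold cv cE
  refine enorm_tsum_le_tsum_enorm.trans (ENNReal.tsum_le_tsum fun p => ?_)
  rw [enorm_mul]

def Pj {d : ℕ} (j : Fin d) : Ed d →L[ℝ] ℂ := Complex.ofRealCLM.comp (EuclideanSpace.proj j)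

lemma Pj_apply {d : ℕ} (j : Fin d) (v : Ed d) : Pj j v = (v j : ℂ) := rfl

lemma norm_Pj {d : ℕ} (j : Fin d) : ‖(Pj j : Ed d →L[ℝ] ℂ)‖ ≤ 1 := by
  refine ContinuousLinearMap.opNorm_le_bound _ zero_le_one fun v => ?_
  rw [Pj_apply, Complex.norm_real, one_mul]
  exact PiLp.norm_apply_le v j

lemma ek_deriv {d : ℕ} (k : Ix d) (x : Ed d) :
    HasFDerivAt (ek k) (∑ j, (Complex.I * (k j : ℂ) * ek k x) • (Pj j : Ed d →L[ℝ] ℂ)) x := by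
  have h1 : HasFDerivAt (fun y : Ed d => Complex.I * ∑ i, (k i : ℂ) * (y i : ℂ))
      (∑ j, (Complex.I * (k j : ℂ)) • (Pj j : Ed d →L[ℝ] ℂ)) x := by
    have := (∑ j, (Complex.I * (k j : ℂ)) • (Pj j : Ed d →L[ℝ] ℂ)).hasFDerivAt (x := x)
    refine this.congr_of_eventuallyEq (Eventually.of_forall fun y => ?_)
    simp [Pj_apply, Finset.mul_sum, mul_assoc]
  have h2 := h1.cexp
  refine h2.congr_fderiv ?_
  rw [Finset.smul_sum]
  refine Finset.sum_congr rfl fun j _ => ?_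
  rw [smul_smul]
  congr 1
  unfold ek; ring

lemma Fs_deriv {d : ℕ} {c : Ix d → ℂ} (h : REc c) (x : Ed d) :
    HasFDerivAt (Fs c) (∑ j, Fs (Dj j c) x • (Pj j : Ed d →L[ℝ] ℂ)) x := by
  have hb : Summable (fun k => ∑ j, ‖Dj j c k‖) := summable_sum fun j _ => REc_norm (REc_Dj h j)
  have key := hasFDerivAt_tsum (𝕜 := ℝ) (f := fun k y => c k * ek k y)
    (f' := fun k y => ∑ j, (Dj j c k * ek k y) • (Pj j : Ed d →L[ℝ] ℂ)) hb
    (fun k y => by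
      have := (ek_deriv k y).const_mul (c k)
      refine this.congr_fderiv ?_
      rw [Finset.smul_sum]
      refine Finset.sum_congr rfl fun j _ => ?_
      rw [smul_smul]
      congr 1
      unfold Dj; ring)
    (fun k y => by
      refine (norm_sum_le _ _).trans (Finset.sum_le_sum fun j _ => ?_)
      rw [norm_smul, norm_mul, norm_ek, mul_one]
      exact mul_le_of_le_one_right (norm_nonneg _) (norm_Pj j))
    (x₀ := x) (REc_sum h x) x
  refine key.congr_fderiv ?_
  rw [Summable.tsum_finsetSum]
  · refine Finset.sum_congr rfl fun j _ => ?_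
    rw [Summable.tsum_smul_const (REc_sum (REc_Dj h j) x)]
    rfl
  · intro j _
    exact (REc_sum (REc_Dj h j) x).smul_const _

lemma Fs_contDiff {d : ℕ} (n : ℕ) : ∀ {c : Ix d → ℂ}, REc c → ContDiff ℝ n (Fs c) := by
  induction n with
  | zero =>
    intro c h
    exact contDiff_zero.mpr (continuous_iff_continuousAt.mpr fun x => (Fs_deriv h x).continuousAt)
  | succ n ih =>
    intro c h
    push_cast
    rw [contDiff_succ_iff_hasFDerivAt]
    refine ⟨_, ?_, fun x => Fs_deriv h x⟩
    exact ContDiff.sum fun j _ => (ih (REc_Dj h j)).smul contDiff_const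

/-- `f` is the (real) function with rapidly decaying coefficients `c` -/
def RR {d : ℕ} (f : Ed d → ℝ) (c : Ix d → ℂ) : Prop := REc c ∧ ∀ x, (f x : ℂ) = Fs c x

lemma RR_of_Sy {d : ℕ} {c : Ix d → ℂ} (h : REc c) (hs : Sy c) : RR (fun x => (Fs c x).re) c := by
  refine ⟨h, fun x => ?_⟩
  rw [← Complex.conj_eq_iff_re]
  unfold Fs
  rw [Complex.conj_tsum, ← (Equiv.neg (Ix d)).tsum_eq]
  refine tsum_congr fun k => ?_
  rw [map_mul, conj_ek]
  simp only [Equiv.neg_apply, neg_neg]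
  rw [hs k, Complex.conj_conj]

lemma RR_re {d : ℕ} {f : Ed d → ℝ} {c : Ix d → ℂ} (h : RR f c) : f = fun x => (Fs c x).re := by
  ext x; rw [← h.2 x, Complex.ofReal_re]

lemma RR_contDiff {d : ℕ} {f : Ed d → ℝ} {c : Ix d → ℂ} (h : RR f c) : ContDiff ℝ (⊤ : ℕ∞) f := by
  rw [RR_re h]
  rw [contDiff_infty]
  intro n
  exact Complex.reCLM.contDiff.comp (Fs_contDiff n h.1)

lemma RR_per {d : ℕ} {f : Ed d → ℝ} {c : Ix d → ℂ} (h : RR f c) : PeriodicSpace f := by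
  intro j x
  rw [RR_re h]
  simp only [Fs, ek_per]

lemma RR_pd {d : ℕ} {f : Ed d → ℝ} {c : Ix d → ℂ} (h : RR f c) (j : Fin d) : RR (pd f j) (Dj j c) := by
  refine ⟨REc_Dj h.1 j, fun x => ?_⟩
  have hf : DifferentiableAt ℝ f x := (RR_contDiff h).differentiable (by simp) x
  have h1 : HasFDerivAt (fun y => (f y : ℂ)) (Complex.ofRealCLM.comp (fderiv ℝ f x)) x :=
    Complex.ofRealCLM.hasFDerivAt.comp x hf.hasFDerivAt
  have h2 : HasFDerivAt (fun y => (f y : ℂ)) (∑ j, Fs (Dj j c) x • (Pj j : Ed d →L[ℝ] ℂ)) x := by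
    have e : (fun y => (f y : ℂ)) = Fs c := funext h.2
    rw [e]; exact Fs_deriv h.1 x
  have h3 := congrArg (fun L : Ed d →L[ℝ] ℂ => L (EuclideanSpace.single j 1)) (h1.unique h2)
  simp only [ContinuousLinearMap.comp_apply, sum_apply,
    smul_apply, Pj_apply, PiLp.single_apply] at h3
  simpa [pd, apply_ite Complex.ofReal] using h3

lemma RR_sub {d : ℕ} {f g : Ed d → ℝ} {c e : Ix d → ℂ} (h : RR f c) (h' : RR g e) :
    RR (fun x => f x - g x) (fun k => c k - e k) := by
  refine ⟨REc_sub h.1 h'.1, fun x => ?_⟩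
  unfold Fs
  push_cast
  rw [h.2, h'.2]
  simp only [sub_mul]
  rw [(REc_sum h.1 x).tsum_sub (REc_sum h'.1 x)]
  rfl

lemma RR_sum {d : ℕ} {ι : Type*} (I : Finset ι) {f : ι → Ed d → ℝ} {c : ι → Ix d → ℂ} (h : ∀ i, RR (f i) (c i)) :
    RR (fun x => ∑ i ∈ I, f i x) (fun k => ∑ i ∈ I, c i k) := by
  refine ⟨REc_sumf I fun i => (h i).1, fun x => ?_⟩
  unfold Fs
  push_cast
  simp only [Finset.sum_mul]
  rw [Summable.tsum_finsetSum fun i _ => REc_sum (h i).1 x]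
  exact Finset.sum_congr rfl fun i _ => (h i).2 x

lemma Fs_mul {d : ℕ} {c e : Ix d → ℂ} (h : REc c) (h' : REc e) (x : Ed d) :
    Fs c x * Fs e x = Fs (cv c e) x := by
  unfold Fs
  rw [tsum_mul_tsum_of_summable_norm (REc_sum_norm h x) (REc_sum_norm h' x)]
  let E : Ix d × Ix d ≃ Ix d × Ix d :=
    { toFun := fun z => (z.2, z.1 - z.2)
      invFun := fun z => (z.1 + z.2, z.1)
      left_inv := fun z => by simp
      right_inv := fun z => by simp }
  have hs : Summable (fun z : Ix d × Ix d => (c z.1 * ek z.1 x) * (e z.2 * ek z.2 x)) :=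
    summable_mul_of_summable_norm (f := fun k => c k * ek k x) (g := fun k => e k * ek k x)
      (REc_sum_norm h x) (REc_sum_norm h' x)
  have hs' := (E.summable_iff).mpr hs
  simp only [Function.comp_def] at hs'
  rw [← E.tsum_eq, Summable.tsum_prod hs']
  refine tsum_congr fun k => ?_
  unfold cv
  rw [← tsum_mul_right]
  refine tsum_congr fun p => ?_
  have : ek k x = ek p x * ek (k - p) x := by rw [← ek_add]; simp
  simp only [E, Equiv.coe_fn_mk]
  rw [this]; ring

lemma RR_mul {d : ℕ} {f g : Ed d → ℝ} {c e : Ix d → ℂ} (h : RR f c) (h' : RR g e) :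
    RR (fun x => f x * g x) (cv c e) := by
  refine ⟨REc_cv h.1 h'.1, fun x => ?_⟩
  push_cast
  rw [h.2, h'.2, Fs_mul h.1 h'.1]

lemma RR_slope {d : ℕ} {f : Ed d → ℝ} {c : Ix d → ℂ} (h : RR f c) : RR (slopeDiv f) (NN c) := by
  refine RR_sum Finset.univ fun j => RR_pd ?_ j
  have hG : RR (gradSq f) (Gq c) := by
    refine RR_sum Finset.univ fun l => ?_
    simpa only [sq] using RR_mul (RR_pd h l) (RR_pd h l)
  have := RR_sub (RR_mul hG (RR_pd h j)) (RR_pd h j)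
  have e : (fun y => (gradSq f y - 1) * pd f j y) = fun y => gradSq f y * pd f j y - pd f j y := by
    ext y; ring
  rw [e]; exact this

lemma RR_lapl {d : ℕ} {f : Ed d → ℝ} {c : Ix d → ℂ} (h : RR f c) :
    RR (lapl f) (fun k => -((∑ i, (k i : ℂ) ^ 2) * c k)) := by
  have : RR (lapl f) (fun k => ∑ j, Dj j (Dj j c) k) := RR_sum Finset.univ fun j => RR_pd (RR_pd h j) j
  convert this using 2 with k
  unfold Dj
  rw [Finset.sum_mul, ← Finset.sum_neg_distrib]
  refine Finset.sum_congr rfl fun j _ => ?_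
  linear_combination -(k j : ℂ)^2 * c k * Complex.I_sq

lemma RR_lapl2 {d : ℕ} {f : Ed d → ℝ} {c : Ix d → ℂ} (h : RR f c) (ν : ℝ) :
    RR (fun x => ν * lapl (lapl f) x) (fun k => (Lk ν k : ℂ) * c k) := by
  have h1 := RR_lapl (RR_lapl h)
  have e : (fun k : Ix d => (Lk ν k : ℂ) * c k) = fun k => (ν : ℂ) * -((∑ i, (k i : ℂ) ^ 2) * -((∑ i, (k i : ℂ) ^ 2) * c k)) := by
    ext k; unfold Lk; push_cast; ring
  rw [e]
  refine ⟨?_, fun x => ?_⟩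
  · have := RE_const (C := ‖(ν : ℂ)‖ₑ) h1.1 enorm_ne_top
    refine RE_mono this fun k => ?_
    rw [enorm_mul]
  · push_cast
    rw [h1.2 x]
    unfold Fs
    rw [← tsum_mul_left]
    exact tsum_congr fun k => by ring

lemma LC_REc {d : ℕ} {T : ℝ} {v : ℝ → Ix d → ℂ} (h : LC T v) {t : ℝ} (ht : t ∈ Ioo 0 T) : REc (v t) := by
  obtain ⟨b, hb, hh⟩ := h.2 (t/2) (by linarith [ht.1])
  exact RE_mono hb fun k => hh t ⟨by linarith [ht.1], ht.2⟩ k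

lemma Lk_bd {d : ℕ} (ν : ℝ) (k : Ix d) : ‖(Lk ν k : ℂ)‖ₑ ≤ ENNReal.ofReal (|ν| * (d:ℝ)^2) * JE k ^ 4 := by
  rw [← ofReal_norm, Complex.norm_real]
  unfold JE
  rw [← ENNReal.ofReal_pow (by positivity), ← ENNReal.ofReal_mul (by positivity)]
  apply ENNReal.ofReal_le_ofReal
  unfold Lk
  rw [norm_mul, Real.norm_eq_abs, mul_assoc, norm_pow]
  have h1 : ∑ i, (k i : ℝ) ^ 2 ≤ d * (1 + ‖k‖) ^ 2 := by
    calc _ ≤ ∑ i : Fin d, (1 + ‖k‖) ^ 2 := Finset.sum_le_sum fun i _ => by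
            have : |(k i : ℝ)| ≤ ‖k‖ := by
              have := norm_le_pi_norm k i
              rwa [Int.norm_eq_abs] at this
            rw [← sq_abs]
            gcongr
            linarith
      _ = _ := by simp
  have h0 : 0 ≤ ∑ i, (k i : ℝ) ^ 2 := by positivity
  rw [Real.norm_of_nonneg h0]
  calc _ ≤ |ν| * (d * (1 + ‖k‖) ^ 2) ^ 2 := by gcongr
    _ = _ := by ring

lemma Fs_time {d : ℕ} {T : ℝ} {v w : ℝ → Ix d → ℂ} (hv : LC T v) (hw : LC T w)
    (hder : ∀ t ∈ Ioo 0 T, ∀ k, HasDerivAt (fun s => v s k) (w t k) t) {t : ℝ} (ht : t ∈ Ioo 0 T) (x : Ed d) :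
    HasDerivAt (fun s => Fs (v s) x) (Fs (w t) x) t := by
  obtain ⟨b, hb, hh⟩ := hw.2 (t/2) (by linarith [ht.1])
  have hsub : ∀ s ∈ Ioo (t/2) T, s ∈ Ioo 0 T := fun s hs => ⟨by linarith [hs.1, ht.1], hs.2⟩
  have htm : t ∈ Ioo (t/2) T := ⟨by linarith [ht.1], ht.2⟩
  refine hasDerivAt_tsum_of_isPreconnected (u := fun k => (b k).toReal) (t := Ioo (t/2) T)
    (g := fun k s => v s k * ek k x) (g' := fun k s => w s k * ek k x)
    (ENNReal.summable_toReal (RE_tsum hb)) isOpen_Ioo isPreconnected_Ioo ?_ ?_ htm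
    (REc_sum (LC_REc hv ht) x) htm
  · intro k s hs
    exact (hder s (hsub s hs) k).mul_const _
  · intro k s hs
    rw [norm_mul, norm_ek, mul_one, ← toReal_enorm]
    exact ENNReal.toReal_mono (ENNReal.ne_top_of_tsum_ne_top (RE_tsum hb) k) (hh s hs k)

lemma sol_pde {d : ℕ} {ν T : ℝ} {u : ℝ → Ix d → ℂ} (hu : LC T u) (hS : ∀ t ∈ Ioo 0 T, Sy (u t))
    (hder : ∀ t ∈ Ioo 0 T, ∀ k, HasDerivAt (fun s => u s k) (-(Lk ν k : ℂ) * u t k + NN (u t) k) t)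
    {t : ℝ} (ht : t ∈ Ioo 0 T) (x : Ed d) :
    HasDerivAt (fun s => (Fs (u s) x).re)
      (slopeDiv (fun y => (Fs (u t) y).re) x - ν * lapl (lapl (fun y => (Fs (u t) y).re)) x) t := by
  have hw : LC T (fun s k => NN (u s) k - (Lk ν k : ℂ) * u s k) :=
    LC_sub (LC_NN hu) (LC_mul hu _ _ ENNReal.ofReal_ne_top 4 (Lk_bd ν))
  have h1 := Fs_time hu hw (fun t ht k => by
    have := hder t ht k
    convert this using 1; ring) ht x
  have hR := RR_of_Sy (LC_REc hu ht) (hS t ht)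
  have h2 := (RR_sub (RR_slope hR) (RR_lapl2 hR ν)).2 x
  rw [← h2] at h1
  have h3 := Complex.reCLM.hasFDerivAt.comp_hasDerivAt t h1
  simp only [Complex.reCLM_apply, Complex.ofReal_re] at h3
  exact h3

lemma Qd_eq (d : ℕ) : Qd d = (MeasurableEquiv.toLp 2 (Fin d → ℝ)).symm ⁻¹' (Set.pi univ fun _ => Icc (-Real.pi) Real.pi) := by
  ext x
  simp only [Qd, Set.mem_ofPred_eq, mem_preimage, Set.mem_pi, mem_univ, true_imp_iff, mem_Icc, abs_le]
  rfl

lemma meas_Qd (d : ℕ) : MeasurableSet (Qd d) := by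
  rw [Qd_eq]
  exact (MeasurableEquiv.measurable _) (MeasurableSet.univ_pi fun _ => measurableSet_Icc)

lemma int_Qd {d : ℕ} (F : (Fin d → ℝ) → ℂ) :
    ∫ x in Qd d, F (fun i => x i) = ∫ y in (Set.pi univ fun _ : Fin d => Icc (-Real.pi) Real.pi), F y := by
  rw [Qd_eq]
  exact (EuclideanSpace.volume_preserving_symm_measurableEquiv_toLp (Fin d)).setIntegral_preimage_emb
    (MeasurableEquiv.measurableEmbedding _) F _

lemma vol_Qd (d : ℕ) : volume (Qd d) ≠ ∞ := by
  rw [Qd_eq, (EuclideanSpace.volume_preserving_symm_measurableEquiv_toLp (Fin d)).measure_preimage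
    (MeasurableSet.univ_pi fun _ => measurableSet_Icc).nullMeasurableSet]
  exact (isCompact_univ_pi fun _ => isCompact_Icc).measure_ne_top

lemma int1 (m : ℤ) : ∫ y in Icc (-Real.pi) Real.pi, Complex.exp (Complex.I * ((m : ℂ) * (y : ℂ))) =
    if m = 0 then 2 * (Real.pi : ℂ) else 0 := by
  rw [integral_Icc_eq_integral_Ioc, ← intervalIntegral.integral_of_le (by linarith [Real.pi_pos])]
  split_ifs with h
  · subst h; simp; ring
  · have hc : Complex.I * (m : ℂ) ≠ 0 := mul_ne_zero Complex.I_ne_zero (by exact_mod_cast h)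
    have := integral_exp_mul_complex (a := -Real.pi) (b := Real.pi) hc
    simp only [← mul_assoc]
    rw [this]
    have e : Complex.exp (Complex.I * m * (Real.pi : ℝ)) = Complex.exp (Complex.I * m * ((-Real.pi : ℝ) : ℂ)) := by
      rw [Complex.exp_eq_exp_iff_exists_int]
      exact ⟨m, by push_cast; ring⟩
    rw [e, sub_self, zero_div]

lemma int_ek {d : ℕ} (m : Ix d) : ∫ x in Qd d, ek m x = if m = 0 then (2 * (Real.pi : ℂ)) ^ d else 0 := by
  have := int_Qd (d := d) (fun y => ∏ i, Complex.exp (Complex.I * ((m i : ℂ) * (y i : ℂ))))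
  have e : ∀ x : Ed d, ek m x = ∏ i, Complex.exp (Complex.I * ((m i : ℂ) * (x i : ℂ))) := by
    intro x; unfold ek; rw [Finset.mul_sum, Complex.exp_sum]
  simp only [e]
  rw [this, volume_pi, Measure.restrict_pi_pi,
    integral_fintype_prod_eq_prod (fun i (y : ℝ) => Complex.exp (Complex.I * ((m i : ℂ) * (y : ℂ))))]
  simp only [int1]
  split_ifs with h
  · subst h; simp
  · obtain ⟨i, hi⟩ := Function.ne_iff.mp h
    exact Finset.prod_eq_zero (Finset.mem_univ i) (if_neg hi)

lemma ek_cont {d : ℕ} (k : Ix d) : Continuous (ek k) :=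
  continuous_iff_continuousAt.mpr fun x => (ek_deriv k x).continuousAt

lemma exp_neg_ek {d : ℕ} (k : Ix d) (x : Ed d) :
    Complex.exp (-(Complex.I * ∑ i, (k i : ℂ) * (x i : ℂ))) = ek (-k) x := by
  unfold ek
  congr 1
  simp

lemma fcoef_eq {d : ℕ} (f : Ed d → ℝ) (k : Ix d) : fcoefR f k = ∫ x in Qd d, (f x : ℂ) * ek (-k) x := by
  unfold fcoefR
  simp only [exp_neg_ek]

lemma ek_int {d : ℕ} (k : Ix d) : IntegrableOn (ek k) (Qd d) := by
  refine Measure.integrableOn_of_bounded (M := 1) (vol_Qd d) (ek_cont k).aestronglyMeasurable ?_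
  exact Eventually.of_forall fun x => (norm_ek k x).le

lemma fcoef_RR {d : ℕ} {f : Ed d → ℝ} {c : Ix d → ℂ} (h : RR f c) (k : Ix d) :
    fcoefR f k = (2 * (Real.pi : ℂ)) ^ d * c k := by
  rw [fcoef_eq]
  have e : ∀ x, (f x : ℂ) * ek (-k) x = ∑' p, c p * ek (p - k) x := by
    intro x
    rw [h.2 x, Fs, ← tsum_mul_right]
    refine tsum_congr fun p => ?_
    rw [sub_eq_add_neg, ek_add]; ring
  simp only [e]
  have hs := hasSum_integral_of_summable_integral_norm (μ := volume.restrict (Qd d))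
    (F := fun p x => c p * ek (p - k) x) (fun p => (ek_int (p - k)).const_mul (c p)) (by
      simp only [norm_mul, norm_ek, mul_one]
      simp only [integral_const]
      exact (REc_norm h.1).const_smul _)
  rw [← hs.tsum_eq]
  simp only [integral_const_mul, int_ek, sub_eq_zero]
  rw [tsum_eq_single k]
  · simp; ring
  · intro p hp; simp [hp]

lemma RR_int {d : ℕ} {f : Ed d → ℝ} {c : Ix d → ℂ} (h : RR f c) : IntegrableOn f (Qd d) := by
  refine Measure.integrableOn_of_bounded (M := ∑' k, ‖c k‖) (vol_Qd d)
    (RR_contDiff h).continuous.aestronglyMeasurable ?_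
  refine Eventually.of_forall fun x => ?_
  have : ‖f x‖ = ‖(f x : ℂ)‖ := by simp
  rw [this, h.2 x]
  refine (norm_tsum_le_tsum_norm (REc_sum_norm h.1 x)).trans (le_of_eq ?_)
  simp only [norm_mul, norm_ek, mul_one]

lemma int_mul_ek {d : ℕ} (f : Ed d → ℝ) (k : Ix d) :
    IntegrableOn (fun x => (f x : ℂ) * ek k x) (Qd d) ↔ IntegrableOn f (Qd d) := by
  constructor
  · intro h
    have h2 : IntegrableOn (fun x => ((f x : ℂ) * ek k x) * ek (-k) x) (Qd d) := by
      refine Integrable.mul_bdd (c := 1) h (ek_cont _).aestronglyMeasurable ?_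
      exact Eventually.of_forall fun x => (norm_ek _ x).le
    have e : ∀ x, ((f x : ℂ) * ek k x) * ek (-k) x = (f x : ℂ) := by
      intro x
      rw [mul_assoc, ← ek_add]; simp [ek]
    simp only [e] at h2
    have := h2.re
    simpa [IntegrableOn] using this
  · intro h
    have h' : IntegrableOn (fun x => (f x : ℂ)) (Qd d) := h.ofReal
    refine Integrable.mul_bdd (c := 1) h' (ek_cont _).aestronglyMeasurable ?_
    exact Eventually.of_forall fun x => (norm_ek _ x).le

lemma fcoef_sub {d : ℕ} {f g : Ed d → ℝ} {c : Ix d → ℂ} (h : RR f c) (k : Ix d) :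
    ‖fcoefR (fun x => f x - g x) k‖ ≤ (2 * Real.pi) ^ d * ‖c k - fcoefR g k / (2 * (Real.pi : ℂ)) ^ d‖ := by
  by_cases hg : IntegrableOn g (Qd d)
  · have : fcoefR (fun x => f x - g x) k = fcoefR f k - fcoefR g k := by
      simp only [fcoef_eq]
      rw [← integral_sub ((int_mul_ek f _).mpr (RR_int h)) ((int_mul_ek g _).mpr hg)]
      congr 1; ext x; push_cast; ring
    rw [this, fcoef_RR h]
    have h0 : (2 * (Real.pi : ℂ)) ^ d ≠ 0 := pow_ne_zero _ (by simp [Real.pi_ne_zero])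
    have e : (2 * (Real.pi : ℂ)) ^ d * c k - fcoefR g k =
      (2 * (Real.pi : ℂ)) ^ d * (c k - fcoefR g k / (2 * (Real.pi : ℂ)) ^ d) := by
      field_simp
    rw [e, norm_mul, norm_pow]
    simp [abs_of_pos Real.pi_pos]
  · have : fcoefR (fun x => f x - g x) k = 0 := by
      rw [fcoef_eq]
      refine integral_undef fun hi => hg ?_
      have h1 := (int_mul_ek (fun x => f x - g x) (-k)).mp hi
      have h2 := (RR_int h).sub h1
      simpa [IntegrableOn, Pi.sub_def] using h2
    rw [this, norm_zero]
    have := Real.pi_pos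
    positivity

lemma Sy_fcoef {d : ℕ} (f : Ed d → ℝ) : Sy (fun k => fcoefR f k / (2 * (Real.pi : ℂ)) ^ d) := by
  intro k
  simp only [map_div₀, fcoef_eq, ← integral_conj, map_mul, conj_ek, Complex.conj_ofReal, map_pow, map_ofNat, neg_neg]

lemma sumsq_le {d : ℕ} (k : Ix d) : ∑ i, (k i : ℝ) ^ 2 ≤ d * (1 + ‖k‖) ^ 2 := by
  calc _ ≤ ∑ i : Fin d, (1 + ‖k‖) ^ 2 := Finset.sum_le_sum fun i _ => by
          have : |(k i : ℝ)| ≤ ‖k‖ := by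
            have := norm_le_pi_norm k i
            rwa [Int.norm_eq_abs] at this
          rw [← sq_abs]
          gcongr
          linarith
    _ = _ := by simp

lemma sob_le {d : ℕ} (hd : 1 ≤ d) (k : Ix d) : sobWeight k ≤ (1 + (d:ℝ) ^ d) * (1 + ‖k‖) ^ d := by
  unfold sobWeight
  have hd' : (1:ℝ) ≤ d := by exact_mod_cast hd
  have h1 : Real.sqrt (∑ i, (k i : ℝ) ^ 2) ≤ d * (1 + ‖k‖) := by
    apply Real.sqrt_le_iff.mpr
    refine ⟨by positivity, (sumsq_le k).trans ?_⟩
    rw [mul_pow]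
    gcongr
    nlinarith
  have h2 : (1:ℝ) ≤ (1 + ‖k‖) ^ d := one_le_pow₀ (by linarith [norm_nonneg k])
  have h3 := pow_le_pow_left₀ (Real.sqrt_nonneg _) h1 d
  rw [mul_pow] at h3
  linarith

lemma le_sob {d : ℕ} (k : Ix d) : (1 + ‖k‖) ^ d ≤ 2 ^ d * sobWeight k := by
  unfold sobWeight
  have h1 : ‖k‖ ≤ Real.sqrt (∑ i, (k i : ℝ) ^ 2) := Real.le_sqrt_of_sq_le (norm_sq_le k)
  calc (1 + ‖k‖) ^ d ≤ (1 + Real.sqrt (∑ i, (k i : ℝ) ^ 2)) ^ d := by gcongr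
    _ ≤ 2 ^ (d - 1) * (1 ^ d + Real.sqrt (∑ i, (k i : ℝ) ^ 2) ^ d) :=
        add_pow_le zero_le_one (Real.sqrt_nonneg _) d
    _ ≤ _ := by
        rw [one_pow]
        gcongr
        · norm_num
        · omega

lemma a_S2 {d : ℕ} {h₀ : Ed d → ℝ}
    (hsob : Summable fun k : Fin d → ℤ => sobWeight k * ‖fcoefR h₀ k‖ ^ 2) :
    S2 (fun k => ‖fcoefR h₀ k / (2 * (Real.pi : ℂ)) ^ d‖ₑ) ≠ ∞ := by
  have h1 : ∑' k, ENNReal.ofReal (2 ^ d * (sobWeight k * ‖fcoefR h₀ k‖ ^ 2)) ≠ ∞ :=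
    (hsob.mul_left (2 ^ d)).tsum_ofReal_ne_top
  refine ne_top_of_le_ne_top h1 (ENNReal.tsum_le_tsum fun k => ?_)
  unfold JE
  beta_reduce
  rw [← ofReal_norm, ← ENNReal.ofReal_pow (by positivity), ← ENNReal.ofReal_pow (by positivity),
    ← ENNReal.ofReal_mul (by positivity)]
  apply ENNReal.ofReal_le_ofReal
  rw [← mul_assoc]
  refine mul_le_mul (le_sob k) ?_ (by positivity) ?_
  · gcongr
    rw [norm_div]
    apply div_le_self (norm_nonneg _)
    rw [norm_pow]
    apply one_le_pow₀
    simp only [norm_mul, Complex.norm_ofNat, Complex.norm_real, Real.norm_eq_abs, abs_of_pos Real.pi_pos]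
    linarith [Real.pi_gt_three]
  · unfold sobWeight; positivity

lemma hnorm_le {d : ℕ} (hd : 1 ≤ d) {f g : Ed d → ℝ} {c : Ix d → ℂ} (h : RR f c) :
    ENNReal.ofReal (∑' k : Ix d, sobWeight k * ‖fcoefR (fun x => f x - g x) k‖ ^ 2) ≤
      ENNReal.ofReal ((1 + (d:ℝ) ^ d) * ((2 * Real.pi) ^ d) ^ 2) *
        S2 (fun k => ‖c k - fcoefR g k / (2 * (Real.pi : ℂ)) ^ d‖ₑ) := by
  have hp := Real.pi_pos
  set F : Ix d → ℝ := fun k => sobWeight k * ‖fcoefR (fun x => f x - g x) k‖ ^ 2 with hF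
  have hF0 : ∀ k, 0 ≤ F k := fun k => by rw [hF]; unfold sobWeight; positivity
  have e : ∑' k, F k = (∑' k, ENNReal.ofReal (F k)).toReal := by
    rw [ENNReal.tsum_toReal_eq fun k => ENNReal.ofReal_ne_top]
    exact tsum_congr fun k => (ENNReal.toReal_ofReal (hF0 k)).symm
  rw [e]
  refine ENNReal.ofReal_toReal_le.trans ?_
  unfold S2
  rw [← ENNReal.tsum_mul_left]
  refine ENNReal.tsum_le_tsum fun k => ?_
  unfold JE
  beta_reduce
  rw [← ofReal_norm, ← ENNReal.ofReal_pow (by positivity), ← ENNReal.ofReal_pow (by positivity),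
    ← ENNReal.ofReal_mul (by positivity), ← ENNReal.ofReal_mul (by positivity)]
  apply ENNReal.ofReal_le_ofReal
  rw [hF]
  have h1 := sob_le hd k
  have h2 := pow_le_pow_left₀ (norm_nonneg _) (fcoef_sub (g := g) h k) 2
  calc _ ≤ ((1 + (d:ℝ) ^ d) * (1 + ‖k‖) ^ d) * ((2 * Real.pi) ^ d * ‖c k - fcoefR g k / (2 * (Real.pi : ℂ)) ^ d‖) ^ 2 :=
        mul_le_mul h1 h2 (by positivity) (by positivity)
    _ = _ := by ring

lemma lin_tendsto {d : ℕ} {ν : ℝ} (hν : 0 < ν) {a : Ix d → ℂ} (ha : S2 (fun k => ‖a k‖ₑ) ≠ ∞) :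
    Tendsto (fun t => S2 (fun k => ‖lin ν a t k - a k‖ₑ)) (nhdsWithin 0 (Ioi 0)) (nhds 0) := by
  let _ : MeasurableSpace (Ix d) := ⊤
  have key := tendsto_lintegral_filter_of_dominated_convergence (μ := (Measure.count : Measure (Ix d)))
    (l := nhdsWithin (0:ℝ) (Ioi 0)) (F := fun t k => JE k ^ d * ‖lin ν a t k - a k‖ₑ ^ 2) (f := fun _ => 0)
    (fun k => JE k ^ d * ‖a k‖ₑ ^ 2) (Eventually.of_forall fun t => Measurable.of_discrete) ?_ ?_ ?_
  · simp only [lintegral_count, tsum_zero] at key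
    exact key
  · filter_upwards [self_mem_nhdsWithin] with t ht
    refine Eventually.of_forall fun k => ?_
    refine mul_le_mul' le_rfl (pow_le_pow_left' ?_ 2)
    have e : lin ν a t k - a k = ((Real.exp (-(Lk ν k * t)) - 1 : ℝ) : ℂ) * a k := by
      unfold lin; push_cast; ring
    rw [e, enorm_mul]
    refine mul_le_of_le_one_left' ?_
    rw [← ofReal_norm, Complex.norm_real, Real.norm_eq_abs]
    apply ENNReal.ofReal_le_one.mpr
    have h0 : 0 ≤ Lk ν k * t := mul_nonneg (by unfold Lk; positivity) (le_of_lt ht)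
    rw [abs_le]
    have h1 := Real.exp_pos (-(Lk ν k * t))
    have h2 : Real.exp (-(Lk ν k * t)) ≤ 1 := Real.exp_le_one_iff.mpr (by linarith)
    constructor <;> linarith
  · rw [lintegral_count]; exact ha
  · refine Eventually.of_forall fun k => ?_
    have hc : Continuous (fun t => ‖lin ν a t k - a k‖ₑ) := by
      unfold lin; fun_prop
    have h1 : Tendsto (fun t => ‖lin ν a t k - a k‖ₑ) (nhdsWithin 0 (Ioi 0)) (nhds 0) := by
      have := (hc.tendsto 0).mono_left (nhdsWithin_le_nhds (s := Ioi (0:ℝ)))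
      simpa [lin] using this
    have h2 := ENNReal.Tendsto.const_mul (a := JE k ^ d) (ENNReal.Tendsto.pow (n := 2) h1)
      (Or.inr (ENNReal.pow_ne_top (JE_ne_top k)))
    simpa using h2

theorem main_aux (d : ℕ) (hd : 1 ≤ d) (ν : ℝ) (hν : 0 < ν) (h₀ : Ed d → ℝ)
    (hsob : Summable fun k : Fin d → ℤ => sobWeight k * ‖fcoefR h₀ k‖ ^ 2) :
    ∃ (T : ℝ) (u : ℝ → Ix d → ℂ), 0 < T ∧
      (∀ t ∈ Ioo 0 T, RR (fun x => (Fs (u t) x).re) (u t)) ∧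
      (∀ t ∈ Ioo 0 T, ∀ x, HasDerivAt (fun s => (Fs (u s) x).re)
        (slopeDiv (fun y => (Fs (u t) y).re) x - ν * lapl (lapl (fun y => (Fs (u t) y).re)) x) t) ∧
      (∀ t ∈ Ioo 0 T, u t 0 = fcoefR h₀ 0 / (2 * (Real.pi : ℂ)) ^ d) ∧
      Tendsto (fun t => S2 (fun k => ‖u t k - fcoefR h₀ k / (2 * (Real.pi : ℂ)) ^ d‖ₑ))
        (nhdsWithin 0 (Ioi 0)) (nhds 0) := by
  set a : Ix d → ℂ := fun k => fcoefR h₀ k / (2 * (Real.pi : ℂ)) ^ d with haD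
  have ha : S2 (fun k => ‖a k‖ₑ) ≠ ∞ := a_S2 hsob
  have haS : Sy a := Sy_fcoef h₀
  obtain ⟨T, M, M0, B, r, hT, hM, hB, hr, P⟩ := exists_par hd hν a ha
  obtain ⟨u, hg, hlim, hfix⟩ := exists_fix P
  have hc : 0 < ν / 2 := by positivity
  have hLC : LC T u := Good_LC hd hc hg P.hr P.hrT
  have hS : ∀ t ∈ Ioo 0 T, Sy (u t) := fun t ht => Sy_lim (fun n => Sy_pic haS n t) (hlim t ht)
  refine ⟨T, u, hT, fun t ht => RR_of_Sy (LC_REc hLC ht) (hS t ht), fun t ht x => ?_, fun t ht => ?_, ?_⟩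
  · refine sol_pde hLC hS (fun t ht k => ?_) ht x
    have h1 := Phi_deriv hd hν a hg P.hr P.hrT ht k
    rw [← hfix t ht k] at h1
    refine h1.congr_of_eventuallyEq ?_
    filter_upwards [Ioo_mem_nhds ht.1 ht.2] with s hs using hfix s hs k
  · rw [hfix t ht 0]
    unfold Phi Du
    simp [Lk, Dj, haD]
  · have hub : ∀ᶠ t in nhdsWithin (0:ℝ) (Ioi 0), S2 (fun k => ‖u t k - a k‖ₑ) ≤
        2 * (S2 (fun k => ‖lin ν a t k - a k‖ₑ) + (Kd d * (r t ^ 4 + tw 1 t)) * M * B ^ 2) := by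
      filter_upwards [Ioo_mem_nhdsGT hT] with t ht
      have h1 : S2 (fun k => ‖Du ν (fun s => FF (u s)) t k‖ₑ) ≤ (Kd d * (r t ^ 4 + tw 1 t)) * M * B ^ 2 :=
        Du_h2 hν P.hB (fun j k => (FFcont P hg j k).mono (Ioo_subset_Ioo_right ht.2.le)) ht.1
          fun s hs => GW_bd2 hc hg P.hr ht.2 hs
      refine le_trans (S2_mono fun k => ?_) ((S2_add (fun k => ‖lin ν a t k - a k‖ₑ)
        (fun k => ‖Du ν (fun s => FF (u s)) t k‖ₑ)).trans (mul_le_mul' le_rfl (add_le_add le_rfl h1)))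
      rw [hfix t ht k]
      have e : Phi ν a u t k - a k = (lin ν a t k - a k) + Du ν (fun s => FF (u s)) t k := by
        unfold Phi lin; ring
      rw [e]
      exact enorm_add_le _ _
    refine tendsto_of_tendsto_of_tendsto_of_le_of_le' tendsto_const_nhds ?_
      (Eventually.of_forall fun t => zero_le) hub
    have h1 := lin_tendsto hν ha
    have h2 : Tendsto (fun t => r t ^ 4 + tw 1 t) (nhdsWithin 0 (Ioi 0)) (nhds 0) := by
      have := (ENNReal.Tendsto.pow (n := 4) hr).add (tw_tendsto zero_lt_one)
      simpa using this
    have h3 := ENNReal.Tendsto.const_mul (a := Kd d) h2 (Or.inr (Kd_ne_top d))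
    have h4 := ENNReal.Tendsto.mul_const (b := M) h3 (Or.inr hM)
    have h5 := ENNReal.Tendsto.mul_const (b := B ^ 2) h4 (Or.inr (ENNReal.pow_ne_top hB))
    have h6 := ENNReal.Tendsto.const_mul (a := 2) (h1.add h5) (Or.inr (by simp))
    simpa using h6

/-- Improved local wellposedness, Theorem 1.2: for initial data
`h₀ ∈ H^{d/2}(𝕋^d)` there is a local-in-time solution (with maximal lifespan `T ∈ (0,∞]`)
of `∂_t h = ∇·((|∇h|²−1)∇h) − νΔ²h` which is `C^∞` for `0 < t < T`, attains the data in
`H^{d/2}` as `t → 0⁺`, and preserves the mean-zero property. -/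
theorem stmt2 (d : ℕ) (hd : 1 ≤ d) (ν : ℝ) (hν : 0 < ν) (h₀ : Ed d → ℝ)
    (hper : PeriodicSpace h₀)
    (hsob : Summable fun k : Fin d → ℤ => sobWeight k * ‖fcoefR h₀ k‖ ^ 2) :
    ∃ (T : ℝ≥0∞) (h : ℝ → Ed d → ℝ), 0 < T ∧
      (∀ t : ℝ, 0 < t → ENNReal.ofReal t < T → PeriodicSpace (h t)) ∧
      (∀ t : ℝ, 0 < t → ENNReal.ofReal t < T → ContDiff ℝ (⊤ : ℕ∞) (h t)) ∧
      (∀ (t : ℝ) (x : Ed d), 0 < t → ENNReal.ofReal t < T →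
        HasDerivAt (fun s => h s x)
          (slopeDiv (h t) x - ν * lapl (lapl (h t)) x) t) ∧
      Tendsto (fun t : ℝ => hnormR fun x => h t x - h₀ x)
        (nhdsWithin 0 (Ioi 0)) (nhds 0) ∧
      ((∫ x in Qd d, h₀ x) = 0 →
        ∀ t : ℝ, 0 < t → ENNReal.ofReal t < T → (∫ x in Qd d, h t x) = 0) := by
  obtain ⟨T, u, hT, hR, hpde, hz, hlim⟩ := main_aux d hd ν hν h₀ hsob
  have hmem : ∀ t : ℝ, 0 < t → ENNReal.ofReal t < ENNReal.ofReal T → t ∈ Ioo 0 T := fun t h0 h1 =>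
    ⟨h0, (ENNReal.ofReal_lt_ofReal_iff hT).mp h1⟩
  refine ⟨ENNReal.ofReal T, fun t x => (Fs (u t) x).re, ENNReal.ofReal_pos.mpr hT,
    fun t h0 h1 => RR_per (hR t (hmem t h0 h1)), fun t h0 h1 => RR_contDiff (hR t (hmem t h0 h1)),
    fun t x h0 h1 => hpde t (hmem t h0 h1) x, ?_, fun hmean t h0 h1 => ?_⟩
  · have h1 := ENNReal.Tendsto.const_mul (a := ENNReal.ofReal ((1 + (d:ℝ) ^ d) * ((2 * Real.pi) ^ d) ^ 2))
      hlim (Or.inr ENNReal.ofReal_ne_top)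
    rw [mul_zero] at h1
    have h2 : Tendsto (fun t : ℝ => ENNReal.ofReal (∑' k : Fin d → ℤ,
        sobWeight k * ‖fcoefR (fun x => (Fs (u t) x).re - h₀ x) k‖ ^ 2)) (nhdsWithin 0 (Ioi 0)) (nhds 0) := by
      refine tendsto_of_tendsto_of_tendsto_of_le_of_le' tendsto_const_nhds h1
        (Eventually.of_forall fun t => zero_le) ?_
      filter_upwards [Ioo_mem_nhdsGT hT] with t ht
      exact hnorm_le hd (hR t ht)
    have h3 := (ENNReal.tendsto_toReal ENNReal.zero_ne_top).comp h2
    have h4 := (Real.continuous_sqrt.tendsto _).comp h3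
    simp only [ENNReal.toReal_zero, Real.sqrt_zero] at h4
    refine h4.congr fun t => ?_
    simp only [Function.comp_apply]
    rw [ENNReal.toReal_ofReal (tsum_nonneg fun k => by unfold sobWeight; positivity)]
    rfl
  · have ht := hmem t h0 h1
    have e0 : ∀ f : Ed d → ℝ, fcoefR f 0 = ((∫ x in Qd d, f x : ℝ) : ℂ) := by
      intro f
      unfold fcoefR
      rw [← integral_complex_ofReal]
      simp
    have h2 := fcoef_RR (hR t ht) 0
    rw [hz t ht, e0, e0, hmean] at h2
    simpa using h2
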